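/- arXiv:1405.6650 — 13 statements merged into one kernel-verified Lean document; each statement's English description precedes it below -/
import Mathlib

section
/- Let A = [a_{ij}] be an N×N real matrix with strictly positive entries, viewed as the linear map x ↦ Ax on the open positive orthant of ℝ^N, and let Δ(A) := max over all indices i,j,k,ℓ of log((a_{ij} a_{kℓ})/(a_{iℓ} a_{kj})). Then for all vectors x, y with strictly positive entries, d_H(Ax, Ay) ≤ tanh(Δ(A)/4) · d_H(x, y); in particular, since Δ(A) < ∞, the map is a strict contraction in the Hilbert projective metric with contraction ratio tanh(Δ(A)/4) < 1. -/
/-- The Hilbert projective metric on vectors in `ℝ^N` with strictly positive entries: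
`d_H(x,y) = log((max_i x_i/y_i)/(min_i x_i/y_i))`. -/
noncomputable def dH {N : ℕ} (x y : Fin N → ℝ) : ℝ :=
  Real.log ((⨆ i, x i / y i) / (⨅ i, x i / y i))

/-- The projective diameter of an `N×N` matrix with strictly positive entries:
`Δ(A) = max_{i,j,k,ℓ} log((a_{ij} a_{kℓ})/(a_{iℓ} a_{kj}))`. -/
noncomputable def projDiam {N : ℕ} (A : Matrix (Fin N) (Fin N) ℝ) : ℝ :=
  ⨆ i, ⨆ j, ⨆ k, ⨆ l, Real.log ((A i j * A k l) / (A i l * A k j))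

lemma le_of_sq_le_sq_aux {a b : ℝ} (h : a ^ 2 ≤ b ^ 2) (hb : 0 ≤ b) : a ≤ b :=
  (le_abs_self a).trans (abs_le_of_sq_le_sq h hb)

lemma tv_aux (a b d : ℝ) (ha0 : 0 ≤ a) (ha1 : a ≤ 1) (hb0 : 0 ≤ b) (hb1 : b ≤ 1) (hd : 1 ≤ d)
    (h : a * (1 - b) ≤ d ^ 2 * (b * (1 - a))) : a - b ≤ (d - 1) / (d + 1) := by
  have hu : 0 ≤ a * (1 - b) := mul_nonneg ha0 (by linarith)
  have hv : 0 ≤ b * (1 - a) := mul_nonneg hb0 (by linarith)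
  obtain ⟨u, hu0, hu2⟩ : ∃ u, 0 ≤ u ∧ u ^ 2 = a * (1 - b) :=
    ⟨_, Real.sqrt_nonneg _, Real.sq_sqrt hu⟩
  obtain ⟨v, hv0, hv2⟩ : ∃ v, 0 ≤ v ∧ v ^ 2 = b * (1 - a) :=
    ⟨_, Real.sqrt_nonneg _, Real.sq_sqrt hv⟩
  have h1 : u ≤ d * v := by
    refine le_of_sq_le_sq_aux ?_ (by positivity)
    rw [mul_pow, hu2, hv2]; exact h
  have h2 : u + v ≤ 1 := by
    have e : (u * v) ^ 2 = (a * (1 - a)) * (b * (1 - b)) := by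
      rw [mul_pow, hu2, hv2]; ring
    have h3 : u * v ≤ (a * (1 - a) + b * (1 - b)) / 2 := by
      have := mul_nonneg ha0 (sub_nonneg.2 ha1)
      have := mul_nonneg hb0 (sub_nonneg.2 hb1)
      refine le_of_sq_le_sq_aux ?_ (by positivity)
      rw [e]; nlinarith [sq_nonneg (a * (1 - a) - b * (1 - b))]
    refine le_of_sq_le_sq_aux ?_ zero_le_one
    nlinarith [sq_nonneg (a - b), sq_nonneg (a + b - 1)]
  rw [le_div_iff₀ (by linarith)]
  have e2 : a - b = (u - v) * (u + v) := by nlinarith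
  rw [e2]
  have h4 : (u - v) * (d + 1) ≤ (d - 1) * (u + v) := by nlinarith
  have h5 : 0 ≤ u + v := by positivity
  have h6 : (u + v) * (u + v) ≤ 1 := by nlinarith
  calc (u - v) * (u + v) * (d + 1) = ((u - v) * (d + 1)) * (u + v) := by ring
    _ ≤ ((d - 1) * (u + v)) * (u + v) := mul_le_mul_of_nonneg_right h4 h5
    _ = (d - 1) * ((u + v) * (u + v)) := by ring
    _ ≤ (d - 1) * 1 := mul_le_mul_of_nonneg_left h6 (by linarith)
    _ = d - 1 := mul_one _

lemma key_prob {N : ℕ} (p q s : Fin N → ℝ) (hp : ∀ j, 0 < p j) (hq : ∀ j, 0 < q j)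
    (hp1 : ∑ j, p j = 1) (hq1 : ∑ j, q j = 1) (d lo hi : ℝ) (hd : 1 ≤ d)
    (h : ∀ j l, p j * q l ≤ d ^ 2 * (q j * p l)) (hlo : ∀ j, lo ≤ s j) (hhi : ∀ j, s j ≤ hi)
    (hlh : lo ≤ hi) :
    ∑ j, p j * s j - ∑ j, q j * s j ≤ (d - 1) / (d + 1) * (hi - lo) := by
  classical
  set S : Finset (Fin N) := Finset.univ.filter (fun j => q j ≤ p j) with hS
  have cp := Finset.sum_add_sum_compl S p
  have cq := Finset.sum_add_sum_compl S q
  rw [hp1] at cp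
  rw [hq1] at cq
  have tv : ∑ j ∈ S, p j - ∑ j ∈ S, q j ≤ (d - 1) / (d + 1) := by
    have n1 : 0 ≤ ∑ j ∈ S, p j := Finset.sum_nonneg fun j _ => (hp j).le
    have n2 : 0 ≤ ∑ j ∈ S, q j := Finset.sum_nonneg fun j _ => (hq j).le
    have n3 : 0 ≤ ∑ j ∈ Sᶜ, p j := Finset.sum_nonneg fun j _ => (hp j).le
    have n4 : 0 ≤ ∑ j ∈ Sᶜ, q j := Finset.sum_nonneg fun j _ => (hq j).le
    apply tv_aux _ _ d n1 (by linarith) n2 (by linarith) hd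
    rw [show 1 - ∑ j ∈ S, q j = ∑ j ∈ Sᶜ, q j by linarith,
      show 1 - ∑ j ∈ S, p j = ∑ j ∈ Sᶜ, p j by linarith, Finset.sum_mul_sum,
      Finset.sum_mul_sum, Finset.mul_sum]
    refine Finset.sum_le_sum fun j _ => ?_
    rw [Finset.mul_sum]
    exact Finset.sum_le_sum fun l _ => h j l
  have b1 : ∑ j ∈ S, (p j - q j) * s j ≤ ∑ j ∈ S, (p j - q j) * hi := by
    refine Finset.sum_le_sum fun j hj => ?_
    have : q j ≤ p j := by simpa [hS] using hj
    exact mul_le_mul_of_nonneg_left (hhi j) (by linarith)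
  have b2 : ∑ j ∈ Sᶜ, (p j - q j) * s j ≤ ∑ j ∈ Sᶜ, (p j - q j) * lo := by
    refine Finset.sum_le_sum fun j hj => ?_
    have : p j < q j := by simpa [hS] using hj
    exact mul_le_mul_of_nonpos_left (hlo j) (by linarith)
  have e := Finset.sum_add_sum_compl S (fun j => (p j - q j) * s j)
  have e' : ∑ j, (p j - q j) * s j = ∑ j, p j * s j - ∑ j, q j * s j := by
    simp [sub_mul, Finset.sum_sub_distrib]
  rw [← Finset.sum_mul, Finset.sum_sub_distrib] at b1 b2
  have := mul_le_mul_of_nonneg_right tv (sub_nonneg.2 hlh)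
  have e3 : ∑ j ∈ Sᶜ, p j - ∑ j ∈ Sᶜ, q j = -(∑ j ∈ S, p j - ∑ j ∈ S, q j) := by linarith
  rw [e3] at b2
  rw [← e', ← e]
  linarith

lemma key {N : ℕ} [NeZero N] (p q s : Fin N → ℝ) (hp : ∀ j, 0 < p j) (hq : ∀ j, 0 < q j)
    (d lo hi : ℝ) (hd : 1 ≤ d)
    (h : ∀ j l, p j * q l ≤ d ^ 2 * (q j * p l)) (hlo : ∀ j, lo ≤ s j) (hhi : ∀ j, s j ≤ hi) :
    (∑ j, p j * s j) / (∑ j, p j) - (∑ j, q j * s j) / (∑ j, q j)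
      ≤ (d - 1) / (d + 1) * (hi - lo) := by
  have P : 0 < ∑ j, p j := Finset.sum_pos (fun j _ => hp j) Finset.univ_nonempty
  have Q : 0 < ∑ j, q j := Finset.sum_pos (fun j _ => hq j) Finset.univ_nonempty
  have := key_prob (fun j => p j / ∑ j, p j) (fun j => q j / ∑ j, q j) s
    (fun j => div_pos (hp j) P) (fun j => div_pos (hq j) Q)
    (by rw [← Finset.sum_div, div_self P.ne']) (by rw [← Finset.sum_div, div_self Q.ne'])
    d lo hi hd (fun j l => by
      have := div_le_div_of_nonneg_right (h j l) (mul_pos P Q).le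
      rw [div_mul_div_comm, div_mul_div_comm, ← mul_div_assoc, mul_comm (∑ j, q j)]
      exact this) hlo hhi ((hlo 0).trans (hhi 0))
  simpa only [div_mul_eq_mul_div, ← Finset.sum_div] using this

lemma log_key {N : ℕ} [NeZero N] (p q s : Fin N → ℝ) (hp : ∀ j, 0 < p j) (hq : ∀ j, 0 < q j)
    (d lo hi : ℝ) (hd : 1 ≤ d)
    (h : ∀ j l, p j * q l ≤ d ^ 2 * (q j * p l)) (hlo : ∀ j, lo ≤ s j) (hhi : ∀ j, s j ≤ hi) :
    (Real.log (∑ j, p j * Real.exp (s j)) - Real.log (∑ j, q j * Real.exp (s j)))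
      - (Real.log (∑ j, p j) - Real.log (∑ j, q j)) ≤ (d - 1) / (d + 1) * (hi - lo) := by
  have pos : ∀ (w : Fin N → ℝ), (∀ j, 0 < w j) → ∀ t : ℝ, 0 < ∑ j, w j * Real.exp (t * s j) :=
    fun w hw t => Finset.sum_pos (fun j _ => mul_pos (hw j) (Real.exp_pos _))
      Finset.univ_nonempty
  have der : ∀ (w : Fin N → ℝ), (∀ j, 0 < w j) → ∀ t : ℝ,
      HasDerivAt (fun t => Real.log (∑ j, w j * Real.exp (t * s j)))
        ((∑ j, w j * Real.exp (t * s j) * s j) / ∑ j, w j * Real.exp (t * s j)) t := by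
    intro w hw t
    refine HasDerivAt.log ?_ (pos w hw t).ne'
    refine HasDerivAt.fun_sum fun j _ => ?_
    have := (((hasDerivAt_id t).mul_const (s j)).exp).const_mul (w j)
    simpa [mul_assoc] using this
  have D := fun t => (der p hp t).sub (der q hq t)
  have := image_sub_le_mul_sub_of_deriv_le (fun t => (D t).differentiableAt)
    (C := (d - 1) / (d + 1) * (hi - lo)) (fun t => by
      rw [(D t).deriv]
      refine key _ _ s (fun j => mul_pos (hp j) (Real.exp_pos _))
        (fun j => mul_pos (hq j) (Real.exp_pos _)) d lo hi hd (fun j l => ?_) hlo hhi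
      have := mul_le_mul_of_nonneg_right (h j l)
        (mul_pos (Real.exp_pos (t * s j)) (Real.exp_pos (t * s l))).le
      refine (le_of_eq ?_).trans (this.trans (le_of_eq ?_)) <;> ring) zero_le_one
  simpa using this

lemma le_projDiam {N : ℕ} (A : Matrix (Fin N) (Fin N) ℝ) (i j k l : Fin N) :
    Real.log ((A i j * A k l) / (A i l * A k j)) ≤ projDiam A := by
  have b : ∀ f : Fin N → ℝ, ∀ i, f i ≤ ⨆ i, f i := fun f i =>
    le_ciSup (Set.finite_range f).bddAbove i
  refine (b (fun l => Real.log ((A i j * A k l) / (A i l * A k j))) l).trans ?_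
  refine (b (fun k => ⨆ l, Real.log ((A i j * A k l) / (A i l * A k j))) k).trans ?_
  refine (b (fun j => ⨆ k, ⨆ l, Real.log ((A i j * A k l) / (A i l * A k j))) j).trans ?_
  exact b (fun i => ⨆ j, ⨆ k, ⨆ l, Real.log ((A i j * A k l) / (A i l * A k j))) i

lemma tanh_quarter (D : ℝ) :
    Real.tanh (D / 4) = (Real.exp (D / 2) - 1) / (Real.exp (D / 2) + 1) := by
  rw [Real.tanh_eq_sinh_div_cosh, Real.sinh_eq, Real.cosh_eq]
  have e : Real.exp (D / 2) = Real.exp (D / 4) * Real.exp (D / 4) := by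
    rw [← Real.exp_add]; ring_nf
  rw [e, Real.exp_neg]
  have := Real.exp_pos (D / 4)
  field_simp

/-- (Birkhoff) A matrix `A` with strictly positive entries acts on the open positive orthant
as a strict contraction in the Hilbert projective metric, with contraction ratio
`tanh(Δ(A)/4) < 1`. -/
theorem birkhoff_contraction {N : ℕ} [NeZero N] (A : Matrix (Fin N) (Fin N) ℝ)
    (hA : ∀ i j, 0 < A i j) (x y : Fin N → ℝ)
    (hx : ∀ i, 0 < x i) (hy : ∀ i, 0 < y i) :
    dH (A.mulVec x) (A.mulVec y) ≤ Real.tanh (projDiam A / 4) * dH x y ∧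
      Real.tanh (projDiam A / 4) < 1 := by
  refine ⟨?_, Real.tanh_lt_one _⟩
  have hD0 : 0 ≤ projDiam A := by
    have := le_projDiam A 0 0 0 0
    rwa [div_self (mul_pos (hA 0 0) (hA 0 0)).ne', Real.log_one] at this
  have hd : 1 ≤ Real.exp (projDiam A / 2) := Real.one_le_exp (by positivity)
  have mv : ∀ z : Fin N → ℝ, (∀ i, 0 < z i) → ∀ i, 0 < A.mulVec z i := fun z hz i =>
    Finset.sum_pos (fun j _ => mul_pos (hA i j) (hz j)) Finset.univ_nonempty
  obtain ⟨i, hi⟩ := exists_eq_ciSup_of_finite (f := fun i => A.mulVec x i / A.mulVec y i)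
  obtain ⟨k, hk⟩ := exists_eq_ciInf_of_finite (f := fun i => A.mulVec x i / A.mulVec y i)
  obtain ⟨a, ha⟩ := exists_eq_ciSup_of_finite (f := fun i => x i / y i)
  obtain ⟨b, hb⟩ := exists_eq_ciInf_of_finite (f := fun i => x i / y i)
  have ha' : ∀ j, x j / y j ≤ x a / y a := fun j => by
    have := le_ciSup (Set.finite_range (fun i => x i / y i)).bddAbove j
    rwa [← ha] at this
  have hb' : ∀ j, x b / y b ≤ x j / y j := fun j => by
    have := ciInf_le (Set.finite_range (fun i => x i / y i)).bddBelow j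
    rwa [← hb] at this
  have r : ∀ j, 0 < x j / y j := fun j => div_pos (hx j) (hy j)
  unfold dH
  rw [← hi, ← hk, ← ha, ← hb, tanh_quarter]
  have L := log_key (fun j => A i j * y j) (fun j => A k j * y j)
    (fun j => Real.log (x j / y j)) (fun j => mul_pos (hA i j) (hy j))
    (fun j => mul_pos (hA k j) (hy j)) _ (Real.log (x b / y b)) (Real.log (x a / y a)) hd
    (fun j l => by
      have h1 := le_projDiam A i j k l
      have pp := mul_pos (hA i l) (hA k j)
      rw [Real.log_le_iff_le_exp (div_pos (mul_pos (hA _ _) (hA _ _)) pp), div_le_iff₀ pp] at h1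
      have h2 := mul_le_mul_of_nonneg_right h1 (mul_pos (hy j) (hy l)).le
      have e : Real.exp (projDiam A / 2) ^ 2 = Real.exp (projDiam A) := by
        rw [← Real.exp_nat_mul]; congr 1; push_cast; ring
      rw [e]
      refine (le_of_eq ?_).trans (h2.trans (le_of_eq ?_)) <;> ring)
    (fun j => Real.log_le_log (r b) (hb' j)) (fun j => Real.log_le_log (r j) (ha' j))
  have ex : ∀ i, ∑ j, A i j * y j * Real.exp (Real.log (x j / y j)) = A.mulVec x i := by
    intro i
    refine Finset.sum_congr rfl fun j _ => ?_
    rw [Real.exp_log (r j), mul_assoc, mul_div_cancel₀ _ (hy j).ne']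
  have ey : ∀ i, ∑ j, A i j * y j = A.mulVec y i := fun i => rfl
  simp only [ex, ey] at L
  have px := mv x hx
  have py := mv y hy
  rw [Real.log_div (div_pos (px i) (py i)).ne' (div_pos (px k) (py k)).ne',
    Real.log_div (px i).ne' (py i).ne', Real.log_div (px k).ne' (py k).ne',
    Real.log_div (r a).ne' (r b).ne']
  linarith
end

section
/- Let A = [a_{ij}] be an N×N real matrix with strictly positive entries. Then the projective diameter of the map x ↦ Ax on the open positive orthant, namely sup{d_H(Ax, Ay) : x, y ∈ ℝ^N with strictly positive entries}, equals max over all indices i,j,k,ℓ of log((a_{ij} a_{kℓ})/(a_{iℓ} a_{kj})); in particular it is finite. -/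
theorem aux_attain {N : ℕ} [NeZero N] (u v : Fin N → ℝ) :
    ∃ i k, dH u v = Real.log ((u i / v i) / (u k / v k)) := by
  obtain ⟨i, hi⟩ := exists_eq_ciSup_of_finite (f := fun i => u i / v i)
  obtain ⟨k, hk⟩ := exists_eq_ciInf_of_finite (f := fun i => u i / v i)
  refine ⟨i, k, ?_⟩
  unfold dH
  rw [← hi, ← hk]

theorem aux_le {N : ℕ} [NeZero N] (u v : Fin N → ℝ) (hu : ∀ i, 0 < u i) (hv : ∀ i, 0 < v i)
    (i k : Fin N) : Real.log ((u i / v i) / (u k / v k)) ≤ dH u v := by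
  have h1 : u i / v i ≤ ⨆ i, u i / v i :=
    le_ciSup (f := fun i => u i / v i) (Set.finite_range _).bddAbove i
  have h2 : (⨅ i, u i / v i) ≤ u k / v k :=
    ciInf_le (f := fun i => u i / v i) (Set.finite_range _).bddBelow k
  have h3 : 0 < ⨅ i, u i / v i := by
    obtain ⟨m, hm⟩ := exists_eq_ciInf_of_finite (f := fun i => u i / v i)
    rw [← hm]
    exact div_pos (hu m) (hv m)
  have hi := div_pos (hu i) (hv i)
  have hk := div_pos (hu k) (hv k)
  unfold dH
  apply Real.log_le_log (div_pos hi hk)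
  exact div_le_div₀ (hi.le.trans h1) h1 h3 h2

theorem aux_pos {N : ℕ} [NeZero N] (A : Matrix (Fin N) (Fin N) ℝ)
    (hA : ∀ i j, 0 < A i j) (x : Fin N → ℝ) (hx : ∀ i, 0 < x i) (i : Fin N) :
    0 < A.mulVec x i := by
  simp only [Matrix.mulVec, dotProduct]
  exact Finset.sum_pos (fun j _ => mul_pos (hA i j) (hx j)) Finset.univ_nonempty

theorem aux_le_sup {N : ℕ} (f : Fin N → Fin N → Fin N → Fin N → ℝ) (i j k l : Fin N) :
    f i j k l ≤ ⨆ i, ⨆ j, ⨆ k, ⨆ l, f i j k l :=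
  calc f i j k l ≤ ⨆ l, f i j k l := le_ciSup (f := fun l => f i j k l) (Set.finite_range _).bddAbove l
    _ ≤ ⨆ k, ⨆ l, f i j k l :=
      le_ciSup (f := fun k => ⨆ l, f i j k l) (Set.finite_range _).bddAbove k
    _ ≤ ⨆ j, ⨆ k, ⨆ l, f i j k l :=
      le_ciSup (f := fun j => ⨆ k, ⨆ l, f i j k l) (Set.finite_range _).bddAbove j
    _ ≤ _ := le_ciSup (f := fun i => ⨆ j, ⨆ k, ⨆ l, f i j k l) (Set.finite_range _).bddAbove i

/-- The projective diameter of the map `x ↦ Ax` on the open positive orthant, for a matrix `A`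
with strictly positive entries, equals `max_{i,j,k,ℓ} log((a_{ij} a_{kℓ})/(a_{iℓ} a_{kj}))`;
in particular it is finite (it is a least upper bound of the set of attained distances). -/
theorem projective_diameter_formula {N : ℕ} [NeZero N] (A : Matrix (Fin N) (Fin N) ℝ)
    (hA : ∀ i j, 0 < A i j) :
    IsLUB {d : ℝ | ∃ x y : Fin N → ℝ, (∀ i, 0 < x i) ∧ (∀ i, 0 < y i) ∧
        d = dH (A.mulVec x) (A.mulVec y)}
      (⨆ i, ⨆ j, ⨆ k, ⨆ l, Real.log ((A i j * A k l) / (A i l * A k j))) := by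
  constructor
  · rintro d ⟨x, y, hx, hy, rfl⟩
    obtain ⟨i, k, h⟩ := aux_attain (A.mulVec x) (A.mulVec y)
    rw [h]
    have ux := aux_pos A hA x hx
    have uy := aux_pos A hA y hy
    set S := ⨆ i, ⨆ j, ⨆ k, ⨆ l, Real.log ((A i j * A k l) / (A i l * A k j)) with hS
    rw [Real.log_le_iff_le_exp (div_pos (div_pos (ux i) (uy i)) (div_pos (ux k) (uy k))),
      div_div_div_eq, div_le_iff₀ (mul_pos (uy i) (ux k))]
    have key : ∀ j l, A i j * A k l ≤ Real.exp S * (A i l * A k j) := by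
      intro j l
      have := aux_le_sup (fun i j k l => Real.log ((A i j * A k l) / (A i l * A k j))) i j k l
      rw [← hS, Real.log_le_iff_le_exp (div_pos (mul_pos (hA _ _) (hA _ _))
        (mul_pos (hA _ _) (hA _ _))), div_le_iff₀ (mul_pos (hA _ _) (hA _ _))] at this
      exact this
    rw [mul_comm (A.mulVec y i)]
    simp only [Matrix.mulVec, dotProduct]
    rw [Finset.sum_mul_sum, Finset.sum_mul_sum, Finset.mul_sum]
    refine Finset.sum_le_sum fun j _ => ?_
    rw [Finset.mul_sum]
    refine Finset.sum_le_sum fun l _ => ?_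
    have := mul_le_mul_of_nonneg_right (key j l) (mul_pos (hx j) (hy l)).le
    linarith
  · intro b hb
    refine ciSup_le fun i => ciSup_le fun j => ciSup_le fun k => ciSup_le fun l => ?_
    let x : Fin N → ℝ → Fin N → ℝ := fun j ε m => Pi.single (M := fun _ => ℝ) j 1 m + ε
    have hx : ∀ j ε, 0 < ε → ∀ m, 0 < x j ε m := by
      intro j ε hε m
      have : (0 : ℝ) ≤ Pi.single (M := fun _ => ℝ) j 1 m := by
        by_cases h : m = j
        · subst h; simp
        · simp [h]
      simp only [x]
      linarith
    have h0 : ∀ i j, A.mulVec (x j 0) i = A i j := by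
      intro i j
      have : x j 0 = Pi.single j 1 := by ext m; simp [x]
      rw [this]; simp
    have hc : ∀ i j, Continuous fun ε => A.mulVec (x j ε) i := by
      intro i j
      simp only [Matrix.mulVec, dotProduct, x]
      fun_prop
    have hne : ∀ i j, A.mulVec (x j 0) i ≠ 0 := fun i j => by rw [h0]; exact (hA i j).ne'
    have hcont : ContinuousAt (fun ε => Real.log ((A.mulVec (x j ε) i / A.mulVec (x l ε) i) /
        (A.mulVec (x j ε) k / A.mulVec (x l ε) k))) 0 :=
      ContinuousAt.log (((hc i j).continuousAt.div (hc i l).continuousAt (hne _ _)).div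
        ((hc k j).continuousAt.div (hc k l).continuousAt (hne _ _))
          (div_ne_zero (hne _ _) (hne _ _)))
        (div_ne_zero (div_ne_zero (hne _ _) (hne _ _)) (div_ne_zero (hne _ _) (hne _ _)))
    have ht := hcont.tendsto.mono_left (nhdsWithin_le_nhds (s := Set.Ioi 0))
    simp only [h0] at ht
    rw [div_div_div_eq] at ht
    refine le_of_tendsto ht ?_
    filter_upwards [self_mem_nhdsWithin] with ε hε
    exact (aux_le _ _ (aux_pos A hA _ (hx j ε hε)) (aux_pos A hA _ (hx l ε hε)) i k).trans
      (hb ⟨_, _, hx j ε hε, hx l ε hε, rfl⟩)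
end

section
/- Let Π = [π_{ij}] be an N×N stochastic matrix with strictly positive entries and let p_0, p_T be probability distributions on {1,…,N} with strictly positive entries. Define the map C from the open positive orthant of ℝ^N to itself as the composition C = D̂_0 ∘ E ∘ D_T ∘ E†, where E†(x)_j = Σ_i π_{ij} x_i, D_T(x)_j = p_T(j)/x_j, E(x)_i = Σ_j π_{ij} x_j, and D̂_0(x)_i = p_0(i)/x_i. Then C is a strict contraction in the Hilbert projective metric: there exists 0 ≤ λ < 1 such that d_H(C(x), C(y)) ≤ λ · d_H(x, y) for all vectors x, y with strictly positive entries. -/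
open scoped BigOperators

/-- The composition `C = D̂_0 ∘ E ∘ D_T ∘ E†`, where `E†(x)_j = Σ_i π_{ij} x_i`,
`D_T(x)_j = p_T(j)/x_j`, `E(x)_i = Σ_j π_{ij} x_j` and `D̂_0(x)_i = p_0(i)/x_i`. -/
noncomputable def Cmap {N : ℕ} (Pm : Matrix (Fin N) (Fin N) ℝ) (p0 pT : Fin N → ℝ)
    (x : Fin N → ℝ) : Fin N → ℝ :=
  fun i => p0 i / (∑ j, Pm i j * (pT j / (∑ k, Pm k j * x k)))

lemma dH_le_iff {N : ℕ} [NeZero N] (x y : Fin N → ℝ) (hx : ∀ i, 0 < x i) (hy : ∀ i, 0 < y i)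
    (D : ℝ) : dH x y ≤ D ↔ ∀ i j, Real.log (x i / y i) - Real.log (x j / y j) ≤ D := by
  have hr : ∀ i, 0 < x i / y i := fun i => div_pos (hx i) (hy i)
  obtain ⟨a, ha⟩ := exists_eq_ciSup_of_finite (f := fun i => x i / y i)
  obtain ⟨b, hb⟩ := exists_eq_ciInf_of_finite (f := fun i => x i / y i)
  have hM : ∀ i, x i / y i ≤ x a / y a := fun i => by
    have h := le_ciSup (f := fun i => x i / y i) (Set.finite_range _).bddAbove i
    rw [← ha] at h; exact h
  have hm : ∀ i, x b / y b ≤ x i / y i := fun i => by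
    have h := ciInf_le (f := fun i => x i / y i) (Set.finite_range _).bddBelow i
    rw [← hb] at h; exact h
  unfold dH
  rw [← ha, ← hb, Real.log_div (hr a).ne' (hr b).ne']
  constructor
  · intro h i j
    have h1 := Real.log_le_log (hr i) (hM i)
    have h2 := Real.log_le_log (hr b) (hm j)
    linarith
  · intro h
    exact h a b

lemma contr_aux {N : ℕ} [NeZero N] (A : Fin N → Fin N → ℝ) (hA : ∀ i j, 0 < A i j) :
    ∃ c : ℝ, 0 ≤ c ∧ c < 1 ∧ ∀ x y : Fin N → ℝ, (∀ i, 0 < x i) → (∀ i, 0 < y i) →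
      dH (fun i => ∑ k, A i k * x k) (fun i => ∑ k, A i k * y k) ≤ c * dH x y := by
  obtain ⟨⟨p, q⟩, hlo⟩ := Finite.exists_min (fun t : Fin N × Fin N => A t.1 t.2)
  obtain ⟨⟨p', q'⟩, hhi⟩ := Finite.exists_max (fun t : Fin N × Fin N => A t.1 t.2)
  simp only [Prod.forall] at hlo hhi
  set lo := A p q with hlodef
  set hi := A p' q' with hhidef
  have hlo0 : 0 < lo := hA p q
  have hlohi : lo ≤ hi := hlo _ _
  have hhi0 : 0 < hi := hlo0.trans_le hlohi
  set t := lo / hi with ht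
  have ht0 : 0 < t := div_pos hlo0 hhi0
  have ht1 : t ≤ 1 := (div_le_one hhi0).2 hlohi
  have hc1 : t ^ 2 ≤ 1 := pow_le_one₀ ht0.le ht1
  have hc0 : 0 < t ^ 2 := by positivity
  refine ⟨1 - t ^ 2, by linarith, by linarith, ?_⟩
  intro x y hx hy
  have hsum : ∀ z : Fin N → ℝ, (∀ i, 0 < z i) → ∀ i, 0 < ∑ k, A i k * z k := fun z hz i =>
    Finset.sum_pos (fun k _ => mul_pos (hA i k) (hz k)) Finset.univ_nonempty
  rw [dH_le_iff _ _ (hsum x hx) (hsum y hy)]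
  intro j i
  have hD := (dH_le_iff x y hx hy _).1 le_rfl
  obtain ⟨a, ha⟩ := Finite.exists_max (fun i => x i / y i)
  obtain ⟨b, hb⟩ := Finite.exists_min (fun i => x i / y i)
  have hab := hD a b
  have hM0 : 0 < x a / y a := div_pos (hx a) (hy a)
  have hm0 : 0 < x b / y b := div_pos (hx b) (hy b)
  set M := x a / y a
  set m := x b / y b
  have hMx : ∀ k, x k ≤ M * y k := fun k => (div_le_iff₀ (hy k)).1 (ha k)
  have hmx : ∀ k, m * y k ≤ x k := fun k => (le_div_iff₀ (hy k)).1 (hb k)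
  have hYi := hsum y hy i
  have hYj := hsum y hy j
  have hXi := hsum x hx i
  have hXj := hsum x hx j
  have hS : 0 < ∑ k, y k := Finset.sum_pos (fun k _ => hy k) Finset.univ_nonempty
  have hZ : 0 ≤ ∑ k, (x k - m * y k) := Finset.sum_nonneg (fun k _ => by linarith [hmx k])
  have e1 : ∀ l, ∑ k, A l k * (x k - m * y k) = ∑ k, A l k * x k - m * ∑ k, A l k * y k := by
    intro l
    rw [Finset.mul_sum, ← Finset.sum_sub_distrib]
    exact Finset.sum_congr rfl fun k _ => by ring
  have h1 : lo * ∑ k, (x k - m * y k) ≤ ∑ k, A i k * x k - m * ∑ k, A i k * y k := by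
    rw [← e1, Finset.mul_sum]
    exact Finset.sum_le_sum fun k _ =>
      mul_le_mul_of_nonneg_right (hlo i k) (by linarith [hmx k])
  have h2 : ∑ k, A j k * x k - m * ∑ k, A j k * y k ≤ hi * ∑ k, (x k - m * y k) := by
    rw [← e1, Finset.mul_sum]
    exact Finset.sum_le_sum fun k _ =>
      mul_le_mul_of_nonneg_right (hhi j k) (by linarith [hmx k])
  have h3 : ∑ k, A i k * y k ≤ hi * ∑ k, y k := by
    rw [Finset.mul_sum]
    exact Finset.sum_le_sum fun k _ => mul_le_mul_of_nonneg_right (hhi i k) (hy k).le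
  have h4 : lo * ∑ k, y k ≤ ∑ k, A j k * y k := by
    rw [Finset.mul_sum]
    exact Finset.sum_le_sum fun k _ => mul_le_mul_of_nonneg_right (hlo j k) (hy k).le
  have h5 : ∑ k, A j k * x k ≤ M * ∑ k, A j k * y k := by
    rw [Finset.mul_sum]
    exact Finset.sum_le_sum fun k _ => by nlinarith [hMx k, hA j k]
  generalize (∑ k, A i k * x k) = Xi at *
  generalize (∑ k, A j k * x k) = Xj at *
  generalize (∑ k, A i k * y k) = Yi at *
  generalize (∑ k, A j k * y k) = Yj at *
  generalize (∑ k, y k) = S at *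
  generalize (∑ k, (x k - m * y k)) = Z at *
  have hu : 0 < Xi / Yi := div_pos hXi hYi
  have hv : 0 < Xj / Yj := div_pos hXj hYj
  have hvM : Xj / Yj ≤ M := (div_le_iff₀ hYj).2 h5
  have g1 : lo * Z / (hi * S) ≤ Xi / Yi - m := by
    have : Xi / Yi - m = (Xi - m * Yi) / Yi := by field_simp
    rw [this]
    exact div_le_div₀ (le_trans (by positivity) h1) h1 hYi h3
  have g2 : Xj / Yj - m ≤ hi * Z / (lo * S) := by
    have : Xj / Yj - m = (Xj - m * Yj) / Yj := by field_simp
    rw [this]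
    exact div_le_div₀ (by positivity) h2 (by positivity) h4
  have g3 : t ^ 2 * (hi * Z / (lo * S)) = lo * Z / (hi * S) := by
    rw [ht]; field_simp
  have g4 : (1 - t ^ 2) * m + t ^ 2 * (Xj / Yj) ≤ Xi / Yi := by
    have := mul_le_mul_of_nonneg_left g2 hc0.le
    linarith
  have g5 := strictConcaveOn_log_Ioi.concaveOn.2 (Set.mem_Ioi.2 hm0) (Set.mem_Ioi.2 hv)
    (sub_nonneg.2 hc1) hc0.le (by ring)
  simp only [smul_eq_mul] at g5
  have g6 := Real.log_le_log (by have := sub_nonneg.2 hc1; positivity) g4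
  have g7 := Real.log_le_log hv hvM
  have g8 := mul_le_mul_of_nonneg_left (show Real.log (Xj / Yj) - Real.log m ≤ dH x y by linarith)
    (sub_nonneg.2 hc1)
  linarith

lemma dH_inv {N : ℕ} [NeZero N] (p x y : Fin N → ℝ) (hp : ∀ i, 0 < p i) (hx : ∀ i, 0 < x i)
    (hy : ∀ i, 0 < y i) : dH (fun i => p i / x i) (fun i => p i / y i) ≤ dH x y := by
  rw [dH_le_iff _ _ (fun i => div_pos (hp i) (hx i)) (fun i => div_pos (hp i) (hy i))]
  intro i j
  have h := (dH_le_iff x y hx hy _).1 le_rfl j i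
  have e : ∀ i, p i / x i / (p i / y i) = (x i / y i)⁻¹ := fun i => by
    have := (hp i).ne'; have := (hx i).ne'; have := (hy i).ne'
    field_simp
  simp only [e, Real.log_inv]
  linarith

/-- For a stochastic matrix `Π` with strictly positive entries and strictly positive probability
distributions `p_0, p_T`, the composition `C = D̂_0 ∘ E ∘ D_T ∘ E†` is a strict contraction in
the Hilbert projective metric on the open positive orthant. -/
theorem Cmap_strict_contraction {N : ℕ} [NeZero N] (Pm : Matrix (Fin N) (Fin N) ℝ)
    (hpos : ∀ i j, 0 < Pm i j) (hrow : ∀ i, ∑ j, Pm i j = 1)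
    (p0 pT : Fin N → ℝ) (hp0 : ∀ i, 0 < p0 i) (hpT : ∀ j, 0 < pT j)
    (hp0sum : ∑ i, p0 i = 1) (hpTsum : ∑ j, pT j = 1) :
    ∃ lam : ℝ, 0 ≤ lam ∧ lam < 1 ∧
      ∀ x y : Fin N → ℝ, (∀ i, 0 < x i) → (∀ i, 0 < y i) →
        dH (Cmap Pm p0 pT x) (Cmap Pm p0 pT y) ≤ lam * dH x y := by
  obtain ⟨c, hc0, hc1, hc⟩ := contr_aux (fun j k => Pm k j) (fun j k => hpos k j)
  obtain ⟨d, hd0, hd1, hd⟩ := contr_aux (fun i j => Pm i j) hpos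
  refine ⟨d * c, mul_nonneg hd0 hc0, by nlinarith, ?_⟩
  intro x y hx hy
  have hs : ∀ z : Fin N → ℝ, (∀ i, 0 < z i) → ∀ j, 0 < ∑ k, Pm k j * z k := fun z hz j =>
    Finset.sum_pos (fun k _ => mul_pos (hpos k j) (hz k)) Finset.univ_nonempty
  have hq : ∀ z : Fin N → ℝ, (∀ i, 0 < z i) → ∀ j, 0 < pT j / ∑ k, Pm k j * z k :=
    fun z hz j => div_pos (hpT j) (hs z hz j)
  have hw : ∀ z : Fin N → ℝ, (∀ i, 0 < z i) →
      ∀ i, 0 < ∑ j, Pm i j * (pT j / ∑ k, Pm k j * z k) := fun z hz i =>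
    Finset.sum_pos (fun k _ => mul_pos (hpos i k) (hq z hz k)) Finset.univ_nonempty
  have s1 := hc x y hx hy
  have s2 := dH_inv pT _ _ hpT (hs x hx) (hs y hy)
  have s3 := hd _ _ (hq x hx) (hq y hy)
  have s4 := dH_inv p0 _ _ hp0 (hw x hx) (hw y hy)
  refine s4.trans (s3.trans ?_)
  rw [mul_assoc]
  exact mul_le_mul_of_nonneg_left (s2.trans s1) hd0
end

section
/- Let Π = [π_{x_0,x_T}] be an N×N stochastic matrix with strictly positive entries and let p_0, p_T be probability distributions on {1,…,N} with strictly positive entries. Then there exist four vectors φ(0,·), φ(T,·), φ̂(0,·), φ̂(T,·) ∈ ℝ^N with strictly positive entries such that for all x_0, x_T: (i) φ(0,x_0) = Σ_{x_T} π_{x_0,x_T} φ(T,x_T); (ii) φ̂(T,x_T) = Σ_{x_0} π_{x_0,x_T} φ̂(0,x_0); (iii) φ(0,x_0)·φ̂(0,x_0) = p_0(x_0); (iv) φ(T,x_T)·φ̂(T,x_T) = p_T(x_T). Moreover these four vectors are unique up to replacing (φ(0,·), φ(T,·), φ̂(0,·), φ̂(T,·)) by (c·φ(0,·), c·φ(T,·),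 c^{-1}·φ̂(0,·), c^{-1}·φ̂(T,·)) for a positive constant c. -/
open scoped BigOperators

lemma schr_pos {N : ℕ} (Pm : Matrix (Fin N) (Fin N) ℝ) (hpos : ∀ i j, 0 < Pm i j)
    (x : Fin N → ℝ) (hx : x ∈ stdSimplex ℝ (Fin N)) (i : Fin N) : 0 < ∑ j, Pm i j * x j := by
  obtain ⟨h0, h1⟩ := hx
  have : ∃ k, 0 < x k := by
    by_contra! h
    have : ∑ k, x k ≤ 0 := Finset.sum_nonpos (fun k _ => h k)
    linarith
  obtain ⟨k, hk⟩ := this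
  exact Finset.sum_pos' (fun j _ => mul_nonneg (hpos i j).le (h0 j))
    ⟨k, Finset.mem_univ _, mul_pos (hpos i k) hk⟩

lemma schr_crit {N : ℕ} (Pm : Matrix (Fin N) (Fin N) ℝ)
    (hpos : ∀ i j, 0 < Pm i j)
    (p0 pT : Fin N → ℝ) (hpT : ∀ j, 0 < pT j)
    (hp0sum : ∑ i, p0 i = 1) (hpTsum : ∑ j, pT j = 1) :
    ∃ x : Fin N → ℝ, (∀ j, 0 < x j) ∧ ∀ y : Fin N → ℝ, (∀ j, 0 < y j) →
      ∑ j, pT j * Real.log (y j) - ∑ i, p0 i * Real.log (∑ j, Pm i j * y j) ≤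
      ∑ j, pT j * Real.log (x j) - ∑ i, p0 i * Real.log (∑ j, Pm i j * x j) := by
  have hN : Nonempty (Fin N) := by
    by_contra h
    rw [not_nonempty_iff] at h
    simp at hp0sum
  set D : (Fin N → ℝ) → ℝ := fun x =>
    (∏ j, x j ^ pT j) * ∏ i, (∑ j, Pm i j * x j) ^ (-p0 i) with hD
  have hlog : ∀ y : Fin N → ℝ, (∀ j, 0 < y j) → Real.log (D y) =
      ∑ j, pT j * Real.log (y j) - ∑ i, p0 i * Real.log (∑ j, Pm i j * y j) := by
    intro y hy
    have hs : ∀ i, 0 < ∑ j, Pm i j * y j := fun i =>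
      Finset.sum_pos (fun j _ => mul_pos (hpos i j) (hy j)) Finset.univ_nonempty
    have e1 : ∀ j, y j ^ pT j ≠ 0 := fun j => (Real.rpow_pos_of_pos (hy j) _).ne'
    have e2 : ∀ i, (∑ j, Pm i j * y j) ^ (-p0 i) ≠ 0 :=
      fun i => (Real.rpow_pos_of_pos (hs i) _).ne'
    simp only [hD]
    rw [Real.log_mul (Finset.prod_ne_zero_iff.2 fun j _ => e1 j)
      (Finset.prod_ne_zero_iff.2 fun j _ => e2 j), Real.log_prod (fun j _ => e1 j),
      Real.log_prod (fun j _ => e2 j), sub_eq_add_neg, ← Finset.sum_neg_distrib]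
    congr 1
    · exact Finset.sum_congr rfl fun j _ => Real.log_rpow (hy j) _
    · refine Finset.sum_congr rfl fun i _ => ?_
      rw [Real.log_rpow (hs i)]; ring
  have hDpos : ∀ y : Fin N → ℝ, (∀ j, 0 < y j) → 0 < D y := by
    intro y hy
    have hs : ∀ i, 0 < ∑ j, Pm i j * y j := fun i =>
      Finset.sum_pos (fun j _ => mul_pos (hpos i j) (hy j)) Finset.univ_nonempty
    exact mul_pos (Finset.prod_pos fun j _ => Real.rpow_pos_of_pos (hy j) _)
      (Finset.prod_pos fun j _ => Real.rpow_pos_of_pos (hs j) _)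
  have hcont : ContinuousOn D (stdSimplex ℝ (Fin N)) := by
    refine ContinuousOn.mul (continuousOn_finsetProd _ fun j _ => ?_)
      (continuousOn_finsetProd _ fun i _ => ?_)
    · exact ContinuousOn.rpow_const (by fun_prop) (fun x _ => Or.inr (hpT j).le)
    · exact ContinuousOn.rpow_const (by fun_prop)
        (fun x hx => Or.inl (schr_pos Pm hpos x hx i).ne')
  have hmemn : ∀ y : Fin N → ℝ, (∀ j, 0 < y j) →
      (fun j => (∑ k, y k)⁻¹ * y j) ∈ stdSimplex ℝ (Fin N) := by
    intro y hy
    have hs : 0 < ∑ k, y k := Finset.sum_pos (fun j _ => hy j) Finset.univ_nonempty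
    refine ⟨fun j => mul_nonneg (inv_nonneg.2 hs.le) (hy j).le, ?_⟩
    rw [← Finset.mul_sum]
    exact inv_mul_cancel₀ hs.ne'
  obtain ⟨x, hx, hmax⟩ := (isCompact_stdSimplex ℝ (Fin N)).exists_isMaxOn
    ⟨_, hmemn (fun _ => 1) (fun _ => one_pos)⟩ hcont
  have hmax' : ∀ y : Fin N → ℝ, (∀ j, 0 < y j) → D (fun j => (∑ k, y k)⁻¹ * y j) ≤ D x :=
    fun y hy => hmax (hmemn y hy)
  have hnpos : ∀ y : Fin N → ℝ, (∀ j, 0 < y j) → ∀ j, 0 < (∑ k, y k)⁻¹ * y j := by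
    intro y hy j
    exact mul_pos (inv_pos.2 (Finset.sum_pos (fun j _ => hy j) Finset.univ_nonempty)) (hy j)
  have hDx : 0 < D x := lt_of_lt_of_le
    (hDpos _ (hnpos (fun _ => 1) (fun _ => one_pos))) (hmax' (fun _ => 1) (fun _ => one_pos))
  have hxpos : ∀ j, 0 < x j := by
    intro j
    refine lt_of_le_of_ne (hx.1 j) fun h => ?_
    have : ∏ j, x j ^ pT j = 0 := Finset.prod_eq_zero (Finset.mem_univ j) (by
      rw [← h, Real.zero_rpow (hpT j).ne'])
    simp only [hD, this, zero_mul, lt_irrefl] at hDx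
  refine ⟨x, hxpos, fun y hy => ?_⟩
  rw [← hlog x hxpos]
  have h := Real.log_le_log (hDpos _ (hnpos y hy)) (hmax' y hy)
  refine le_trans (le_of_eq ?_) h
  rw [hlog _ (hnpos y hy)]
  have hs : (∑ k, y k)⁻¹ ≠ 0 :=
    (inv_pos.2 (Finset.sum_pos (fun j _ => hy j) Finset.univ_nonempty)).ne'
  generalize (∑ k, y k)⁻¹ = c at hs
  have a1 : ∀ j, pT j * Real.log (c * y j) = pT j * Real.log c + pT j * Real.log (y j) := by
    intro j
    rw [Real.log_mul hs (hy j).ne']; ring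
  have a2 : ∀ i, p0 i * Real.log (∑ j, Pm i j * (c * y j)) =
      p0 i * Real.log c + p0 i * Real.log (∑ j, Pm i j * y j) := by
    intro i
    have hs' : 0 < ∑ j, Pm i j * y j :=
      Finset.sum_pos (fun j _ => mul_pos (hpos i j) (hy j)) Finset.univ_nonempty
    have : ∑ j, Pm i j * (c * y j) = c * ∑ j, Pm i j * y j := by
      rw [Finset.mul_sum]
      exact Finset.sum_congr rfl fun j _ => by ring
    rw [this, Real.log_mul hs hs'.ne']; ring
  simp only [a1, a2, Finset.sum_add_distrib, ← Finset.sum_mul, hp0sum, hpTsum]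
  ring

lemma schr_exists {N : ℕ} (Pm : Matrix (Fin N) (Fin N) ℝ)
    (hpos : ∀ i j, 0 < Pm i j)
    (p0 pT : Fin N → ℝ) (hpT : ∀ j, 0 < pT j)
    (hp0sum : ∑ i, p0 i = 1) (hpTsum : ∑ j, pT j = 1) :
    ∃ x : Fin N → ℝ, (∀ j, 0 < x j) ∧
      ∀ j, x j * ∑ i, Pm i j * (p0 i / ∑ k, Pm i k * x k) = pT j := by
  obtain ⟨x, hx, hmax⟩ := schr_crit Pm hpos p0 pT hpT hp0sum hpTsum
  refine ⟨x, hx, fun j => ?_⟩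
  have hs : ∀ i, 0 < ∑ k, Pm i k * x k := fun i =>
    Finset.sum_pos (fun k _ => mul_pos (hpos i k) (hx k)) ⟨j, Finset.mem_univ _⟩
  let e : Fin N → ℝ := Pi.single j 1
  let h : ℝ → ℝ := fun t => ∑ k, pT k * Real.log (x k + t * e k) -
    ∑ i, p0 i * Real.log (∑ k, Pm i k * (x k + t * e k))
  have hd : HasDerivAt h (∑ k, pT k * (e k / x k) -
      ∑ i, p0 i * ((∑ k, Pm i k * e k) / ∑ k, Pm i k * x k)) 0 := by
    have b : ∀ k, HasDerivAt (fun t : ℝ => x k + t * e k) (e k) 0 := fun k => by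
      simpa using ((hasDerivAt_id (0 : ℝ)).mul_const (e k)).const_add (x k)
    refine HasDerivAt.sub (HasDerivAt.fun_sum fun k _ => ?_) (HasDerivAt.fun_sum fun i _ => ?_)
    · have := (b k).log (by simpa using (hx k).ne')
      simpa using this.const_mul (pT k)
    · have b2 : HasDerivAt (fun t : ℝ => ∑ k, Pm i k * (x k + t * e k)) (∑ k, Pm i k * e k) 0 :=
        HasDerivAt.fun_sum fun k _ => (b k).const_mul _
      have := b2.log (by simpa using (hs i).ne')
      simpa using this.const_mul (p0 i)
  have hloc : IsLocalMax h 0 := by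
    have : ∀ᶠ t in nhds (0 : ℝ), ∀ k, 0 < x k + t * e k := by
      rw [Filter.eventually_all]
      intro k
      have hc : Continuous fun t : ℝ => x k + t * e k := by fun_prop
      exact hc.continuousAt.eventually (lt_mem_nhds (by simpa using hx k))
    filter_upwards [this] with t ht
    have := hmax _ ht
    simpa [h] using this
  have h0 := hloc.hasDerivAt_eq_zero hd
  have c1 : ∑ k, pT k * (e k / x k) = pT j / x j := by
    rw [Finset.sum_eq_single j]
    · simp [e, div_eq_mul_inv]
    · intro k _ hk
      simp [e, hk]
    · simp
  have c2 : ∀ i, ∑ k, Pm i k * e k = Pm i j := by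
    intro i
    simp [e, Pi.single_apply]
  simp only [c1, c2] at h0
  have h1 : ∑ i, Pm i j * (p0 i / ∑ k, Pm i k * x k) = pT j / x j := by
    rw [sub_eq_zero.1 h0]
    exact Finset.sum_congr rfl fun i _ => by ring
  rw [h1]
  have := (hx j).ne'
  field_simp

/-- Existence and uniqueness (up to a positive scalar) of the solution of the Schrödinger system
for an `N×N` stochastic matrix with strictly positive entries and strictly positive marginal
probability distributions `p_0`, `p_T`. -/
theorem schroedinger_system_exists_unique {N : ℕ} (Pm : Matrix (Fin N) (Fin N) ℝ)
    (hpos : ∀ i j, 0 < Pm i j) (hrow : ∀ i, ∑ j, Pm i j = 1)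
    (p0 pT : Fin N → ℝ) (hp0 : ∀ i, 0 < p0 i) (hpT : ∀ j, 0 < pT j)
    (hp0sum : ∑ i, p0 i = 1) (hpTsum : ∑ j, pT j = 1) :
    ∃ f0 fT g0 gT : Fin N → ℝ,
      (∀ i, 0 < f0 i) ∧ (∀ j, 0 < fT j) ∧ (∀ i, 0 < g0 i) ∧ (∀ j, 0 < gT j) ∧
      (∀ i, f0 i = ∑ j, Pm i j * fT j) ∧
      (∀ j, gT j = ∑ i, Pm i j * g0 i) ∧
      (∀ i, f0 i * g0 i = p0 i) ∧
      (∀ j, fT j * gT j = pT j) ∧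
      (∀ f0' fT' g0' gT' : Fin N → ℝ,
        (∀ i, 0 < f0' i) → (∀ j, 0 < fT' j) → (∀ i, 0 < g0' i) → (∀ j, 0 < gT' j) →
        (∀ i, f0' i = ∑ j, Pm i j * fT' j) →
        (∀ j, gT' j = ∑ i, Pm i j * g0' i) →
        (∀ i, f0' i * g0' i = p0 i) →
        (∀ j, fT' j * gT' j = pT j) →
        ∃ c : ℝ, 0 < c ∧
          f0' = c • f0 ∧ fT' = c • fT ∧ g0' = c⁻¹ • g0 ∧ gT' = c⁻¹ • gT) := by
  have hN : Nonempty (Fin N) := by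
    by_contra h
    rw [not_nonempty_iff] at h
    simp at hp0sum
  obtain ⟨x, hx, hxe⟩ := schr_exists Pm hpos p0 pT hpT hp0sum hpTsum
  have hs : ∀ i, 0 < ∑ k, Pm i k * x k := fun i =>
    Finset.sum_pos (fun k _ => mul_pos (hpos i k) (hx k)) Finset.univ_nonempty
  have hg0 : ∀ i, 0 < p0 i / ∑ k, Pm i k * x k := fun i => div_pos (hp0 i) (hs i)
  have hgT : ∀ j, 0 < ∑ i, Pm i j * (p0 i / ∑ k, Pm i k * x k) := fun j =>
    Finset.sum_pos (fun i _ => mul_pos (hpos i j) (hg0 i)) Finset.univ_nonempty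
  refine ⟨fun i => ∑ k, Pm i k * x k, x, fun i => p0 i / ∑ k, Pm i k * x k,
    fun j => ∑ i, Pm i j * (p0 i / ∑ k, Pm i k * x k), hs, hx, hg0, hgT,
    fun _ => rfl, fun _ => rfl, fun i => mul_div_cancel₀ _ (hs i).ne', hxe, ?_⟩
  have hfg : ∀ i, (∑ k, Pm i k * x k) * (p0 i / ∑ k, Pm i k * x k) = p0 i :=
    fun i => mul_div_cancel₀ _ (hs i).ne'
  generalize hf0 : (fun i => ∑ k, Pm i k * x k) = f0 at *
  have hf0' : ∀ i, ∑ k, Pm i k * x k = f0 i := fun i => congrFun hf0 i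
  simp only [hf0'] at hs hg0 hgT hxe hfg ⊢
  generalize hg : (fun i => p0 i / f0 i) = g0 at *
  have hg' : ∀ i, p0 i / f0 i = g0 i := fun i => congrFun hg i
  simp only [hg'] at hg0 hgT hxe hfg ⊢
  intro u v w z hu hv hw hz h1 h2 h3 h4
  obtain ⟨j, hj⟩ := Finite.exists_max (fun j => v j / x j)
  have hcpos : 0 < v j / x j := div_pos (hv j) (hx j)
  have hcj : v j = (v j / x j) * x j := (div_mul_cancel₀ _ (hx j).ne').symm
  generalize v j / x j = c at *
  have hvle : ∀ k, v k ≤ c * x k := fun k => (div_le_iff₀ (hx k)).1 (hj k)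
  have hule : ∀ i, u i ≤ c * f0 i := by
    intro i
    rw [h1, ← hf0', Finset.mul_sum]
    refine Finset.sum_le_sum fun k _ => ?_
    nlinarith [hvle k, hpos i k]
  have hwge : ∀ i, g0 i ≤ c * w i := by
    intro i
    have : f0 i * g0 i ≤ f0 i * (c * w i) := by
      rw [hfg, ← h3]
      nlinarith [hule i, hw i]
    exact le_of_mul_le_mul_left this (hs i)
  have hzj : ∑ i, Pm i j * g0 i = c * z j := by
    have : x j * ∑ i, Pm i j * g0 i = x j * (c * z j) := by
      rw [hxe, ← h4, hcj]; ring
    exact mul_left_cancel₀ (hx j).ne' this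
  have hweq : ∀ i, g0 i = c * w i := by
    have e : ∑ i, Pm i j * g0 i = ∑ i, Pm i j * (c * w i) := by
      rw [hzj, h2, Finset.mul_sum]
      exact Finset.sum_congr rfl fun i _ => by ring
    intro i
    have := (Finset.sum_eq_sum_iff_of_le (fun i _ =>
      mul_le_mul_of_nonneg_left (hwge i) (hpos i j).le)).1 e i (Finset.mem_univ i)
    exact mul_left_cancel₀ (hpos i j).ne' this
  have hueq : ∀ i, u i = c * f0 i := by
    intro i
    refine mul_right_cancel₀ (hw i).ne' ?_
    rw [h3, ← hfg, hweq]; ring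
  have hzeq : ∀ k, ∑ i, Pm i k * g0 i = c * z k := by
    intro k
    rw [h2, Finset.mul_sum]
    exact Finset.sum_congr rfl fun i _ => by rw [hweq]; ring
  have hveq : ∀ k, v k = c * x k := by
    intro k
    refine mul_right_cancel₀ (hz k).ne' ?_
    rw [h4, ← hxe, hzeq]; ring
  refine ⟨c, hcpos, funext hueq, funext hveq, funext fun i => ?_, funext fun k => ?_⟩
  · simp only [Pi.smul_apply, smul_eq_mul]
    rw [hweq, inv_mul_cancel_left₀ hcpos.ne']
  · simp only [Pi.smul_apply, smul_eq_mul]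
    rw [hzeq, inv_mul_cancel_left₀ hcpos.ne']
end

section
/- Let p be a strictly positive probability distribution on {1,…,N}×{1,…,N}, and let p_0, p_T be strictly positive probability distributions on {1,…,N}. Then there exist vectors φ̂, φ ∈ ℝ^N with strictly positive entries such that q°(a,b) := φ̂(a)·p(a,b)·φ(b) is a probability distribution on {1,…,N}×{1,…,N} with marginals Σ_b q°(a,b) = p_0(a) and Σ_a q°(a,b) = p_T(b); moreover q° is the unique minimizer of the relative entropy D(q‖p) over all probability distributions q on {1,…,N}×{1,…,N} satisfying Σ_b q(a,b) = p_0(a) and Σ_a q(a,b) = p_T(b) for all a, b. -/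
open scoped BigOperators

/-- The relative entropy `D(Q‖P) = Σ_s Q(s)·log(Q(s)/P(s))` of probability distributions on a
finite set (with the convention `0·log 0 = 0`), valid when `Supp(Q) ⊆ Supp(P)`. -/
noncomputable def relEnt {α : Type*} [Fintype α] (Q P : α → ℝ) : ℝ :=
  ∑ s, Q s * Real.log (Q s / P s)

lemma sb_gibbs_term {x y p : ℝ} (hx : 0 ≤ x) (hy : 0 < y) (hp : 0 < p) (hne : x ≠ y) :
    x * Real.log (y / p) + x - y < x * Real.log (x / p) := by
  rcases hx.eq_or_lt with h | h
  · subst h; simpa using hy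
  · have h1 : Real.log (y / x) < y / x - 1 := by
      apply Real.log_lt_sub_one_of_pos (by positivity)
      intro h2
      rw [div_eq_one_iff_eq h.ne'] at h2
      exact hne h2.symm
    have h2 := mul_lt_mul_of_pos_left h1 h
    rw [Real.log_div hy.ne' h.ne'] at h2
    rw [Real.log_div hy.ne' hp.ne', Real.log_div h.ne' hp.ne']
    have h3 : x * (y / x - 1) = y - x := by field_simp
    rw [h3] at h2
    linarith

lemma sb_exists_max {N : ℕ} (p : Fin N × Fin N → ℝ)
    (hp : ∀ ab, 0 < p ab)
    (p0 pT : Fin N → ℝ) (hp0 : ∀ a, 0 < p0 a) (hpT : ∀ b, 0 < pT b)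
    (hp0sum : ∑ a, p0 a = 1) (hpTsum : ∑ b, pT b = 1) :
    ∃ g : Fin N → ℝ, (∀ b, 0 < g b) ∧ ∀ h : Fin N → ℝ, (∀ b, 0 < h b) →
      (∑ b, pT b * Real.log (h b)) - ∑ a, p0 a * Real.log (∑ b, p (a, b) * h b) ≤
      (∑ b, pT b * Real.log (g b)) - ∑ a, p0 a * Real.log (∑ b, p (a, b) * g b) := by
  have hN : Nonempty (Fin N) := by
    by_contra hcon
    rw [not_nonempty_iff] at hcon
    simp at hp0sum
  set F : (Fin N → ℝ) → ℝ := fun g =>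
    (∏ b, g b ^ pT b) / ∏ a, (∑ b, p (a, b) * g b) ^ p0 a with hF
  have hSpos : ∀ g ∈ stdSimplex ℝ (Fin N), ∀ a, 0 < ∑ b, p (a, b) * g b := by
    intro g hg a
    have hnn : ∀ b, 0 ≤ p (a, b) * g b := fun b => mul_nonneg (hp _).le (hg.1 b)
    refine lt_of_le_of_ne (Finset.sum_nonneg fun b _ => hnn b) fun h0 => ?_
    have h1 := (Finset.sum_eq_zero_iff_of_nonneg (fun b _ => hnn b)).1 h0.symm
    have h2 : ∑ b, g b = 0 := Finset.sum_eq_zero fun b hb => by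
      have := h1 b hb
      rcases mul_eq_zero.1 this with h | h
      · exact absurd h (hp _).ne'
      · exact h
    have := hg.2
    linarith
  have hcont : ContinuousOn F (stdSimplex ℝ (Fin N)) := by
    apply ContinuousOn.div
    · apply Continuous.continuousOn
      exact continuous_finsetProd _ fun b _ =>
        (continuous_apply b).rpow_const fun _ => Or.inr (hpT b).le
    · apply Continuous.continuousOn
      exact continuous_finsetProd _ fun a _ =>
        Continuous.rpow_const (by fun_prop) fun _ => Or.inr (hp0 a).le
    · intro g hg
      exact (Finset.prod_pos fun a _ => Real.rpow_pos_of_pos (hSpos g hg a) _).ne'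
  have hFpos : ∀ g ∈ stdSimplex ℝ (Fin N), (∀ b, 0 < g b) → 0 < F g := by
    intro g hg hpos
    exact div_pos (Finset.prod_pos fun b _ => Real.rpow_pos_of_pos (hpos b) _)
      (Finset.prod_pos fun a _ => Real.rpow_pos_of_pos (hSpos g hg a) _)
  have hlog : ∀ g ∈ stdSimplex ℝ (Fin N), (∀ b, 0 < g b) → Real.log (F g) =
      (∑ b, pT b * Real.log (g b)) - ∑ a, p0 a * Real.log (∑ b, p (a, b) * g b) := by
    intro g hg hpos
    simp only [hF]
    rw [Real.log_div (Finset.prod_pos fun b _ => Real.rpow_pos_of_pos (hpos b) _).ne'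
      (Finset.prod_pos fun a _ => Real.rpow_pos_of_pos (hSpos g hg a) _).ne',
      Real.log_prod (fun b _ => (Real.rpow_pos_of_pos (hpos b) _).ne'),
      Real.log_prod (fun a _ => (Real.rpow_pos_of_pos (hSpos g hg a) _).ne')]
    congr 1
    · exact Finset.sum_congr rfl fun b _ => Real.log_rpow (hpos b) _
    · exact Finset.sum_congr rfl fun a _ => Real.log_rpow (hSpos g hg a) _
  -- normalization
  have hnorm : ∀ h : Fin N → ℝ, (∀ b, 0 < h b) →
      (0 < ∑ b, h b) ∧ (fun b => h b / ∑ b, h b) ∈ stdSimplex ℝ (Fin N) ∧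
      ∀ b, 0 < h b / ∑ b, h b := by
    intro h hh
    have hs : 0 < ∑ b, h b := Finset.sum_pos (fun b _ => hh b) Finset.univ_nonempty
    refine ⟨hs, ⟨fun b => (div_pos (hh b) hs).le, ?_⟩, fun b => div_pos (hh b) hs⟩
    rw [← Finset.sum_div, div_self hs.ne']
  obtain ⟨-, hu1, hu2⟩ := hnorm (fun _ => 1) (fun _ => one_pos)
  obtain ⟨g, hg, hmax⟩ := (isCompact_stdSimplex ℝ (Fin N)).exists_isMaxOn ⟨_, hu1⟩ hcont
  have hFg : 0 < F g := lt_of_lt_of_le (hFpos _ hu1 hu2) (hmax hu1)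
  have hgpos : ∀ b, 0 < g b := by
    intro b
    refine lt_of_le_of_ne (hg.1 b) fun h0 => ?_
    have : F g = 0 := by
      simp only [hF]
      rw [Finset.prod_eq_zero (Finset.mem_univ b), zero_div]
      rw [← h0, Real.zero_rpow (hpT b).ne']
    linarith
  refine ⟨g, hgpos, fun h hh => ?_⟩
  obtain ⟨hs, hn1, hn2⟩ := hnorm h hh
  have hle := Real.log_le_log (hFpos _ hn1 hn2) (hmax hn1)
  rw [hlog _ hn1 hn2, hlog g hg hgpos] at hle
  refine le_trans (le_of_eq ?_) hle
  have e1 : ∑ b, pT b * Real.log (h b / ∑ b, h b)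
      = (∑ b, pT b * Real.log (h b)) - Real.log (∑ b, h b) := by
    simp_rw [Real.log_div (hh _).ne' hs.ne', mul_sub]
    rw [Finset.sum_sub_distrib, ← Finset.sum_mul, hpTsum, one_mul]
  have e2 : ∑ a, p0 a * Real.log (∑ b, p (a, b) * (h b / ∑ b, h b))
      = (∑ a, p0 a * Real.log (∑ b, p (a, b) * h b)) - Real.log (∑ b, h b) := by
    have : ∀ a, Real.log (∑ b, p (a, b) * (h b / ∑ b, h b))
        = Real.log (∑ b, p (a, b) * h b) - Real.log (∑ b, h b) := by
      intro a
      simp_rw [← mul_div_assoc]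
      rw [← Finset.sum_div, Real.log_div _ hs.ne']
      exact (Finset.sum_pos (fun b _ => mul_pos (hp _) (hh b)) Finset.univ_nonempty).ne'
    simp_rw [this, mul_sub]
    rw [Finset.sum_sub_distrib, ← Finset.sum_mul, hp0sum, one_mul]
  rw [e1, e2]; ring

lemma sb_first_order {N : ℕ} (p : Fin N × Fin N → ℝ)
    (hp : ∀ ab, 0 < p ab)
    (p0 pT : Fin N → ℝ)
    (g : Fin N → ℝ) (hg : ∀ b, 0 < g b) (hmax : ∀ h : Fin N → ℝ, (∀ b, 0 < h b) →
      (∑ b, pT b * Real.log (h b)) - ∑ a, p0 a * Real.log (∑ b, p (a, b) * h b) ≤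
      (∑ b, pT b * Real.log (g b)) - ∑ a, p0 a * Real.log (∑ b, p (a, b) * g b))
    (b : Fin N) :
    pT b / g b = ∑ a, p0 a * (p (a, b) / ∑ b, p (a, b) * g b) := by
  have hS : ∀ a, 0 < ∑ b, p (a, b) * g b := fun a =>
    Finset.sum_pos (fun b _ => mul_pos (hp _) (hg b)) ⟨b, Finset.mem_univ b⟩
  set e : Fin N → ℝ := Pi.single b 1 with he
  set L : ℝ → ℝ := fun t => (∑ c, pT c * Real.log (g c + t * e c)) -
    ∑ a, p0 a * Real.log (∑ c, p (a, c) * (g c + t * e c)) with hL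
  have hd1 : ∀ c, HasDerivAt (fun t : ℝ => g c + t * e c) (e c) 0 := fun c => by
    simpa using ((hasDerivAt_id (0:ℝ)).mul_const (e c)).const_add (g c)
  have hd : HasDerivAt L ((∑ c, pT c * (e c / g c)) -
      ∑ a, p0 a * ((∑ c, p (a, c) * e c) / ∑ c, p (a, c) * g c)) 0 := by
    apply HasDerivAt.sub
    · apply HasDerivAt.fun_sum
      intro c _
      apply HasDerivAt.const_mul
      simpa using (hd1 c).log (by simpa using (hg c).ne')
    · apply HasDerivAt.fun_sum
      intro a _
      apply HasDerivAt.const_mul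
      have : HasDerivAt (fun t : ℝ => ∑ c, p (a, c) * (g c + t * e c))
          (∑ c, p (a, c) * e c) 0 :=
        HasDerivAt.fun_sum fun c _ => (hd1 c).const_mul _
      simpa using this.log (by simpa using (hS a).ne')
  have hloc : IsLocalMax L 0 := by
    have hev : ∀ᶠ t in nhds (0:ℝ), ∀ c, 0 < g c + t * e c := by
      rw [Filter.eventually_all]
      intro c
      exact (hd1 c).continuousAt.eventually (lt_mem_nhds (by simpa using hg c))
    filter_upwards [hev] with t ht
    simpa [hL] using hmax _ ht
  have h0 := hloc.hasDerivAt_eq_zero hd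
  simp only [he, Pi.single_apply] at h0
  simp [ite_div] at h0
  rw [div_eq_mul_inv]
  linarith

/-- For a strictly positive prior `p` on `{1,…,N}×{1,…,N}` and strictly positive marginals
`p_0, p_T`, there exist strictly positive vectors `φ̂`, `φ` such that
`q°(a,b) = φ̂(a)·p(a,b)·φ(b)` is a probability distribution with the prescribed marginals;
moreover `q°` is the unique minimizer of `D(q‖p)` subject to the marginal constraints. -/
theorem schroedinger_bridge_one_step {N : ℕ} (p : Fin N × Fin N → ℝ)
    (hp : ∀ ab, 0 < p ab) (hpsum : ∑ ab, p ab = 1)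
    (p0 pT : Fin N → ℝ) (hp0 : ∀ a, 0 < p0 a) (hpT : ∀ b, 0 < pT b)
    (hp0sum : ∑ a, p0 a = 1) (hpTsum : ∑ b, pT b = 1) :
    ∃ gh g : Fin N → ℝ, (∀ a, 0 < gh a) ∧ (∀ b, 0 < g b) ∧
      (∀ ab : Fin N × Fin N, 0 ≤ gh ab.1 * p ab * g ab.2) ∧
      (∑ ab : Fin N × Fin N, gh ab.1 * p ab * g ab.2) = 1 ∧
      (∀ a, ∑ b, gh a * p (a, b) * g b = p0 a) ∧
      (∀ b, ∑ a, gh a * p (a, b) * g b = pT b) ∧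
      (∀ q : Fin N × Fin N → ℝ, (∀ ab, 0 ≤ q ab) → (∑ ab, q ab = 1) →
        (∀ a, ∑ b, q (a, b) = p0 a) → (∀ b, ∑ a, q (a, b) = pT b) →
        q ≠ (fun ab => gh ab.1 * p ab * g ab.2) →
        relEnt (fun ab => gh ab.1 * p ab * g ab.2) p < relEnt q p) := by
  obtain ⟨g, hg, hmax⟩ := sb_exists_max p hp p0 pT hp0 hpT hp0sum hpTsum
  have hfo := sb_first_order p hp p0 pT g hg hmax
  have hS : ∀ a, 0 < ∑ b, p (a, b) * g b := fun a =>
    Finset.sum_pos (fun b _ => mul_pos (hp _) (hg b)) ⟨a, Finset.mem_univ a⟩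
  have hgh : ∀ a, 0 < p0 a / ∑ b, p (a, b) * g b := fun a => div_pos (hp0 a) (hS a)
  have hm1 : ∀ a, ∑ b, (p0 a / ∑ b, p (a, b) * g b) * p (a, b) * g b = p0 a := by
    intro a
    simp_rw [mul_assoc]
    rw [← Finset.mul_sum, div_mul_cancel₀ _ (hS a).ne']
  have hm2 : ∀ b, ∑ a, (p0 a / ∑ b, p (a, b) * g b) * p (a, b) * g b = pT b := by
    intro b
    rw [← Finset.sum_mul, ← div_mul_cancel₀ (pT b) (hg b).ne', hfo b]
    congr 1
    exact Finset.sum_congr rfl fun a _ => by ring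
  revert hgh hm1 hm2
  generalize hghdef : (fun a => p0 a / ∑ b, p (a, b) * g b) = gh
  have hghe : ∀ a, p0 a / ∑ b, p (a, b) * g b = gh a := fun a => congrFun hghdef a
  simp only [hghe]
  intro hgh hm1 hm2
  have hpos : ∀ ab : Fin N × Fin N, 0 < gh ab.1 * p ab * g ab.2 := fun ab =>
    mul_pos (mul_pos (hgh _) (hp _)) (hg _)
  have hsum : (∑ ab : Fin N × Fin N, gh ab.1 * p ab * g ab.2) = 1 := by
    rw [Fintype.sum_prod_type]
    simp only [hm1, hp0sum]
  refine ⟨gh, g, hgh, hg, fun ab => (hpos ab).le, hsum, hm1, hm2, ?_⟩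
  intro q hq hqs hq1 hq2 hne
  have key : ∀ r : Fin N × Fin N → ℝ, (∀ a, ∑ b, r (a, b) = p0 a) →
      (∀ b, ∑ a, r (a, b) = pT b) →
      ∑ ab, r ab * Real.log (gh ab.1 * p ab * g ab.2 / p ab) =
        (∑ a, p0 a * Real.log (gh a)) + ∑ b, pT b * Real.log (g b) := by
    intro r hr1 hr2
    have e : ∀ ab : Fin N × Fin N, r ab * Real.log (gh ab.1 * p ab * g ab.2 / p ab) =
        r ab * Real.log (gh ab.1) + r ab * Real.log (g ab.2) := by
      intro ab
      have : gh ab.1 * p ab * g ab.2 / p ab = gh ab.1 * g ab.2 := by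
        have := (hp ab).ne'
        field_simp
      rw [this, Real.log_mul (hgh _).ne' (hg _).ne', mul_add]
    simp_rw [e]
    rw [Finset.sum_add_distrib]
    congr 1
    · rw [Fintype.sum_prod_type]
      exact Finset.sum_congr rfl fun a _ => by rw [← hr1 a, Finset.sum_mul]
    · rw [Fintype.sum_prod_type_right]
      exact Finset.sum_congr rfl fun b _ => by rw [← hr2 b, Finset.sum_mul]
  have hlt : ∑ ab, (q ab * Real.log (gh ab.1 * p ab * g ab.2 / p ab) + q ab
      - gh ab.1 * p ab * g ab.2) < ∑ ab, q ab * Real.log (q ab / p ab) := by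
    obtain ⟨s, hs⟩ := Function.ne_iff.1 hne
    refine Finset.sum_lt_sum (fun ab _ => ?_)
      ⟨s, Finset.mem_univ s, sb_gibbs_term (hq s) (hpos s) (hp s) hs⟩
    by_cases h : q ab = gh ab.1 * p ab * g ab.2
    · rw [← h]; linarith
    · exact (sb_gibbs_term (hq ab) (hpos ab) (hp ab) h).le
  rw [Finset.sum_sub_distrib, Finset.sum_add_distrib, hqs, hsum, key q hq1 hq2] at hlt
  have h2 := key (fun ab => gh ab.1 * p ab * g ab.2) hm1 hm2
  unfold relEnt
  linarith
end

section
/- Let X = {1,…,N}, let T ≥ 1, let Π(t) = [π_{ij}(t)], for t = 0,…,T−1, be N×N stochastic matrices, and let p be a strictly positive probability distribution on X. Define the prior Markov distribution P on X^{T+1} by P(x_0,…,x_T) = p(x_0)·∏_{t=0}^{T−1} π_{x_t,x_{t+1}}(t), and assume the T-step transition matrix Π(0)Π(1)⋯Π(T−1) has all entries strictly positive. Let p_0, p_T be probability distributions on X and suppose there exist strictly positive functions φ(t,·), φ̂(t,·) on {0,…,T}×X satisfying, for t = 0,…,T−1, φ(t,i) = Σ_j π_{ij}(t)·φ(t+1,j)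 and φ̂(t+1,j) = Σ_i π_{ij}(t)·φ̂(t,i), with boundary conditions φ(0,i)·φ̂(0,i) = p_0(i) and φ(T,j)·φ̂(T,j) = p_T(j) for all i, j. Then the matrices Π°(t) with entries π°_{ij}(t) = π_{ij}(t)·φ(t+1,j)/φ(t,i) are stochastic, the Markov distribution Q°(x_0,…,x_T) = p_0(x_0)·∏_{t=0}^{T−1} π°_{x_t,x_{t+1}}(t) has time-0 marginal p_0 and time-T marginal p_T, and Q° is the unique minimizer of D(Q‖P) over all probability distributions Q on X^{T+1} whose time-0 marginal is p_0 and whose time-T marginal is p_T. -/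
open scoped BigOperators

/-- The relative entropy `D(Q‖P)` of probability distributions on a finite set, with values in
`EReal`: it equals `Σ_s Q(s)·log(Q(s)/P(s))` (convention `0·log 0 = 0`) when
`Supp(Q) ⊆ Supp(P)`, and `+∞` otherwise. -/
noncomputable def relEntE {α : Type*} [Fintype α] (Q P : α → ℝ) : EReal :=
  open scoped Classical in
  if ∀ s, P s = 0 → Q s = 0 then ((∑ s, Q s * Real.log (Q s / P s) : ℝ) : EReal) else ⊤


/-- Telescoping product. -/
theorem sb_telescope {T : ℕ} (h : Fin (T + 1) → ℝ) (hh : ∀ t, h t ≠ 0) :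
    (∏ t : Fin T, h t.succ / h t.castSucc) = h (Fin.last T) / h 0 := by
  have h1 := Fin.prod_univ_succ h
  have h2 := Fin.prod_univ_castSucc h
  have h3 : (∏ t : Fin T, h t.castSucc) ≠ 0 := Finset.prod_ne_zero_iff.2 (fun t _ => hh _)
  rw [Finset.prod_div_distrib, div_eq_div_iff h3 (hh 0)]
  linarith

/-- Summing the path weight backwards from the final time. -/
theorem sb_backward {N : ℕ} : ∀ {T : ℕ} (Pm : Fin T → Matrix (Fin N) (Fin N) ℝ)
    (f : Fin (T + 1) → Fin N → ℝ)
    (_ : ∀ (t : Fin T) (i : Fin N), f t.castSucc i = ∑ j, Pm t i j * f t.succ j)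
    (a : Fin N → ℝ),
    ∑ x : Fin (T + 1) → Fin N, a (x 0) * (∏ t : Fin T, Pm t (x t.castSucc) (x t.succ)) *
      f (Fin.last T) (x (Fin.last T)) = ∑ i, a i * f 0 i := by
  intro T
  induction T with
  | zero =>
    intro Pm f hf a
    rw [← (Equiv.funUnique (Fin 1) (Fin N)).symm.sum_comp]
    simp
  | succ T ih =>
    intro Pm f hf a
    have := ih (fun t => Pm t.castSucc) (fun t => f t.castSucc)
      (fun t i => by simpa using hf t.castSucc i) a
    simp only [Fin.castSucc_zero] at this
    rw [← this, ← (Fin.snocEquiv (fun _ : Fin (T + 2) => Fin N)).sum_comp, Fintype.sum_prod_type,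
      Finset.sum_comm]
    refine Finset.sum_congr rfl fun y _ => ?_
    rw [hf (Fin.last T) (y (Fin.last T)), Finset.mul_sum]
    refine Finset.sum_congr rfl fun j _ => ?_
    have h0 : (Fin.snoc y j : Fin (T + 2) → Fin N) 0 = y 0 := by
      rw [← Fin.castSucc_zero]; exact Fin.snoc_castSucc (α := fun _ => Fin N) _ _ _
    simp only [Fin.snocEquiv, Equiv.coe_fn_mk]
    rw [Fin.prod_univ_castSucc]
    simp only [← Fin.castSucc_succ, h0, Fin.snoc_castSucc, Fin.succ_last, Fin.snoc_last]
    ring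

/-- Summing the path weight forwards from the initial time. -/
theorem sb_forward {N : ℕ} : ∀ {T : ℕ} (Pm : Fin T → Matrix (Fin N) (Fin N) ℝ)
    (g : Fin (T + 1) → Fin N → ℝ)
    (_ : ∀ (t : Fin T) (j : Fin N), g t.succ j = ∑ i, Pm t i j * g t.castSucc i)
    (b : Fin N → ℝ),
    ∑ x : Fin (T + 1) → Fin N, g 0 (x 0) * (∏ t : Fin T, Pm t (x t.castSucc) (x t.succ)) *
      b (x (Fin.last T)) = ∑ j, g (Fin.last T) j * b j := by
  intro T
  induction T with
  | zero =>
    intro Pm g hg b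
    rw [← (Equiv.funUnique (Fin 1) (Fin N)).symm.sum_comp]
    simp
  | succ T ih =>
    intro Pm g hg b
    have := ih (fun t => Pm t.succ) (fun t => g t.succ)
      (fun t i => by simpa using hg t.succ i) b
    simp only [Fin.succ_last] at this
    rw [← this, ← (Fin.consEquiv (fun _ : Fin (T + 2) => Fin N)).sum_comp, Fintype.sum_prod_type,
      Finset.sum_comm]
    refine Finset.sum_congr rfl fun y _ => ?_
    rw [hg 0 (y 0), Finset.sum_mul, Finset.sum_mul]
    refine Finset.sum_congr rfl fun j _ => ?_
    simp only [Fin.consEquiv, Equiv.coe_fn_mk]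
    rw [Fin.prod_univ_succ]
    simp only [← Fin.succ_castSucc, Fin.castSucc_zero, Fin.cons_zero, Fin.cons_succ,
      ← Fin.succ_last]
    ring

/-- Strict Gibbs inequality. -/
theorem sb_gibbs {α : Type*} [Fintype α] (Q R : α → ℝ) (hQ : ∀ s, 0 ≤ Q s) (hR : ∀ s, 0 ≤ R s)
    (hac : ∀ s, R s = 0 → Q s = 0) (hs : ∑ s, Q s = ∑ s, R s) (hne : Q ≠ R) :
    0 < ∑ s, Q s * Real.log (Q s / R s) := by
  have key : ∀ s, Q s ≠ R s → Q s - R s < Q s * Real.log (Q s / R s) := by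
    intro s h
    have hRp : 0 < R s := lt_of_le_of_ne (hR s) (fun h0 => h (by rw [hac s h0.symm, ← h0]))
    rcases (hQ s).eq_or_lt with h0 | hQp
    · rw [← h0]; simpa using hRp
    · have h1 : R s / Q s ≠ 1 := by
        intro h2; rw [div_eq_one_iff_eq hQp.ne'] at h2; exact h h2.symm
      have h2 := Real.log_lt_sub_one_of_pos (div_pos hRp hQp) h1
      have h3 : Real.log (Q s / R s) = - Real.log (R s / Q s) := by
        rw [← Real.log_inv, inv_div]
      have h4 := mul_lt_mul_of_pos_left h2 hQp
      rw [mul_sub, mul_div_cancel₀ _ hQp.ne'] at h4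
      rw [h3]; linarith
  have key2 : ∀ s, Q s - R s ≤ Q s * Real.log (Q s / R s) := by
    intro s
    by_cases h : Q s = R s
    · rw [h]
      by_cases h0 : R s = 0
      · simp [h0]
      · simp [div_self h0]
    · exact (key s h).le
  obtain ⟨s, hs'⟩ := Function.ne_iff.1 hne
  have := Finset.sum_lt_sum (s := Finset.univ) (fun s _ => key2 s) ⟨s, Finset.mem_univ s, key s hs'⟩
  rw [Finset.sum_sub_distrib, hs, sub_self] at this
  exact this

theorem sb_marg {α β : Type*} [Fintype α] [Fintype β] [DecidableEq β] (e : α → β) (Q : α → ℝ)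
    (q : β → ℝ) (h : ∀ i, ∑ x ∈ Finset.univ.filter (fun x => e x = i), Q x = q i) (w : β → ℝ) :
    ∑ x, Q x * w (e x) = ∑ i, q i * w i := by
  rw [← Finset.sum_fiberwise Finset.univ e]
  refine Finset.sum_congr rfl fun i _ => ?_
  rw [← h i, Finset.sum_mul]
  refine Finset.sum_congr rfl fun x hx => ?_
  rw [(Finset.mem_filter.1 hx).2]

/-- Schrödinger bridge for a Markov chain prior: given stochastic matrices `Π(t)`, a strictly
positive initial distribution `p`, a prior Markov law `P` on paths, a strictly positive T-step
transition matrix, and strictly positive space-time harmonic functions `φ`, `φ̂` solving the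
Schrödinger system with boundary conditions given by `p_0`, `p_T`, then the twisted transition
matrices `π°_{ij}(t) = π_{ij}(t)·φ(t+1,j)/φ(t,i)` are stochastic, the Markov law `Q°` built from
them with initial distribution `p_0` has marginals `p_0` and `p_T` at times `0` and `T`, and `Q°`
is the unique minimizer of `D(Q‖P)` over probability laws with those marginals. -/
theorem schroedinger_bridge_markov {N T : ℕ} [NeZero N] (hT : 1 ≤ T)
    (Pm : Fin T → Matrix (Fin N) (Fin N) ℝ)
    (hnn : ∀ t i j, 0 ≤ Pm t i j) (hrow : ∀ t i, ∑ j, Pm t i j = 1)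
    (p : Fin N → ℝ) (hp : ∀ i, 0 < p i) (hpsum : ∑ i, p i = 1)
    (Pprior : (Fin (T + 1) → Fin N) → ℝ)
    (hPdef : ∀ x, Pprior x = p (x 0) * ∏ t : Fin T, Pm t (x t.castSucc) (x t.succ))
    (hprod : ∀ i j, 0 < (List.ofFn Pm).prod i j)
    (p0 pT : Fin N → ℝ)
    (hp0nn : ∀ i, 0 ≤ p0 i) (hp0sum : ∑ i, p0 i = 1)
    (hpTnn : ∀ j, 0 ≤ pT j) (hpTsum : ∑ j, pT j = 1)
    (f g : Fin (T + 1) → Fin N → ℝ)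
    (hf : ∀ t i, 0 < f t i) (hg : ∀ t i, 0 < g t i)
    (hfrec : ∀ (t : Fin T) (i : Fin N), f t.castSucc i = ∑ j, Pm t i j * f t.succ j)
    (hgrec : ∀ (t : Fin T) (j : Fin N), g t.succ j = ∑ i, Pm t i j * g t.castSucc i)
    (hb0 : ∀ i, f 0 i * g 0 i = p0 i)
    (hbT : ∀ j, f (Fin.last T) j * g (Fin.last T) j = pT j)
    (Qo : (Fin (T + 1) → Fin N) → ℝ)
    (hQdef : ∀ x, Qo x = p0 (x 0) *
      ∏ t : Fin T, (Pm t (x t.castSucc) (x t.succ) * f t.succ (x t.succ) /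
        f t.castSucc (x t.castSucc))) :
    (∀ t : Fin T,
      (∀ i j, 0 ≤ Pm t i j * f t.succ j / f t.castSucc i) ∧
      (∀ i, ∑ j, Pm t i j * f t.succ j / f t.castSucc i = 1)) ∧
    (∀ i, ∑ x ∈ Finset.univ.filter (fun x : Fin (T + 1) → Fin N => x 0 = i), Qo x = p0 i) ∧
    (∀ j, ∑ x ∈ Finset.univ.filter (fun x : Fin (T + 1) → Fin N => x (Fin.last T) = j), Qo x
        = pT j) ∧
    (∀ Q : (Fin (T + 1) → Fin N) → ℝ, (∀ x, 0 ≤ Q x) → (∑ x, Q x = 1) →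
      (∀ i, ∑ x ∈ Finset.univ.filter (fun x : Fin (T + 1) → Fin N => x 0 = i), Q x = p0 i) →
      (∀ j, ∑ x ∈ Finset.univ.filter
          (fun x : Fin (T + 1) → Fin N => x (Fin.last T) = j), Q x = pT j) →
      Q ≠ Qo → relEntE Qo Pprior < relEntE Q Pprior) := by
  have hQ : ∀ x, Qo x = g 0 (x 0) * (∏ t : Fin T, Pm t (x t.castSucc) (x t.succ)) *
      f (Fin.last T) (x (Fin.last T)) := by
    intro x
    rw [hQdef, ← hb0]
    simp only [mul_div_assoc]
    rw [Finset.prod_mul_distrib, sb_telescope (fun t => f t (x t)) (fun t => (hf _ _).ne')]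
    have := (hf 0 (x 0)).ne'
    field_simp
  have hm0 : ∀ i, ∑ x ∈ Finset.univ.filter (fun x : Fin (T + 1) → Fin N => x 0 = i), Qo x
      = p0 i := by
    intro i
    have := sb_backward Pm f hfrec (fun k => if k = i then g 0 k else 0)
    simp only [ite_mul, zero_mul, Finset.sum_ite_eq', Finset.mem_univ, if_true] at this
    rw [← hb0, mul_comm, ← this, Finset.sum_filter]
    simp only [hQ]
  have hmT : ∀ j, ∑ x ∈ Finset.univ.filter
      (fun x : Fin (T + 1) → Fin N => x (Fin.last T) = j), Qo x = pT j := by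
    intro j
    have := sb_forward Pm g hgrec (fun k => if k = j then f (Fin.last T) k else 0)
    simp only [mul_ite, mul_zero, Finset.sum_ite_eq', Finset.mem_univ, if_true] at this
    rw [← hbT, mul_comm, ← this, Finset.sum_filter]
    simp only [hQ]
  refine ⟨fun t => ⟨fun i j => ?_, fun i => ?_⟩, hm0, hmT, ?_⟩
  · exact div_nonneg (mul_nonneg (hnn _ _ _) (hf _ _).le) (hf _ _).le
  · rw [← Finset.sum_div, ← hfrec, div_self (hf _ _).ne']
  intro Q hQnn hQsum hQ0 hQT hne
  have hprodnn : ∀ x : Fin (T + 1) → Fin N,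
      0 ≤ ∏ t : Fin T, Pm t (x t.castSucc) (x t.succ) :=
    fun x => Finset.prod_nonneg fun t _ => hnn _ _ _
  have hQP : ∀ x, Qo x = Pprior x * ((g 0 (x 0) / p (x 0)) * f (Fin.last T) (x (Fin.last T))) := by
    intro x
    rw [hQ, hPdef]
    have := (hp (x 0)).ne'
    field_simp
  have hupos : ∀ x : Fin (T + 1) → Fin N, 0 < g 0 (x 0) / p (x 0) :=
    fun x => div_pos (hg _ _) (hp _)
  have hPo : ∀ x, Pprior x = 0 → Qo x = 0 := fun x h => by rw [hQP, h, zero_mul]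
  have hoP : ∀ x, Qo x = 0 → Pprior x = 0 := by
    intro x h
    rw [hQP] at h
    exact (mul_eq_zero.1 h).resolve_right (mul_pos (hupos x) (hf _ _)).ne'
  have hQonn : ∀ x, 0 ≤ Qo x := fun x => by
    rw [hQ]; exact mul_nonneg (mul_nonneg (hg _ _).le (hprodnn x)) (hf _ _).le
  have hQosum : ∑ x, Qo x = 1 := by
    have := sb_marg (fun x : Fin (T + 1) → Fin N => x 0) Qo p0 hm0 (fun _ => 1)
    simpa [hp0sum] using this
  unfold relEntE
  rw [if_pos hPo]
  by_cases hac : ∀ s, Pprior s = 0 → Q s = 0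
  swap
  · rw [if_neg hac]; exact EReal.coe_lt_top _
  rw [if_pos hac, EReal.coe_lt_coe_iff]
  have hgibbs := sb_gibbs Q Qo hQnn hQonn (fun s h => hac s (hoP s h))
    (hQsum.trans hQosum.symm) hne
  have hlin : ∀ R : (Fin (T + 1) → Fin N) → ℝ,
      (∀ i, ∑ x ∈ Finset.univ.filter (fun x : Fin (T + 1) → Fin N => x 0 = i), R x = p0 i) →
      (∀ j, ∑ x ∈ Finset.univ.filter
          (fun x : Fin (T + 1) → Fin N => x (Fin.last T) = j), R x = pT j) →
      (∀ s, Pprior s = 0 → R s = 0) →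
      ∑ x, R x * Real.log (R x / Pprior x) = ∑ x, R x * Real.log (R x / Qo x) +
        (∑ i, p0 i * Real.log (g 0 i / p i) + ∑ j, pT j * Real.log (f (Fin.last T) j)) := by
    intro R h0 hT' hR
    rw [← sb_marg (fun x : Fin (T + 1) → Fin N => x 0) R p0 h0 (fun i => Real.log (g 0 i / p i)),
      ← sb_marg (fun x : Fin (T + 1) → Fin N => x (Fin.last T)) R pT hT'
        (fun j => Real.log (f (Fin.last T) j)), ← Finset.sum_add_distrib,
      ← Finset.sum_add_distrib]
    refine Finset.sum_congr rfl fun x _ => ?_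
    by_cases hx : R x = 0
    · simp [hx]
    have hPx : Pprior x ≠ 0 := fun h => hx (hR x h)
    have hu := (hupos x).ne'
    have hv := (hf (Fin.last T) (x (Fin.last T))).ne'
    rw [hQP, Real.log_div hx hPx, Real.log_div hx (mul_ne_zero hPx (mul_ne_zero hu hv)),
      Real.log_mul hPx (mul_ne_zero hu hv), Real.log_mul hu hv]
    ring
  rw [hlin Q hQ0 hQT hac, hlin Qo hm0 hmT hPo]
  have hz : ∑ x, Qo x * Real.log (Qo x / Qo x) = 0 := by
    refine Finset.sum_eq_zero fun x _ => ?_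
    by_cases h : Qo x = 0
    · simp [h]
    · simp [div_self h]
  rw [hz]
  linarith
end

section
/- Let Π(t) = [π_{ij}(t)], for t = 0,…,T−1, be N×N stochastic matrices, and let φ(t,·), φ̂(t,·), for t = 0,…,T, be strictly positive vectors in ℝ^N satisfying φ(t,i) = Σ_j π_{ij}(t)·φ(t+1,j) and φ̂(t+1,j) = Σ_i π_{ij}(t)·φ̂(t,i). Define π°_{ij}(t) = π_{ij}(t)·φ(t+1,j)/φ(t,i), and define vectors q_t recursively by q_0(i) = φ(0,i)·φ̂(0,i) and q_{t+1}(j) = Σ_i q_t(i)·π°_{ij}(t). Then for every t = 0,…,T and every state i, q_t(i) = φ(t,i)·φ̂(t,i). -/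
open scoped BigOperators

/-- If `q_t` evolves from `q_0 = φ(0,·)·φ̂(0,·)` under the twisted transition matrices
`π°_{ij}(t) = π_{ij}(t)·φ(t+1,j)/φ(t,i)`, where `φ`, `φ̂` are strictly positive solutions of the
backward and forward equations for stochastic matrices `Π(t)`, then
`q_t(i) = φ(t,i)·φ̂(t,i)` for all `t` and `i`. -/
theorem bridge_marginal_factorization {N T : ℕ} (Pm : Fin T → Matrix (Fin N) (Fin N) ℝ)
    (hnn : ∀ t i j, 0 ≤ Pm t i j) (hrow : ∀ t i, ∑ j, Pm t i j = 1)
    (f g : Fin (T + 1) → Fin N → ℝ)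
    (hf : ∀ t i, 0 < f t i) (hg : ∀ t i, 0 < g t i)
    (hfrec : ∀ (t : Fin T) (i : Fin N), f t.castSucc i = ∑ j, Pm t i j * f t.succ j)
    (hgrec : ∀ (t : Fin T) (j : Fin N), g t.succ j = ∑ i, Pm t i j * g t.castSucc i)
    (q : Fin (T + 1) → Fin N → ℝ)
    (hq0 : ∀ i, q 0 i = f 0 i * g 0 i)
    (hqrec : ∀ (t : Fin T) (j : Fin N),
      q t.succ j = ∑ i, q t.castSucc i * (Pm t i j * f t.succ j / f t.castSucc i)) :
    ∀ t i, q t i = f t i * g t i := by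
  intro t
  induction t using Fin.induction with
  | zero => exact hq0
  | succ t ih =>
    intro j
    rw [hqrec, hgrec, Finset.mul_sum]
    refine Finset.sum_congr rfl fun i _ => ?_
    have h := (hf t.castSucc i).ne'
    rw [ih i]
    field_simp
end

section
/- (Sinkhorn) Let Π = [π_{ij}] be an N×N stochastic matrix with strictly positive entries. Then there exist vectors φ_0, φ_T ∈ ℝ^N with strictly positive entries such that the matrix Π° with entries π°_{ij} = π_{ij}·φ_T(j)/φ_0(i) is doubly stochastic, i.e. Σ_j π°_{ij} = 1 for all i and Σ_i π°_{ij} = 1 for all j. Moreover Π° is the unique doubly stochastic matrix of this form: if ψ_0, ψ_T are strictly positive vectors such that [π_{ij}·ψ_T(j)/ψ_0(i)] is doubly stochastic, then π_{ij}·ψ_T(j)/ψ_0(i) = π°_{ij} for all i, j. -/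
open scoped BigOperators

theorem sink_uniq {N : ℕ} (M : Fin N → Fin N → ℝ) (a b : Fin N → ℝ)
    (hM : ∀ i j, 0 < M i j) (hr : ∀ i, ∑ j, M i j = 1) (hc : ∀ j, ∑ i, M i j = 1)
    (ha : ∀ j, 0 < a j) (hb : ∀ i, 0 < b i)
    (h1 : ∀ i, ∑ j, M i j * a j = b i) (h2 : ∀ j, ∑ i, M i j * (a j / b i) = 1) :
    ∀ i j, a j = b i := by
  intro i₀ j₀
  haveI : Nonempty (Fin N) := ⟨i₀⟩
  obtain ⟨m, hm⟩ := Finite.exists_max a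
  have hbm : ∀ i, b i ≤ a m := by
    intro i
    rw [← h1 i]
    calc ∑ j, M i j * a j ≤ ∑ j, M i j * a m :=
          Finset.sum_le_sum fun j _ => mul_le_mul_of_nonneg_left (hm j) (hM i j).le
      _ = a m := by rw [← Finset.sum_mul, hr, one_mul]
  have hbeq : ∀ i, b i = a m := by
    have hz : ∑ i, M i m * (a m / b i - 1) = 0 := by
      simp only [mul_sub, mul_one, Finset.sum_sub_distrib, h2, hc, sub_self]
    have hnn : ∀ i ∈ Finset.univ, 0 ≤ M i m * (a m / b i - 1) := by
      intro i _
      refine mul_nonneg (hM i m).le ?_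
      rw [sub_nonneg, le_div_iff₀ (hb i), one_mul]
      exact hbm i
    intro i
    have h := (Finset.sum_eq_zero_iff_of_nonneg hnn).1 hz i (Finset.mem_univ i)
    have h' : a m / b i = 1 := by
      rcases mul_eq_zero.1 h with h | h
      · exact absurd h (hM i m).ne'
      · linarith
    rw [div_eq_one_iff_eq (hb i).ne'] at h'
    exact h'.symm
  have hz : ∑ j, M i₀ j * (a m - a j) = 0 := by
    simp only [mul_sub, Finset.sum_sub_distrib, h1, hbeq, ← Finset.sum_mul, hr, one_mul, sub_self]
  have hnn : ∀ j ∈ Finset.univ, 0 ≤ M i₀ j * (a m - a j) := fun j _ =>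
    mul_nonneg (hM i₀ j).le (sub_nonneg.2 (hm j))
  have h := (Finset.sum_eq_zero_iff_of_nonneg hnn).1 hz j₀ (Finset.mem_univ j₀)
  rcases mul_eq_zero.1 h with h | h
  · exact absurd h (hM i₀ j₀).ne'
  · rw [hbeq]; linarith

theorem sink_max {N : ℕ} [Nonempty (Fin N)] (P : Fin N → Fin N → ℝ) (hP : ∀ i j, 0 < P i j) :
    ∃ x : Fin N → ℝ, (∀ j, 0 < x j) ∧ ∀ y : Fin N → ℝ, (∀ j, 0 < y j) →
      (∏ j, y j) / ∏ i, ∑ j, P i j * y j ≤ (∏ j, x j) / ∏ i, ∑ j, P i j * x j := by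
  have hsum : ∀ y : Fin N → ℝ, (∀ j, 0 ≤ y j) → 0 < ∑ j, y j → ∀ i, 0 < ∑ j, P i j * y j := by
    intro y hy hs i
    obtain ⟨j, _, hj⟩ := Finset.exists_lt_of_sum_lt (s := Finset.univ) (f := fun _ => (0:ℝ)) (g := y)
      (by simpa using hs)
    exact Finset.sum_pos' (fun k _ => mul_nonneg (hP i k).le (hy k))
      ⟨j, Finset.mem_univ j, mul_pos (hP i j) hj⟩
  have hscale : ∀ y : Fin N → ℝ, (∀ j, 0 < y j) → ∃ z ∈ stdSimplex ℝ (Fin N), (∀ j, 0 < z j) ∧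
      (∏ j, y j) / ∏ i, ∑ j, P i j * y j = (∏ j, z j) / ∏ i, ∑ j, P i j * z j := by
    intro y hy
    have hs : 0 < ∑ j, y j := Finset.sum_pos (fun j _ => hy j) Finset.univ_nonempty
    set c := (∑ j, y j)⁻¹ with hc
    have hcp : 0 < c := inv_pos.2 hs
    refine ⟨fun j => c * y j, ⟨fun j => (mul_pos hcp (hy j)).le, ?_⟩,
      fun j => mul_pos hcp (hy j), ?_⟩
    · rw [← Finset.mul_sum, hc, inv_mul_cancel₀ hs.ne']
    · simp only [mul_left_comm _ c, ← Finset.mul_sum, Finset.prod_mul_distrib]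
      rw [mul_div_mul_left]
      exact Finset.prod_ne_zero_iff.2 fun _ _ => hcp.ne'
  obtain ⟨z, hz, hzp, _⟩ := hscale (fun _ => 1) (fun _ => one_pos)
  have hden : ∀ y ∈ stdSimplex ℝ (Fin N), 0 < ∏ i, ∑ j, P i j * y j := fun y hy =>
    Finset.prod_pos fun i _ => hsum y hy.1 (by rw [hy.2]; exact one_pos) i
  obtain ⟨x, hx, hmax⟩ := (isCompact_stdSimplex ℝ (Fin N)).exists_isMaxOn ⟨z, hz⟩
    (f := fun y => (∏ j, y j) / ∏ i, ∑ j, P i j * y j)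
    (ContinuousOn.div (by fun_prop) (by fun_prop) fun y hy => (hden y hy).ne')
  refine ⟨x, ?_, ?_⟩
  · have h1 : 0 < (∏ j, z j) / ∏ i, ∑ j, P i j * z j :=
      div_pos (Finset.prod_pos fun j _ => hzp j) (hden z hz)
    have h2 : 0 < (∏ j, x j) / ∏ i, ∑ j, P i j * x j := h1.trans_le (hmax hz)
    intro j
    refine lt_of_le_of_ne (hx.1 j) fun h => ?_
    rw [Finset.prod_eq_zero (Finset.mem_univ j) h.symm, zero_div] at h2
    exact lt_irrefl _ h2
  · intro y hy
    obtain ⟨w, hw, _, he⟩ := hscale y hy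
    rw [he]
    exact hmax hw

theorem sink_exists {N : ℕ} [Nonempty (Fin N)] (P : Fin N → Fin N → ℝ) (hP : ∀ i j, 0 < P i j) :
    ∃ x : Fin N → ℝ, (∀ j, 0 < x j) ∧ ∀ k, ∑ i, P i k / (∑ j, P i j * x j) = 1 / x k := by
  obtain ⟨x, hx, hmax⟩ := sink_max P hP
  refine ⟨x, hx, fun k => ?_⟩
  have hS : ∀ y : Fin N → ℝ, (∀ j, 0 < y j) → ∀ i, 0 < ∑ j, P i j * y j := fun y hy i =>
    Finset.sum_pos (fun j _ => mul_pos (hP i j) (hy j)) Finset.univ_nonempty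
  let h : ℝ → ℝ := fun t => Real.log (x k + t) - ∑ i, Real.log ((∑ j, P i j * x j) + t * P i k)
  have hloc : IsLocalMax h 0 := by
    have hev : ∀ᶠ t : ℝ in nhds 0, -x k < t := lt_mem_nhds (by linarith [hx k])
    filter_upwards [hev] with t ht
    have hxt : 0 < x k + t := by linarith
    let y := Function.update x k (x k + t)
    have hy : ∀ j, 0 < y j := by
      intro j
      by_cases hj : j = k
      · subst hj; simpa [y] using hxt
      · simpa [y, hj] using hx j
    have hsy : ∀ i, ∑ j, P i j * y j = (∑ j, P i j * x j) + t * P i k := by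
      intro i
      have : ∀ j, P i j * y j = P i j * x j + if j = k then t * P i k else 0 := by
        intro j
        by_cases hj : j = k
        · subst hj; simp [y]; ring
        · simp [y, hj]
      simp [this, Finset.sum_add_distrib]
    have hlog : ∀ z : Fin N → ℝ, (∀ j, 0 < z j) →
        Real.log ((∏ j, z j) / ∏ i, ∑ j, P i j * z j) =
          ∑ j, Real.log (z j) - ∑ i, Real.log (∑ j, P i j * z j) := by
      intro z hz
      rw [Real.log_div (Finset.prod_ne_zero_iff.2 fun j _ => (hz j).ne')
        (Finset.prod_ne_zero_iff.2 fun i _ => (hS z hz i).ne'),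
        Real.log_prod fun j _ => (hz j).ne', Real.log_prod fun i _ => (hS z hz i).ne']
    have hle := Real.log_le_log (div_pos (Finset.prod_pos fun j _ => hy j)
      (Finset.prod_pos fun i _ => hS y hy i)) (hmax y hy)
    rw [hlog y hy, hlog x hx] at hle
    have hly : ∑ j, Real.log (y j) = ∑ j, Real.log (x j) + (Real.log (x k + t) - Real.log (x k)) := by
      have : ∀ j, Real.log (y j) = Real.log (x j) +
          if j = k then (Real.log (x k + t) - Real.log (x k)) else 0 := by
        intro j
        by_cases hj : j = k
        · subst hj; simp [y]
        · simp [y, hj]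
      simp [this, Finset.sum_add_distrib]
    simp only [hsy, hly] at hle
    simp only [h, add_zero, zero_mul]
    linarith
  have hder : HasDerivAt h (1 / (x k + 0) - ∑ i, P i k / ((∑ j, P i j * x j) + 0 * P i k)) 0 := by
    refine HasDerivAt.sub ?_ (HasDerivAt.fun_sum fun i _ => ?_)
    · exact ((hasDerivAt_id (0:ℝ)).const_add (x k)).log (by simpa using (hx k).ne')
    · have := (((hasDerivAt_id (0:ℝ)).mul_const (P i k)).const_add (∑ j, P i j * x j)).log
        (by simpa using (hS x hx i).ne')
      simpa using this
  have := hloc.hasDerivAt_eq_zero hder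
  simp only [add_zero, zero_mul] at this
  linarith

/-- (Sinkhorn) Every `N×N` stochastic matrix with strictly positive entries can be transformed
into a doubly stochastic matrix by a multiplicative transformation
`π°_{ij} = π_{ij}·φ_T(j)/φ_0(i)` with strictly positive vectors `φ_0`, `φ_T`; moreover the
resulting doubly stochastic matrix is unique among matrices of this form. -/
theorem sinkhorn {N : ℕ} (Pm : Matrix (Fin N) (Fin N) ℝ)
    (hpos : ∀ i j, 0 < Pm i j) (hrow : ∀ i, ∑ j, Pm i j = 1) :
    ∃ f0 fT : Fin N → ℝ, (∀ i, 0 < f0 i) ∧ (∀ j, 0 < fT j) ∧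
      (∀ i, ∑ j, Pm i j * fT j / f0 i = 1) ∧
      (∀ j, ∑ i, Pm i j * fT j / f0 i = 1) ∧
      (∀ g0 gT : Fin N → ℝ, (∀ i, 0 < g0 i) → (∀ j, 0 < gT j) →
        (∀ i, ∑ j, Pm i j * gT j / g0 i = 1) →
        (∀ j, ∑ i, Pm i j * gT j / g0 i = 1) →
        ∀ i j, Pm i j * gT j / g0 i = Pm i j * fT j / f0 i) := by
  rcases isEmpty_or_nonempty (Fin N) with hN | hN
  · exact ⟨fun _ => 1, fun _ => 1, fun _ => one_pos, fun _ => one_pos, fun i => hN.elim i,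
      fun i => hN.elim i, fun _ _ _ _ _ _ i => hN.elim i⟩
  obtain ⟨x, hx, hk⟩ := sink_exists Pm hpos
  have hS : ∀ i, 0 < ∑ j, Pm i j * x j := fun i =>
    Finset.sum_pos (fun j _ => mul_pos (hpos i j) (hx j)) Finset.univ_nonempty
  have hr : ∀ i, ∑ j, Pm i j * x j / (∑ l, Pm i l * x l) = 1 := by
    intro i
    rw [← Finset.sum_div, div_self (hS i).ne']
  have hc : ∀ j, ∑ i, Pm i j * x j / (∑ l, Pm i l * x l) = 1 := by
    intro j
    have : ∀ i, Pm i j * x j / (∑ l, Pm i l * x l) = Pm i j / (∑ l, Pm i l * x l) * x j :=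
      fun i => by ring
    simp only [this]
    rw [← Finset.sum_mul, hk, one_div, inv_mul_cancel₀ (hx j).ne']
  refine ⟨fun i => ∑ j, Pm i j * x j, x, hS, hx, hr, hc, ?_⟩
  intro g0 gT hg0 hgT hgr hgc
  set s : Fin N → ℝ := fun i => ∑ j, Pm i j * x j with hs
  have key := sink_uniq (fun i j => Pm i j * x j / s i) (fun j => gT j / x j)
    (fun i => g0 i / s i) (fun i j => div_pos (mul_pos (hpos i j) (hx j)) (hS i)) hr hc
    (fun j => div_pos (hgT j) (hx j)) (fun i => div_pos (hg0 i) (hS i)) ?_ ?_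
  · intro i j
    have h := key i j
    have h1 : s i ≠ 0 := (hS i).ne'
    have h2 := (hx j).ne'
    have h3 := (hg0 i).ne'
    change Pm i j * gT j / g0 i = Pm i j * x j / s i
    rw [div_eq_div_iff h2 h1] at h
    rw [div_eq_div_iff h3 h1]
    linear_combination Pm i j * h
  · intro i
    have h1 : s i ≠ 0 := (hS i).ne'
    have h3 := (hg0 i).ne'
    have : ∀ j, Pm i j * x j / s i * (gT j / x j) = Pm i j * gT j / g0 i * (g0 i / s i) := by
      intro j
      have h2 := (hx j).ne'
      field_simp
    simp only [this]
    rw [← Finset.sum_mul, hgr, one_mul]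
  · intro j
    rw [← hgc j]
    refine Finset.sum_congr rfl fun i _ => ?_
    have h1 : s i ≠ 0 := (hS i).ne'
    have h3 := (hg0 i).ne'
    have h2 := (hx j).ne'
    field_simp
end

section
/- Let X and Y be n×n Hermitian positive definite complex matrices. Then matrix inversion is an isometry of the Hilbert projective metric on the cone of Hermitian positive definite matrices: d_H(X^{-1}, Y^{-1}) = d_H(X, Y). -/
open Matrix
open scoped ComplexOrder

/-- The Hilbert projective metric on Hermitian positive definite `n×n` complex matrices:
`d_H(X,Y) = log(M(X,Y)/m(X,Y))` with `M(X,Y) = inf{λ : λY − X ⪰ 0}` and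
`m(X,Y) = sup{λ : X − λY ⪰ 0}`. -/
noncomputable def dHmat {n : ℕ} (X Y : Matrix (Fin n) (Fin n) ℂ) : ℝ :=
  Real.log (sInf {l : ℝ | ((l : ℂ) • Y - X).PosSemidef} /
    sSup {l : ℝ | (X - (l : ℂ) • Y).PosSemidef})

theorem real_aux (S T : Set ℝ) (h0 : (0:ℝ) ∈ S) (hT : ∀ l ∈ T, 0 < l)
    (h : ∀ l : ℝ, 0 < l → (l ∈ T ↔ l⁻¹ ∈ S)) : sInf T = (sSup S)⁻¹ := by
  have hTb : BddBelow T := ⟨0, fun l hl => (hT l hl).le⟩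
  rcases T.eq_empty_or_nonempty with rfl | ⟨t, ht⟩
  · have : IsGreatest S 0 := ⟨h0, fun s hs => by
      by_contra hc
      push Not at hc
      have := (h s⁻¹ (inv_pos.2 hc)).2 (by simpa using hs)
      simp at this⟩
    rw [this.csSup_eq]; simp
  · by_cases hb : BddAbove S
    · have hp : 0 < sSup S :=
        lt_of_lt_of_le (inv_pos.2 (hT t ht)) (le_csSup hb ((h t (hT t ht)).1 ht))
      refine IsGLB.csInf_eq ⟨fun l hl => ?_, fun b hbd => ?_⟩ ⟨t, ht⟩
      · exact inv_le_of_inv_le₀ (hT l hl) (le_csSup hb ((h l (hT l hl)).1 hl))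
      · rcases le_or_gt b 0 with hb0 | hb0
        · exact hb0.trans (inv_pos.2 hp).le
        · rw [le_inv_comm₀ hb0 hp]
          refine csSup_le ⟨0, h0⟩ fun s hs => ?_
          rcases le_or_gt s 0 with hs0 | hs0
          · exact hs0.trans (inv_pos.2 hb0).le
          · rw [le_inv_comm₀ hs0 hb0]
            exact hbd ((h s⁻¹ (inv_pos.2 hs0)).2 (by simpa using hs))
    · rw [Real.sSup_of_not_bddAbove hb, _root_.inv_zero]
      apply le_antisymm
      · refine le_of_forall_pos_le_add fun e he => ?_
        rw [not_bddAbove_iff] at hb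
        obtain ⟨s, hs, hse⟩ := hb e⁻¹
        have hs0 : 0 < s := (inv_pos.2 he).trans hse
        have := csInf_le hTb ((h s⁻¹ (inv_pos.2 hs0)).2 (by simpa using hs))
        have := inv_le_of_inv_le₀ he hse.le
        linarith
      · exact Real.sInf_nonneg fun l hl => (hT l hl).le

theorem loewner_inv {n : ℕ} {A B : Matrix (Fin n) (Fin n) ℂ} (hA : A.PosDef) (hB : B.PosDef) :
    (B⁻¹ - A⁻¹).PosSemidef ↔ (A - B).PosSemidef := by
  have : Invertible A := hA.isUnit.invertible
  have : Invertible B⁻¹ := hB.inv.isUnit.invertible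
  have h1 := PosDef.fromBlocks₁₁ (1 : Matrix (Fin n) (Fin n) ℂ) B⁻¹ hA
  have h2 := PosDef.fromBlocks₂₂ A (1 : Matrix (Fin n) (Fin n) ℂ) hB.inv
  have hd : IsUnit B.det := (Matrix.isUnit_iff_isUnit_det B).1 hB.isUnit
  simp only [conjTranspose_one, one_mul, mul_one, Matrix.nonsing_inv_nonsing_inv B hd] at h1 h2
  exact h1.symm.trans h2

theorem sInf_eq_inv {n : ℕ} [NeZero n] {X Y : Matrix (Fin n) (Fin n) ℂ}
    (hX : X.PosDef) (hY : Y.PosDef) :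
    sInf {l : ℝ | ((l : ℂ) • Y⁻¹ - X⁻¹).PosSemidef} =
      (sSup {l : ℝ | (X - (l : ℂ) • Y).PosSemidef})⁻¹ := by
  apply real_aux
  · simpa using hX.posSemidef
  · intro l hl
    by_contra hc
    push Not at hc
    have h1 := (show ((l : ℂ) • Y⁻¹ - X⁻¹).PosSemidef from hl).diag_nonneg (i := (0 : Fin n))
    have h2 := hX.inv.diag_pos (i := (0 : Fin n))
    have h3 := hY.inv.diag_pos (i := (0 : Fin n))
    simp only [Matrix.sub_apply, Matrix.smul_apply, smul_eq_mul, Complex.le_def, Complex.lt_def] at h1 h2 h3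
    simp at h1 h2 h3
    nlinarith [h1.1, h2.1, h3.1]
  · intro l hl
    have hl' : (0 : ℂ) < ((l⁻¹ : ℝ) : ℂ) := by exact_mod_cast inv_pos.2 hl
    have hB : (((l⁻¹ : ℝ) : ℂ) • Y).PosDef := hY.smul hl'
    have e : (((l⁻¹ : ℝ) : ℂ) • Y)⁻¹ = (l : ℂ) • Y⁻¹ := by
      have hd : IsUnit Y.det := (Matrix.isUnit_iff_isUnit_det Y).1 hY.isUnit
      apply Matrix.inv_eq_right_inv
      have : (l : ℂ) ≠ 0 := by exact_mod_cast hl.ne'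
      rw [Matrix.smul_mul, Matrix.mul_smul, Matrix.mul_nonsing_inv Y hd, smul_smul,
        Complex.ofReal_inv, inv_mul_cancel₀ this, one_smul]
    have := loewner_inv hX hB
    rw [e] at this
    exact this

/-- Matrix inversion is an isometry of the Hilbert projective metric on the cone of Hermitian
positive definite matrices. -/
theorem hilbert_metric_matrix_inv_isometry {n : ℕ} (X Y : Matrix (Fin n) (Fin n) ℂ)
    (hX : X.PosDef) (hY : Y.PosDef) :
    dHmat X⁻¹ Y⁻¹ = dHmat X Y := by
  rcases Nat.eq_zero_or_pos n with rfl | hn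
  · rw [Subsingleton.elim X⁻¹ X, Subsingleton.elim Y⁻¹ Y]
  · have : NeZero n := ⟨hn.ne'⟩
    have h1 := sInf_eq_inv hX hY
    have h2 := sInf_eq_inv hX.inv hY.inv
    rw [Matrix.nonsing_inv_nonsing_inv X ((Matrix.isUnit_iff_isUnit_det X).1 hX.isUnit),
      Matrix.nonsing_inv_nonsing_inv Y ((Matrix.isUnit_iff_isUnit_det Y).1 hY.isUnit)] at h2
    unfold dHmat
    rw [h1, h2, div_eq_mul_inv, div_eq_mul_inv, mul_comm]
end

section
/- Let E_1,…,E_m be n×n complex matrices with Σ_{i=1}^m E_i† E_i = I, and suppose the Kraus map ρ ↦ Σ_{i=1}^m E_i ρ E_i† is positivity improving. Let E denote its adjoint, E(X) = Σ_{i=1}^m E_i† X E_i (so E(I) = I). Then E maps Hermitian positive definite matrices to Hermitian positive definite matrices and its projective diameter is finite: sup{d_H(E(X), E(Y)) : X, Y n×n Hermitian positive definite} < ∞. -/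
open Matrix
open scoped ComplexOrder

/-- For a positivity improving family, the quadratic sums are positive. -/
lemma kr_pos {n m : ℕ} (E : Fin m → Matrix (Fin n) (Fin n) ℂ)
    (himp : ∀ ρ : Matrix (Fin n) (Fin n) ℂ, ρ.PosSemidef → ρ ≠ 0 →
      (∑ i, E i * ρ * (E i)ᴴ).PosDef) (v w : Fin n → ℂ) (hv : v ≠ 0) (hw : w ≠ 0) :
    0 < ∑ i, ‖w ⬝ᵥ (E i *ᵥ v)‖ ^ 2 := by
  have h1 : vecMulVec v (star v) ≠ 0 := by
    intro h
    apply hv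
    funext j
    have := congrFun (congrFun h j) j
    simpa [vecMulVec_apply] using this
  have h2 := (himp _ (posSemidef_vecMulVec_self_star v) h1).dotProduct_mulVec_pos
    (x := star w) (by simpa using hw)
  have h3 : star (star w) ⬝ᵥ ((∑ i, E i * vecMulVec v (star v) * (E i)ᴴ) *ᵥ star w)
      = ((∑ i, ‖w ⬝ᵥ (E i *ᵥ v)‖ ^ 2 : ℝ) : ℂ) := by
    rw [star_star, sum_mulVec, dotProduct_sum]
    push_cast
    refine Finset.sum_congr rfl fun i _ => ?_
    rw [← Complex.mul_conj', mul_vecMulVec, vecMulVec_mul, vecMulVec_mulVec, ← star_mulVec,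
      dotProduct_smul]
    simp [dotProduct_comm]
    left
    simpa [dotProduct_comm] using (star_dotProduct_star w (E i *ᵥ v))
  rw [h3] at h2
  exact_mod_cast h2

lemma kr_bounds {n m : ℕ} (E : Fin m → Matrix (Fin n) (Fin n) ℂ)
    (himp : ∀ ρ : Matrix (Fin n) (Fin n) ℂ, ρ.PosSemidef → ρ ≠ 0 →
      (∑ i, E i * ρ * (E i)ᴴ).PosDef) :
    ∃ c C : ℝ, 0 < c ∧ 0 < C ∧ ∀ v w : Fin n → ℂ,
      c * (∑ j, ‖w j‖ ^ 2) * (∑ j, ‖v j‖ ^ 2) ≤ ∑ i, ‖w ⬝ᵥ (E i *ᵥ v)‖ ^ 2 ∧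
      ∑ i, ‖w ⬝ᵥ (E i *ᵥ v)‖ ^ 2 ≤ C * (∑ j, ‖w j‖ ^ 2) * (∑ j, ‖v j‖ ^ 2) := by
  rcases Nat.eq_zero_or_pos n with rfl | hn
  · exact ⟨1, 1, one_pos, one_pos, fun v w => by simp⟩
  let f : (EuclideanSpace ℂ (Fin n)) × (EuclideanSpace ℂ (Fin n)) → ℝ := fun p => ∑ i, ‖p.2.ofLp ⬝ᵥ (E i *ᵥ p.1.ofLp)‖ ^ 2
  have hf : Continuous f := by
    simp only [f, dotProduct, mulVec]
    fun_prop
  let K : Set ((EuclideanSpace ℂ (Fin n)) × (EuclideanSpace ℂ (Fin n))) := Metric.sphere 0 1 ×ˢ Metric.sphere 0 1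
  have hK : IsCompact K := (isCompact_sphere _ _).prod (isCompact_sphere _ _)
  have hKn : K.Nonempty := by
    have : Nonempty (Fin n) := ⟨⟨0, hn⟩⟩
    have : (Metric.sphere (0 : EuclideanSpace ℂ (Fin n)) 1).Nonempty := by
      refine ⟨EuclideanSpace.single ⟨0, hn⟩ 1, by simp⟩
    exact this.prod this
  obtain ⟨p, hp, hpm⟩ := hK.exists_isMinOn hKn hf.continuousOn
  obtain ⟨q, hq, hqm⟩ := hK.exists_isMaxOn hKn hf.continuousOn
  have hpos : ∀ p ∈ K, 0 < f p := by
    rintro ⟨a, b⟩ ⟨ha, hb⟩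
    apply kr_pos E himp
    · rintro h
      have : a = 0 := by ext j; simpa using congrFun h j
      simp [this] at ha
    · rintro h
      have : b = 0 := by ext j; simpa using congrFun h j
      simp [this] at hb
  refine ⟨f p, f q, hpos p hp, hpos q hq, fun v w => ?_⟩
  by_cases hv : v = 0
  · simp [hv]
  by_cases hw : w = 0
  · simp [hw]
  let a : EuclideanSpace ℂ (Fin n) := WithLp.toLp 2 v
  let b : EuclideanSpace ℂ (Fin n) := WithLp.toLp 2 w
  have ha : a ≠ 0 := fun h => hv (by simpa [a] using h)
  have hb : b ≠ 0 := fun h => hw (by simpa [b] using h)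
  have ha' : 0 < ‖a‖ := norm_pos_iff.2 ha
  have hb' : 0 < ‖b‖ := norm_pos_iff.2 hb
  have hNa : ∑ j, ‖v j‖ ^ 2 = ‖a‖ ^ 2 := by rw [EuclideanSpace.norm_sq_eq]
  have hNb : ∑ j, ‖w j‖ ^ 2 = ‖b‖ ^ 2 := by rw [EuclideanSpace.norm_sq_eq]
  let r : (EuclideanSpace ℂ (Fin n)) × (EuclideanSpace ℂ (Fin n)) := (((‖a‖⁻¹ : ℝ) : ℂ) • a, ((‖b‖⁻¹ : ℝ) : ℂ) • b)
  have hr : r ∈ K := by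
    constructor
    · simp [r, norm_smul, ha'.ne']
    · simp [r, norm_smul, hb'.ne']
  have hfr : f r = (∑ i, ‖w ⬝ᵥ (E i *ᵥ v)‖ ^ 2) / (‖b‖ ^ 2 * ‖a‖ ^ 2) := by
    simp only [f, r, Finset.sum_div]
    refine Finset.sum_congr rfl fun i _ => ?_
    simp [a, b, mulVec_smul]
    field_simp
  have h1 : f p ≤ f r := hpm hr
  have h2 : f r ≤ f q := hqm hr
  rw [hfr] at h1 h2
  rw [hNa, hNb]
  rw [le_div_iff₀ (by positivity)] at h1
  rw [div_le_iff₀ (by positivity)] at h2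
  constructor <;> linarith

lemma kr_quad {n m : ℕ} (E : Fin m → Matrix (Fin n) (Fin n) ℂ) (B : Matrix (Fin n) (Fin n) ℂ)
    (v : Fin n → ℂ) :
    star v ⬝ᵥ ((∑ i, (E i)ᴴ * (Bᴴ * B) * E i) *ᵥ v)
      = ((∑ k, ∑ i, ‖B k ⬝ᵥ (E i *ᵥ v)‖ ^ 2 : ℝ) : ℂ) := by
  rw [Finset.sum_comm, sum_mulVec, dotProduct_sum]
  push_cast
  refine Finset.sum_congr rfl fun i _ => ?_
  have : (E i)ᴴ * (Bᴴ * B) * E i = (B * E i)ᴴ * (B * E i) := by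
    simp [conjTranspose_mul, Matrix.mul_assoc]
  rw [this, ← mulVec_mulVec, dotProduct_mulVec, vecMul_conjTranspose, star_star, ← mulVec_mulVec]
  simp only [dotProduct, Pi.star_apply]
  refine Finset.sum_congr rfl fun k _ => ?_
  rw [← Complex.conj_mul']
  rfl

lemma kr_tr {n : ℕ} (B : Matrix (Fin n) (Fin n) ℂ) :
    (Bᴴ * B).trace = ((∑ k, ∑ j, ‖B k j‖ ^ 2 : ℝ) : ℂ) := by
  rw [Finset.sum_comm]
  simp [trace, Matrix.mul_apply, Complex.conj_mul']

lemma kr_one {n : ℕ} (v : Fin n → ℂ) : star v ⬝ᵥ v = ((∑ j, ‖v j‖ ^ 2 : ℝ) : ℂ) := by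
  simp [dotProduct, Complex.conj_mul']

open scoped MatrixOrder in
lemma kr_sqrt {n : ℕ} (X : Matrix (Fin n) (Fin n) ℂ) (hX : X.PosSemidef) :
    ∃ B : Matrix (Fin n) (Fin n) ℂ, X = Bᴴ * B :=
  CStarAlgebra.nonneg_iff_eq_star_mul_self.1 hX.nonneg

lemma kr_loewner {n m : ℕ} (E : Fin m → Matrix (Fin n) (Fin n) ℂ)
    (himp : ∀ ρ : Matrix (Fin n) (Fin n) ℂ, ρ.PosSemidef → ρ ≠ 0 →
      (∑ i, E i * ρ * (E i)ᴴ).PosDef) :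
    ∃ c C : ℝ, 0 < c ∧ 0 < C ∧ ∀ X : Matrix (Fin n) (Fin n) ℂ, X.PosSemidef →
      ((∑ i, (E i)ᴴ * X * E i) - ((c * X.trace.re : ℝ) : ℂ) • 1).PosSemidef ∧
      (((C * X.trace.re : ℝ) : ℂ) • 1 - (∑ i, (E i)ᴴ * X * E i)).PosSemidef := by
  obtain ⟨c, C, hc, hC, h⟩ := kr_bounds E himp
  refine ⟨c, C, hc, hC, fun X hX => ?_⟩
  have hH : (∑ i, (E i)ᴴ * X * E i).IsHermitian :=
    (posSemidef_sum _ fun i _ => hX.conjTranspose_mul_mul_same (E i)).1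
  have hS : ∀ r : ℝ, ((r : ℂ) • (1 : Matrix (Fin n) (Fin n) ℂ)).IsHermitian := by
    intro r
    simp [IsHermitian, conjTranspose_smul]
  obtain ⟨B, rfl⟩ : ∃ B : Matrix (Fin n) (Fin n) ℂ, X = Bᴴ * B := by
    exact kr_sqrt X hX
  rw [kr_tr, Complex.ofReal_re]
  constructor
  · refine .of_dotProduct_mulVec_nonneg (hH.sub (hS _)) fun v => ?_
    rw [sub_mulVec, dotProduct_sub, kr_quad, smul_mulVec, dotProduct_smul, one_mulVec, kr_one,
      smul_eq_mul, ← Complex.ofReal_mul, ← Complex.ofReal_sub, Complex.zero_le_real, sub_nonneg,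
      Finset.mul_sum _ _ c, Finset.sum_mul]
    exact Finset.sum_le_sum fun k _ => (h v (B k)).1
  · refine .of_dotProduct_mulVec_nonneg ((hS _).sub hH) fun v => ?_
    rw [sub_mulVec, dotProduct_sub, kr_quad, smul_mulVec, dotProduct_smul, one_mulVec, kr_one,
      smul_eq_mul, ← Complex.ofReal_mul, ← Complex.ofReal_sub, Complex.zero_le_real, sub_nonneg,
      Finset.mul_sum _ _ C, Finset.sum_mul]
    exact Finset.sum_le_sum fun k _ => (h v (B k)).2

/-- Bound on the projective distance of two matrices pinched between multiples of the identity. -/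
lemma kr_dist {n : ℕ} (hn : 0 < n) (P Q : Matrix (Fin n) (Fin n) ℂ) (hP : P.PosDef)
    (hQ : Q.PosDef) (a b c d : ℝ) (ha : 0 < a) (hb : 0 < b) (hc : 0 < c) (hd : 0 < d)
    (h1 : (P - (a : ℂ) • 1).PosSemidef) (h2 : ((b : ℂ) • 1 - P).PosSemidef)
    (h3 : (Q - (c : ℂ) • 1).PosSemidef) (h4 : ((d : ℂ) • 1 - Q).PosSemidef) :
    dHmat P Q ≤ |Real.log ((b / c) / (a / d))| := by
  have : Nonempty (Fin n) := ⟨⟨0, hn⟩⟩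
  have hP' := (Complex.lt_def.1 hP.trace_pos).1
  have hQ' := (Complex.lt_def.1 hQ.trace_pos).1
  simp only [Complex.zero_re] at hP' hQ'
  have nn : ∀ r : ℝ, 0 ≤ r → (0 : ℂ) ≤ (r : ℂ) := fun r hr => Complex.zero_le_real.2 hr
  have hM : ∀ l ∈ {l : ℝ | ((l : ℂ) • Q - P).PosSemidef}, 0 ≤ l := by
    intro l hl
    have := (Complex.le_def.1 hl.trace_nonneg).1
    simp [trace_sub, trace_smul] at this
    by_contra hneg
    nlinarith
  have hm : ∀ l ∈ {l : ℝ | (P - (l : ℂ) • Q).PosSemidef}, l ≤ P.trace.re / Q.trace.re := by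
    intro l hl
    have := (Complex.le_def.1 hl.trace_nonneg).1
    simp [trace_sub, trace_smul] at this
    rwa [le_div_iff₀ hQ']
  have hM1 : b / c ∈ {l : ℝ | ((l : ℂ) • Q - P).PosSemidef} := by
    have := (h3.smul (nn (b / c) (by positivity))).add h2
    have e : ((b / c : ℝ) : ℂ) • (Q - (c : ℂ) • 1) + ((b : ℂ) • 1 - P)
        = ((b / c : ℝ) : ℂ) • Q - P := by
      rw [smul_sub, smul_smul, ← Complex.ofReal_mul, div_mul_cancel₀ _ hc.ne']
      abel
    rwa [e] at this
  have hm1 : a / d ∈ {l : ℝ | (P - (l : ℂ) • Q).PosSemidef} := by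
    have := (h4.smul (nn (a / d) (by positivity))).add h1
    have e : ((a / d : ℝ) : ℂ) • ((d : ℂ) • 1 - Q) + (P - (a : ℂ) • 1)
        = P - ((a / d : ℝ) : ℂ) • Q := by
      rw [smul_sub, smul_smul, ← Complex.ofReal_mul, div_mul_cancel₀ _ hd.ne']
      abel
    rwa [e] at this
  have k1 : sInf {l : ℝ | ((l : ℂ) • Q - P).PosSemidef} ≤ b / c := csInf_le ⟨0, hM⟩ hM1
  have k2 : a / d ≤ sSup {l : ℝ | (P - (l : ℂ) • Q).PosSemidef} := le_csSup ⟨_, hm⟩ hm1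
  have k0 : 0 ≤ sInf {l : ℝ | ((l : ℂ) • Q - P).PosSemidef} := Real.sInf_nonneg hM
  unfold dHmat
  set M := sInf {l : ℝ | ((l : ℂ) • Q - P).PosSemidef}
  set μ := sSup {l : ℝ | (P - (l : ℂ) • Q).PosSemidef}
  have had : 0 < a / d := by positivity
  rcases k0.eq_or_lt with h0 | h0
  · rw [← h0]; simp
  · refine le_trans (Real.log_le_log (div_pos h0 (had.trans_le k2)) ?_) (le_abs_self _)
    gcongr

/-- The adjoint `E(X) = Σ_i E_i† X E_i` of a positivity-improving Kraus map sends Hermitian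
positive definite matrices to Hermitian positive definite matrices, and has finite projective
diameter with respect to the Hilbert projective metric. -/
theorem kraus_adjoint_posdef_and_finite_diameter {n m : ℕ}
    (E : Fin m → Matrix (Fin n) (Fin n) ℂ)
    (hsum : ∑ i, (E i)ᴴ * E i = 1)
    (himp : ∀ ρ : Matrix (Fin n) (Fin n) ℂ, ρ.PosSemidef → ρ ≠ 0 →
      (∑ i, E i * ρ * (E i)ᴴ).PosDef) :
    (∀ X : Matrix (Fin n) (Fin n) ℂ, X.PosDef → (∑ i, (E i)ᴴ * X * E i).PosDef) ∧
    ∃ B : ℝ, ∀ X Y : Matrix (Fin n) (Fin n) ℂ, X.PosDef → Y.PosDef →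
      dHmat (∑ i, (E i)ᴴ * X * E i) (∑ i, (E i)ᴴ * Y * E i) ≤ B := by
  obtain ⟨c, C, hc, hC, h⟩ := kr_loewner E himp
  rcases Nat.eq_zero_or_pos n with rfl | hn
  · refine ⟨fun X hX => ?_, dHmat (n := 0) 0 0, fun X Y _ _ => ?_⟩
    · rwa [Subsingleton.elim (∑ i, (E i)ᴴ * X * E i) X]
    · rw [Subsingleton.elim (∑ i, (E i)ᴴ * X * E i) 0, Subsingleton.elim (∑ i, (E i)ᴴ * Y * E i) 0]
  have : Nonempty (Fin n) := ⟨⟨0, hn⟩⟩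
  have htr : ∀ X : Matrix (Fin n) (Fin n) ℂ, X.PosDef → 0 < X.trace.re := fun X hX =>
    (Complex.lt_def.1 hX.trace_pos).1
  have hpd : ∀ X : Matrix (Fin n) (Fin n) ℂ, X.PosDef → (∑ i, (E i)ᴴ * X * E i).PosDef := by
    intro X hX
    have h1 : (((c * X.trace.re : ℝ) : ℂ) • (1 : Matrix (Fin n) (Fin n) ℂ)).PosDef :=
      PosDef.one.smul (Complex.zero_lt_real.2 (mul_pos hc (htr X hX)))
    have := h1.add_posSemidef (h X hX.posSemidef).1
    rwa [add_sub_cancel] at this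
  refine ⟨hpd, |Real.log (C ^ 2 / c ^ 2)|, fun X Y hX hY => ?_⟩
  have hx := htr X hX
  have hy := htr Y hY
  have := kr_dist hn _ _ (hpd X hX) (hpd Y hY) (c * X.trace.re) (C * X.trace.re) (c * Y.trace.re)
    (C * Y.trace.re) (by positivity) (by positivity) (by positivity) (by positivity)
    (h X hX.posSemidef).1 (h X hX.posSemidef).2 (h Y hY.posSemidef).1 (h Y hY.posSemidef).2
  have e : (C * X.trace.re / (c * Y.trace.re)) / (c * X.trace.re / (C * Y.trace.re))
      = C ^ 2 / c ^ 2 := by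
    field_simp
  rwa [e] at this
end

section
/- Let E_1,…,E_m be n×n complex matrices with Σ_{i=1}^m E_i† E_i = I, let E†(ρ) = Σ_{i=1}^m E_i ρ E_i† be the associated Kraus map with adjoint E(X) = Σ_{i=1}^m E_i† X E_i, and suppose E† is positivity improving. Then the map C on Hermitian positive definite n×n matrices defined by C(X) = (E((E†(X))^{-1}))^{-1} is a strict contraction in the Hilbert projective metric: there exists 0 ≤ λ < 1 such that d_H(C(X), C(Y)) ≤ λ·d_H(X, Y) for all Hermitian positive definite X, Y. -/
open Matrix
open scoped ComplexOrder

/-- real quadratic form -/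
noncomputable def qf {n : ℕ} (A : Matrix (Fin n) (Fin n) ℂ) (v : Fin n → ℂ) : ℝ :=
  (star v ⬝ᵥ (A *ᵥ v)).re

/-- Kraus map -/
noncomputable def KT {n m : ℕ} (E : Fin m → Matrix (Fin n) (Fin n) ℂ)
    (X : Matrix (Fin n) (Fin n) ℂ) : Matrix (Fin n) (Fin n) ℂ := ∑ i, E i * X * (E i)ᴴ

/-- adjoint Kraus map -/
noncomputable def KA {n m : ℕ} (E : Fin m → Matrix (Fin n) (Fin n) ℂ)
    (X : Matrix (Fin n) (Fin n) ℂ) : Matrix (Fin n) (Fin n) ℂ := ∑ i, (E i)ᴴ * X * (E i)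

section
variable {n m : ℕ} {A B X Y : Matrix (Fin n) (Fin n) ℂ}

lemma qf_sub (A B : Matrix (Fin n) (Fin n) ℂ) (v) : qf (A - B) v = qf A v - qf B v := by
  simp [qf, sub_mulVec]

lemma qf_add (A B : Matrix (Fin n) (Fin n) ℂ) (v) : qf (A + B) v = qf A v + qf B v := by
  simp [qf, add_mulVec]

lemma qf_smul (l : ℝ) (A : Matrix (Fin n) (Fin n) ℂ) (v) :
    qf ((l : ℂ) • A) v = l * qf A v := by
  simp [qf, smul_mulVec]

lemma psd_iff_qf (hA : A.IsHermitian) : A.PosSemidef ↔ ∀ v, 0 ≤ qf A v := by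
  constructor
  · intro h v
    exact h.re_dotProduct_nonneg v
  · intro h
    refine PosSemidef.of_dotProduct_mulVec_nonneg hA fun v => ?_
    rw [Complex.nonneg_iff]
    exact ⟨h v, (hA.im_star_dotProduct_mulVec_self v).symm⟩

lemma qf_pos (hA : A.PosDef) {v : Fin n → ℂ} (hv : v ≠ 0) : 0 < qf A v :=
  hA.re_dotProduct_pos hv

lemma herm_smul (l : ℝ) (hA : A.IsHermitian) : ((l : ℂ) • A).IsHermitian := by
  rw [IsHermitian, conjTranspose_smul, hA.eq]; simp

lemma psd_sub_iff (hA : A.IsHermitian) (hB : B.IsHermitian) (l : ℝ) :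
    (A - (l : ℂ) • B).PosSemidef ↔ ∀ v, l * qf B v ≤ qf A v := by
  rw [psd_iff_qf (hA.sub (herm_smul l hB))]
  simp only [qf_sub, qf_smul, sub_nonneg]

lemma psd_sub_iff' (hA : A.IsHermitian) (hB : B.IsHermitian) (l : ℝ) :
    ((l : ℂ) • B - A).PosSemidef ↔ ∀ v, qf A v ≤ l * qf B v := by
  rw [psd_iff_qf ((herm_smul l hB).sub hA)]
  simp only [qf_sub, qf_smul, sub_nonneg]

lemma inv_anti_psd (hA : A.PosDef) (hB : B.PosDef) (h : (B - A).PosSemidef) :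
    (A⁻¹ - B⁻¹).PosSemidef := by
  have hAi := hA.inv
  have := hB.isUnit.invertible
  have := hAi.isUnit.invertible
  have h1 := PosDef.fromBlocks₁₁ (1 : Matrix (Fin n) (Fin n) ℂ) A⁻¹ hB
  have h2 := PosDef.fromBlocks₂₂ B (1 : Matrix (Fin n) (Fin n) ℂ) hAi
  have h3 : A⁻¹⁻¹ = A := nonsing_inv_nonsing_inv _ ((isUnit_iff_isUnit_det _).1 hA.isUnit)
  simp only [conjTranspose_one, one_mul, mul_one, h3] at h1 h2
  exact h1.1 (h2.2 h)

lemma csmul_inv (l : ℝ) (hl : 0 < l) (hA : A.PosDef) :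
    ((l : ℂ) • A)⁻¹ = ((l⁻¹ : ℝ) : ℂ) • A⁻¹ := by
  apply inv_eq_right_inv
  have hl' : (l : ℂ) ≠ 0 := by exact_mod_cast hl.ne'
  rw [smul_mul_smul_comm, mul_nonsing_inv _ ((isUnit_iff_isUnit_det _).1 hA.isUnit)]
  simp [hl']

lemma posDef_smul (l : ℝ) (hl : 0 < l) (hA : A.PosDef) : ((l : ℂ) • A).PosDef :=
  hA.smul (by exact_mod_cast hl)

/-- quadratic form sandwich transfers to inverses -/
lemma qf_inv_le (hA : A.PosDef) (hB : B.PosDef) (l : ℝ) (hl : 0 < l)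
    (h : ∀ v, l * qf B v ≤ qf A v) (v) : qf A⁻¹ v ≤ l⁻¹ * qf B⁻¹ v := by
  have h1 := inv_anti_psd (posDef_smul l hl hB) hA ((psd_sub_iff hA.1 hB.1 l).2 h)
  rw [csmul_inv l hl hB] at h1
  exact (psd_sub_iff' hA.inv.1 hB.inv.1 _).1 h1 v

lemma qf_inv_ge (hA : A.PosDef) (hB : B.PosDef) (l : ℝ) (hl : 0 < l)
    (h : ∀ v, qf A v ≤ l * qf B v) (v) : l⁻¹ * qf B⁻¹ v ≤ qf A⁻¹ v := by
  have h1 := inv_anti_psd hA (posDef_smul l hl hB) ((psd_sub_iff' hA.1 hB.1 l).2 h)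
  rw [csmul_inv l hl hB] at h1
  exact (psd_sub_iff hA.inv.1 hB.inv.1 _).1 h1 v

lemma qf_KA (E : Fin m → Matrix (Fin n) (Fin n) ℂ) (X) (v) :
    qf (KA E X) v = ∑ i, qf X (E i *ᵥ v) := by
  simp only [qf, KA, sum_mulVec, dotProduct_sum, Complex.re_sum]
  refine Finset.sum_congr rfl fun i _ => ?_
  rw [star_mulVec, ← mulVec_mulVec, ← mulVec_mulVec, dotProduct_mulVec]

lemma qf_KT (E : Fin m → Matrix (Fin n) (Fin n) ℂ) (X) (v) :
    qf (KT E X) v = ∑ i, qf X ((E i)ᴴ *ᵥ v) := by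
  rw [← qf_KA]; simp [KT, KA]

lemma KA_psd (E : Fin m → Matrix (Fin n) (Fin n) ℂ) (hX : X.PosSemidef) :
    (KA E X).PosSemidef :=
  posSemidef_sum _ fun i _ => hX.conjTranspose_mul_mul_same (E i)

lemma KA_pd (E : Fin m → Matrix (Fin n) (Fin n) ℂ) (hsum : ∑ i, (E i)ᴴ * E i = 1)
    (hX : X.PosDef) : (KA E X).PosDef := by
  have hp := KA_psd E hX.posSemidef
  refine PosDef.of_dotProduct_mulVec_pos hp.1 fun v hv => ?_
  rw [Complex.pos_iff]
  refine ⟨?_, (hp.1.im_star_dotProduct_mulVec_self v).symm⟩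
  change 0 < qf (KA E X) v
  rw [qf_KA]
  have : ∃ i, E i *ᵥ v ≠ 0 := by
    by_contra! h
    apply hv
    have := congrArg (· *ᵥ v) hsum
    simp [sum_mulVec, ← mulVec_mulVec, h] at this
    exact this.symm
  obtain ⟨i, hi⟩ := this
  exact Finset.sum_pos' (fun j _ => hX.posSemidef.re_dotProduct_nonneg _)
    ⟨i, Finset.mem_univ _, qf_pos hX hi⟩

lemma qf_one (v : Fin n → ℂ) : qf 1 v = ∑ i, Complex.normSq (v i) := by
  simp [qf, dotProduct, Complex.normSq_apply]

lemma trace_KT (E : Fin m → Matrix (Fin n) (Fin n) ℂ) (hsum : ∑ i, (E i)ᴴ * E i = 1) (X) :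
    (KT E X).trace = X.trace := by
  simp only [KT, trace_sum]
  calc ∑ i, (E i * X * (E i)ᴴ).trace = ∑ i, ((E i)ᴴ * E i * X).trace := by
        refine Finset.sum_congr rfl fun i _ => ?_
        rw [trace_mul_comm, ← Matrix.mul_assoc]
    _ = _ := by rw [← trace_sum, ← Matrix.sum_mul, hsum, one_mul]

lemma psd_induct (F : Matrix (Fin n) (Fin n) ℂ →+ ℝ)
    (h : ∀ u : Fin n → ℂ, 0 ≤ F (vecMulVec u (star u))) (hX : X.PosSemidef) : 0 ≤ F X := by
  obtain ⟨k, b, rfl⟩ := posSemidef_iff_eq_sum_vecMulVec.1 hX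
  rw [map_sum]
  exact Finset.sum_nonneg fun i _ => h _

lemma trace_r1 (u : Fin n → ℂ) : (vecMulVec u (star u)).trace.re = qf 1 u := by
  rw [trace_vecMulVec, qf, one_mulVec, dotProduct_comm]

lemma qf_r1 (u w : Fin n → ℂ) : qf (vecMulVec u (star u)) w = Complex.normSq (star u ⬝ᵥ w) := by
  rw [qf, vecMulVec_mulVec]
  simp only [dotProduct_smul]
  have : star w ⬝ᵥ u = star (star u ⬝ᵥ w) := by
    simp [dotProduct, mul_comm]
  rw [this]
  simp [Complex.normSq_apply]

lemma qf_le_trace (hX : X.PosSemidef) (v) : qf X v ≤ X.trace.re * qf 1 v := by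
  have := psd_induct (X := X) (AddMonoidHom.mk' (fun X => X.trace.re * qf 1 v - qf X v)
    (fun a b => by simp [qf_add]; ring)) ?_ hX
  · simpa using this
  · intro u
    simp only [AddMonoidHom.mk'_apply, sub_nonneg]
    rw [trace_r1, qf_r1, qf_one, qf_one, Complex.normSq_eq_norm_sq]
    simp only [Complex.normSq_eq_norm_sq]
    have h1 : ‖star u ⬝ᵥ v‖ ≤ ∑ i, ‖u i‖ * ‖v i‖ := by
      refine (norm_sum_le _ _).trans ?_
      simp
    calc _ ≤ (∑ i, ‖u i‖ * ‖v i‖) ^ 2 := by gcongr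
      _ ≤ _ := Finset.sum_mul_sq_le_sq_mul_sq _ _ _

lemma qf_real_smul (X : Matrix (Fin n) (Fin n) ℂ) (a : ℝ) (v) :
    qf X ((a : ℂ) • v) = a ^ 2 * qf X v := by
  simp [qf, mulVec_smul]; ring

lemma KT_r1_smul (E : Fin m → Matrix (Fin n) (Fin n) ℂ) (a : ℝ) (u : Fin n → ℂ) :
    KT E (vecMulVec ((a : ℂ) • u) (star ((a : ℂ) • u))) =
      ((a ^ 2 : ℝ) : ℂ) • KT E (vecMulVec u (star u)) := by
  have h : vecMulVec ((a : ℂ) • u) (star ((a : ℂ) • u)) =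
      ((a ^ 2 : ℝ) : ℂ) • vecMulVec u (star u) := by
    ext i j
    simp [vecMulVec_apply]
    ring
  rw [h]
  simp only [KT, Finset.smul_sum, mul_smul_comm, smul_mul_assoc]

lemma qf_one_le (v : Fin n → ℂ) : qf 1 v ≤ n * ‖v‖ ^ 2 := by
  rw [qf_one]
  calc _ ≤ ∑ i : Fin n, ‖v‖ ^ 2 := by
        refine Finset.sum_le_sum fun i _ => ?_
        rw [Complex.normSq_eq_norm_sq]
        gcongr
        exact norm_le_pi_norm v i
    _ = _ := by simp

lemma qf_one_nonneg (v : Fin n → ℂ) : 0 ≤ qf 1 v := by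
  rw [qf_one]; exact Finset.sum_nonneg fun i _ => Complex.normSq_nonneg _

lemma lower_bound_r1 (hn : 0 < n) (E : Fin m → Matrix (Fin n) (Fin n) ℂ)
    (himp : ∀ ρ : Matrix (Fin n) (Fin n) ℂ, ρ.PosSemidef → ρ ≠ 0 → (KT E ρ).PosDef) :
    ∃ c : ℝ, 0 < c ∧ ∀ u w : Fin n → ℂ,
      c * (qf 1 u * qf 1 w) ≤ qf (KT E (vecMulVec u (star u))) w := by
  have : Nonempty (Fin n) := ⟨⟨0, hn⟩⟩
  have hf : Continuous (fun p : (Fin n → ℂ) × (Fin n → ℂ) =>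
      qf (KT E (vecMulVec p.1 (star p.1))) p.2) := by
    simp only [qf_KT, qf_r1]
    unfold dotProduct mulVec dotProduct
    simp only [Complex.normSq_eq_norm_sq, Pi.star_apply]
    fun_prop
  have hK : IsCompact (Metric.sphere (0 : Fin n → ℂ) 1 ×ˢ Metric.sphere (0 : Fin n → ℂ) 1) :=
    (isCompact_sphere _ _).prod (isCompact_sphere _ _)
  have hne : (Metric.sphere (0 : Fin n → ℂ) 1).Nonempty := NormedSpace.sphere_nonempty.2 zero_le_one
  obtain ⟨⟨u0, w0⟩, ⟨hu0, hw0⟩, hmin⟩ := hK.exists_isMinOn (hne.prod hne) hf.continuousOn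
  set c0 := qf (KT E (vecMulVec u0 (star u0))) w0 with hc0
  have hu0' : u0 ≠ 0 := by rintro rfl; simp at hu0
  have hw0' : w0 ≠ 0 := by rintro rfl; simp at hw0
  have hc0p : 0 < c0 := by
    refine qf_pos (himp _ (posSemidef_vecMulVec_self_star u0) ?_) hw0'
    intro h
    have h1 := trace_r1 u0
    rw [h] at h1
    have h2 := qf_pos (PosDef.one (n := Fin n) (R := ℂ)) hu0'
    simp at h1
    linarith
  have hn' : (0 : ℝ) < n := by exact_mod_cast hn
  refine ⟨c0 / (n * n), by positivity, fun u w => ?_⟩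
  have key : c0 * (‖u‖ ^ 2 * ‖w‖ ^ 2) ≤ qf (KT E (vecMulVec u (star u))) w := by
    have hnn : 0 ≤ qf (KT E (vecMulVec u (star u))) w := by
      rw [qf_KT]
      exact Finset.sum_nonneg fun i _ =>
        (posSemidef_vecMulVec_self_star u).re_dotProduct_nonneg _
    rcases eq_or_ne u 0 with hu | hu
    · simpa [hu] using hnn
    rcases eq_or_ne w 0 with hw | hw
    · simpa [hw] using hnn
    have hu' := norm_pos_iff.2 hu
    have hw' := norm_pos_iff.2 hw
    have h1 := hmin (a := (((‖u‖⁻¹ : ℝ) : ℂ) • u, ((‖w‖⁻¹ : ℝ) : ℂ) • w))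
      (by constructor <;> simp [norm_smul, hu, hw])
    simp only [Set.mem_ofPred_eq, KT_r1_smul, qf_smul, qf_real_smul] at h1
    rw [← hc0] at h1
    calc c0 * (‖u‖ ^ 2 * ‖w‖ ^ 2) ≤ _ := mul_le_mul_of_nonneg_right h1 (by positivity)
      _ = _ := by field_simp
  refine le_trans ?_ key
  rw [div_mul_eq_mul_div, div_le_iff₀ (by positivity), mul_assoc]
  refine mul_le_mul_of_nonneg_left ?_ hc0p.le
  calc _ ≤ (n * ‖u‖ ^ 2) * (n * ‖w‖ ^ 2) :=
        mul_le_mul (qf_one_le u) (qf_one_le w) (qf_one_nonneg w) (by positivity)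
    _ = _ := by ring

lemma KT_add (E : Fin m → Matrix (Fin n) (Fin n) ℂ) (X Y) : KT E (X + Y) = KT E X + KT E Y := by
  simp [KT, mul_add, add_mul, Finset.sum_add_distrib]

lemma lower_bound (hn : 0 < n) (E : Fin m → Matrix (Fin n) (Fin n) ℂ)
    (himp : ∀ ρ : Matrix (Fin n) (Fin n) ℂ, ρ.PosSemidef → ρ ≠ 0 → (KT E ρ).PosDef) :
    ∃ c : ℝ, 0 < c ∧ c ≤ 1 / 2 ∧ ∀ X : Matrix (Fin n) (Fin n) ℂ, X.PosSemidef → ∀ v,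
      c * (X.trace.re * qf 1 v) ≤ qf (KT E X) v := by
  obtain ⟨c, hc, h⟩ := lower_bound_r1 hn E himp
  refine ⟨min c (1 / 2), by positivity, min_le_right _ _, fun X hX v => ?_⟩
  have := psd_induct (X := X) (AddMonoidHom.mk'
    (fun X => qf (KT E X) v - min c (1 / 2) * (X.trace.re * qf 1 v))
    (fun a b => by simp [qf_add, KT_add]; ring)) ?_ hX
  · simpa using this
  · intro u
    simp only [AddMonoidHom.mk'_apply, sub_nonneg]
    rw [trace_r1]
    exact (mul_le_mul_of_nonneg_right (min_le_left _ _)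
      (mul_nonneg (qf_one_nonneg _) (qf_one_nonneg _))).trans (h u v)

lemma exists_vec_ne (hn : 0 < n) : ∃ v : Fin n → ℂ, v ≠ 0 :=
  ⟨fun _ => 1, fun h => by simpa using congrFun h ⟨0, hn⟩⟩

lemma dH_le (hn : 0 < n) (hX : X.PosDef) (hY : Y.PosDef) {a b : ℝ} (ha : 0 < a)
    (h1 : ∀ v, a * qf Y v ≤ qf X v) (h2 : ∀ v, qf X v ≤ b * qf Y v) :
    dHmat X Y ≤ Real.log (b / a) := by
  obtain ⟨v, hv⟩ := exists_vec_ne hn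
  have hy := qf_pos hY hv
  unfold dHmat
  simp only [psd_sub_iff hX.1 hY.1, psd_sub_iff' hX.1 hY.1]
  have i1 : a ≤ sInf {l : ℝ | ∀ v, qf X v ≤ l * qf Y v} :=
    le_csInf ⟨b, h2⟩ fun l hl => le_of_mul_le_mul_right ((h1 v).trans (hl v)) hy
  have i2 : sInf {l : ℝ | ∀ v, qf X v ≤ l * qf Y v} ≤ b :=
    csInf_le ⟨a, fun l hl => le_of_mul_le_mul_right ((h1 v).trans (hl v)) hy⟩ h2
  have i3 : a ≤ sSup {l : ℝ | ∀ v, l * qf Y v ≤ qf X v} :=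
    le_csSup ⟨b, fun l hl => le_of_mul_le_mul_right ((hl v).trans (h2 v)) hy⟩ h1
  have p1 := ha.trans_le i1
  have p3 := ha.trans_le i3
  apply Real.log_le_log (div_pos p1 p3)
  exact div_le_div₀ (p1.le.trans i2) i2 ha i3

lemma exists_upper (hX : X.PosDef) (hY : Y.PosDef) (hn : 0 < n) :
    ∃ b : ℝ, 0 < b ∧ ∀ v, qf X v ≤ b * qf Y v := by
  have : Nonempty (Fin n) := ⟨⟨0, hn⟩⟩
  have t1 : 0 < X.trace.re := (Complex.pos_iff.1 hX.trace_pos).1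
  have t2 : 0 < Y⁻¹.trace.re := (Complex.pos_iff.1 hY.inv.trace_pos).1
  refine ⟨X.trace.re * Y⁻¹.trace.re, mul_pos t1 t2, fun v => ?_⟩
  have h1 := qf_inv_ge hY.inv PosDef.one _ t2 (fun v => qf_le_trace hY.inv.posSemidef v) v
  rw [nonsing_inv_nonsing_inv _ ((isUnit_iff_isUnit_det _).1 hY.isUnit), inv_one,
    inv_mul_le_iff₀ t2] at h1
  calc _ ≤ _ := qf_le_trace hX.posSemidef v
    _ ≤ _ := by rw [mul_assoc]; exact mul_le_mul_of_nonneg_left h1 t1.le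

lemma dH_attained (hn : 0 < n) (hX : X.PosDef) (hY : Y.PosDef) :
    ∃ a b : ℝ, 0 < a ∧ a ≤ b ∧ (∀ v, a * qf Y v ≤ qf X v) ∧ (∀ v, qf X v ≤ b * qf Y v) ∧
      dHmat X Y = Real.log (b / a) := by
  obtain ⟨v0, hv0⟩ := exists_vec_ne hn
  have hy0 := qf_pos hY hv0
  obtain ⟨b, hb, hb'⟩ := exists_upper hX hY hn
  obtain ⟨a', ha, ha'⟩ := exists_upper hY hX hn
  have ha'' : ∀ v, a'⁻¹ * qf Y v ≤ qf X v := fun v => (inv_mul_le_iff₀ ha).2 (ha' v)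
  have hd : dHmat X Y = Real.log (sInf {l : ℝ | ∀ v, qf X v ≤ l * qf Y v} /
      sSup {l : ℝ | ∀ v, l * qf Y v ≤ qf X v}) := by
    unfold dHmat
    simp only [psd_sub_iff hX.1 hY.1, psd_sub_iff' hX.1 hY.1]
  have z : ∀ Z : Matrix (Fin n) (Fin n) ℂ, qf Z 0 = 0 := fun Z => by simp [qf]
  have A1 : ∀ v, sSup {l : ℝ | ∀ v, l * qf Y v ≤ qf X v} * qf Y v ≤ qf X v := by
    intro v
    rcases eq_or_ne v 0 with rfl | hv
    · simp [z]
    rw [← le_div_iff₀ (qf_pos hY hv)]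
    exact csSup_le ⟨_, ha''⟩ fun l hl => (le_div_iff₀ (qf_pos hY hv)).2 (hl v)
  have A2 : ∀ v, qf X v ≤ sInf {l : ℝ | ∀ v, qf X v ≤ l * qf Y v} * qf Y v := by
    intro v
    rcases eq_or_ne v 0 with rfl | hv
    · simp [z]
    rw [← div_le_iff₀ (qf_pos hY hv)]
    exact le_csInf ⟨_, hb'⟩ fun l hl => (div_le_iff₀ (qf_pos hY hv)).2 (hl v)
  have A3 : a'⁻¹ ≤ sSup {l : ℝ | ∀ v, l * qf Y v ≤ qf X v} :=
    le_csSup ⟨b, fun l hl => le_of_mul_le_mul_right ((hl v0).trans (hb' v0)) hy0⟩ ha''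
  exact ⟨_, _, (inv_pos.2 ha).trans_le A3,
    le_of_mul_le_mul_right ((A1 v0).trans (A2 v0)) hy0, A1, A2, hd⟩

/-- The order-reversing steps preserve the sandwich. -/
lemma dH_C_le (hn : 0 < n) (E : Fin m → Matrix (Fin n) (Fin n) ℂ)
    (hsum : ∑ i, (E i)ᴴ * E i = 1) {P Q : Matrix (Fin n) (Fin n) ℂ}
    (hP : P.PosDef) (hQ : Q.PosDef) {a b : ℝ} (ha : 0 < a) (hb : 0 < b)
    (h1 : ∀ v, a * qf Q v ≤ qf P v) (h2 : ∀ v, qf P v ≤ b * qf Q v) :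
    dHmat (KA E P⁻¹)⁻¹ (KA E Q⁻¹)⁻¹ ≤ Real.log (b / a) := by
  have i1 := qf_inv_le hP hQ a ha h1
  have i2 := qf_inv_ge hP hQ b hb h2
  have kP := KA_pd E hsum hP.inv
  have kQ := KA_pd E hsum hQ.inv
  have j1 : ∀ v, qf (KA E P⁻¹) v ≤ a⁻¹ * qf (KA E Q⁻¹) v := fun v => by
    rw [qf_KA, qf_KA, Finset.mul_sum]; exact Finset.sum_le_sum fun i _ => i1 _
  have j2 : ∀ v, b⁻¹ * qf (KA E Q⁻¹) v ≤ qf (KA E P⁻¹) v := fun v => by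
    rw [qf_KA, qf_KA, Finset.mul_sum]; exact Finset.sum_le_sum fun i _ => i2 _
  have l1 := qf_inv_ge kP kQ _ (inv_pos.2 ha) j1
  have l2 := qf_inv_le kP kQ _ (inv_pos.2 hb) j2
  rw [inv_inv] at l1 l2
  exact dH_le hn kP.inv kQ.inv ha l1 l2

/-- Scalar estimate for moderate ratios. -/
lemma scalar_small {c D : ℝ} (hc : 0 < c) (hc2 : c ≤ 1 / 2) (hD : 1 ≤ D) (hK : D ≤ (c ^ 4)⁻¹) :
    Real.log ((1 - c) * D + c) ≤ (1 - c ^ 5) * Real.log D := by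
  have hD0 : 0 < D := by linarith
  have hp : 0 < (1 - c) * D + c := by nlinarith
  have h1 : Real.log (((1 - c) * D + c) / D) ≤ ((1 - c) * D + c) / D - 1 :=
    Real.log_le_sub_one_of_pos (by positivity)
  rw [Real.log_div hp.ne' hD0.ne'] at h1
  have h2 : Real.log D ≤ D - 1 := Real.log_le_sub_one_of_pos hD0
  have h3 : ((1 - c) * D + c) / D - 1 = - (c * (D - 1) / D) := by field_simp; ring
  have h4 : c ^ 5 * (D - 1) ≤ c * (D - 1) / D := by
    rw [le_div_iff₀ hD0]
    have h5 : c ^ 4 * D ≤ 1 := by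
      have := mul_le_mul_of_nonneg_left hK (by positivity : 0 ≤ c ^ 4)
      rwa [mul_inv_cancel₀ (by positivity)] at this
    calc c ^ 5 * (D - 1) * D = (c * (D - 1)) * (c ^ 4 * D) := by ring
      _ ≤ (c * (D - 1)) * 1 := mul_le_mul_of_nonneg_left h5 (by nlinarith)
      _ = _ := by ring
  have h6 : c ^ 5 * Real.log D ≤ c ^ 5 * (D - 1) := mul_le_mul_of_nonneg_left h2 (by positivity)
  linarith

lemma trace_mono_qf (hX : X.IsHermitian) (hY : Y.IsHermitian) {a : ℝ}
    (h : ∀ v, a * qf Y v ≤ qf X v) : a * Y.trace.re ≤ X.trace.re := by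
  have := (Complex.nonneg_iff.1 ((psd_sub_iff hX hY a).2 h).trace_nonneg).1
  simpa [trace_sub, trace_smul] using this

lemma KT_lin (E : Fin m → Matrix (Fin n) (Fin n) ℂ) (X Y) (a : ℝ) (v) :
    qf (KT E (X - (a : ℂ) • Y)) v = qf (KT E X) v - a * qf (KT E Y) v := by
  simp only [qf_KT, qf_sub, qf_smul, Finset.sum_sub_distrib, Finset.mul_sum]

lemma KT_lin' (E : Fin m → Matrix (Fin n) (Fin n) ℂ) (X Y) (a : ℝ) (v) :
    qf (KT E ((a : ℂ) • Y - X)) v = a * qf (KT E Y) v - qf (KT E X) v := by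
  simp only [qf_KT, qf_sub, qf_smul, Finset.sum_sub_distrib, Finset.mul_sum]

end

theorem kraus_main {n m : ℕ} (hn : 0 < n)
    (E : Fin m → Matrix (Fin n) (Fin n) ℂ)
    (hsum : ∑ i, (E i)ᴴ * E i = 1)
    (himp : ∀ ρ : Matrix (Fin n) (Fin n) ℂ, ρ.PosSemidef → ρ ≠ 0 → (KT E ρ).PosDef) :
    ∃ lam : ℝ, 0 ≤ lam ∧ lam < 1 ∧
      ∀ X Y : Matrix (Fin n) (Fin n) ℂ, X.PosDef → Y.PosDef →
        dHmat (KA E (KT E X)⁻¹)⁻¹ (KA E (KT E Y)⁻¹)⁻¹ ≤ lam * dHmat X Y := by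
  have : Nonempty (Fin n) := ⟨⟨0, hn⟩⟩
  obtain ⟨c, hc, hc2, hlow⟩ := lower_bound hn E himp
  have hc5 : c ^ 5 ≤ 1 / 2 := by
    calc c ^ 5 ≤ (1 / 2) ^ 5 := by gcongr
      _ ≤ 1 / 2 := by norm_num
  refine ⟨1 - c ^ 5, by linarith, by have : 0 < c ^ 5 := by positivity
                                     linarith, fun X Y hX hY => ?_⟩
  have hne : ∀ Z : Matrix (Fin n) (Fin n) ℂ, Z.PosDef → Z ≠ 0 := by
    rintro Z hZ rfl
    simpa using hZ.trace_pos
  have hP := himp X hX.posSemidef (hne X hX)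
  have hQ := himp Y hY.posSemidef (hne Y hY)
  have tX : 0 < X.trace.re := (Complex.pos_iff.1 hX.trace_pos).1
  have tY : 0 < Y.trace.re := (Complex.pos_iff.1 hY.trace_pos).1
  obtain ⟨a, b, ha, hab, h1, h2, hd⟩ := dH_attained hn hX hY
  have hb := ha.trans_le hab
  rw [hd]
  have uP : ∀ v, qf (KT E X) v ≤ X.trace.re * qf 1 v := fun v => by
    have := qf_le_trace hP.posSemidef v
    rwa [trace_KT E hsum] at this
  have uQ : ∀ v, qf (KT E Y) v ≤ Y.trace.re * qf 1 v := fun v => by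
    have := qf_le_trace hQ.posSemidef v
    rwa [trace_KT E hsum] at this
  obtain ⟨x, hx⟩ : ∃ x : ℝ, X.trace.re = x * Y.trace.re := ⟨X.trace.re / Y.trace.re, by field_simp⟩
  have hx0 : 0 < x := by rw [hx] at tX; exact pos_of_mul_pos_left tX tY.le
  have hax : a ≤ x := by
    have := trace_mono_qf hX.1 hY.1 h1
    rw [hx] at this
    exact le_of_mul_le_mul_right this tY
  have hxb : x ≤ b := by
    have := trace_mono_qf (a := b⁻¹) hY.1 hX.1 (fun v => (inv_mul_le_iff₀ hb).2 (h2 v))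
    rw [hx, inv_mul_le_iff₀ hb] at this
    exact le_of_mul_le_mul_right this tY
  have hD : 1 ≤ b / a := (one_le_div ha).2 hab
  rcases le_total (b / a) (c ^ 4)⁻¹ with hK | hK
  · have s1 : ∀ v, ((1 - c) * a + c * x) * qf (KT E Y) v ≤ qf (KT E X) v := fun v => by
      have l := hlow _ ((psd_sub_iff hX.1 hY.1 a).2 h1) v
      rw [KT_lin] at l
      have e : (X - (a : ℂ) • Y).trace.re = (x - a) * Y.trace.re := by
        simp [trace_sub, trace_smul, hx]; ring
      rw [e] at l
      have := mul_le_mul_of_nonneg_left (uQ v) (mul_nonneg hc.le (sub_nonneg.2 hax))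
      linarith
    have s2 : ∀ v, qf (KT E X) v ≤ ((1 - c) * b + c * x) * qf (KT E Y) v := fun v => by
      have l := hlow _ ((psd_sub_iff' hX.1 hY.1 b).2 h2) v
      rw [KT_lin'] at l
      have e : ((b : ℂ) • Y - X).trace.re = (b - x) * Y.trace.re := by
        simp [trace_sub, trace_smul, hx]; ring
      rw [e] at l
      have := mul_le_mul_of_nonneg_left (uQ v) (mul_nonneg hc.le (sub_nonneg.2 hxb))
      linarith
    have c1 : 0 < 1 - c := by linarith
    have pa : 0 < (1 - c) * a + c * x := by positivity
    have pb : 0 < (1 - c) * b + c * x := by positivity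
    refine (dH_C_le hn E hsum hP hQ pa pb s1 s2).trans
      (le_trans (Real.log_le_log (div_pos pb pa) ?_) (scalar_small hc hc2 hD hK))
    rw [div_le_iff₀ pa]
    have e : ((1 - c) * (b / a) + c) * ((1 - c) * a + c * x) - ((1 - c) * b + c * x)
        = (1 - c) * c * (b - a) * (x - a) / a := by field_simp; ring
    have : 0 ≤ (1 - c) * c * (b - a) * (x - a) / a := by
      have := sub_nonneg.2 hab
      have := sub_nonneg.2 hax
      positivity
    linarith
  · have s1 : ∀ v, (c * x) * qf (KT E Y) v ≤ qf (KT E X) v := fun v => by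
      have l := hlow X hX.posSemidef v
      rw [hx] at l
      have := mul_le_mul_of_nonneg_left (uQ v) (mul_nonneg hc.le hx0.le)
      linarith
    have s2 : ∀ v, qf (KT E X) v ≤ (x / c) * qf (KT E Y) v := fun v => by
      have l := hlow Y hY.posSemidef v
      have u := uP v
      rw [hx] at u
      rw [div_mul_eq_mul_div, le_div_iff₀ hc]
      have := mul_le_mul_of_nonneg_left l hx0.le
      have := mul_le_mul_of_nonneg_left u hc.le
      linarith
    refine (dH_C_le hn E hsum hP hQ (by positivity) (by positivity) s1 s2).trans ?_
    have e : x / c / (c * x) = (c ^ 2)⁻¹ := by field_simp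
    have l4 : Real.log (c ^ 4)⁻¹ ≤ Real.log (b / a) := Real.log_le_log (by positivity) hK
    have lD : 0 ≤ Real.log (b / a) := Real.log_nonneg hD
    rw [e]
    rw [Real.log_inv, Real.log_pow] at l4 ⊢
    push_cast at l4 ⊢
    have := mul_le_mul_of_nonneg_right hc5 lD
    linarith

/-- For a positivity-improving Kraus map `E†(ρ) = Σ_i E_i ρ E_i†` with adjoint
`E(X) = Σ_i E_i† X E_i`, the map `C(X) = (E((E†(X))⁻¹))⁻¹` on Hermitian positive definite
matrices is a strict contraction in the Hilbert projective metric. -/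
theorem kraus_composition_strict_contraction {n m : ℕ}
    (E : Fin m → Matrix (Fin n) (Fin n) ℂ)
    (hsum : ∑ i, (E i)ᴴ * E i = 1)
    (himp : ∀ ρ : Matrix (Fin n) (Fin n) ℂ, ρ.PosSemidef → ρ ≠ 0 →
      (∑ i, E i * ρ * (E i)ᴴ).PosDef) :
    ∃ lam : ℝ, 0 ≤ lam ∧ lam < 1 ∧
      ∀ X Y : Matrix (Fin n) (Fin n) ℂ, X.PosDef → Y.PosDef →
        dHmat ((∑ i, (E i)ᴴ * (∑ k, E k * X * (E k)ᴴ)⁻¹ * E i)⁻¹)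
            ((∑ i, (E i)ᴴ * (∑ k, E k * Y * (E k)ᴴ)⁻¹ * E i)⁻¹)
          ≤ lam * dHmat X Y := by
  rcases Nat.eq_zero_or_pos n with rfl | hn
  · refine ⟨0, le_rfl, one_pos, fun X Y _ _ => ?_⟩
    have h : ∀ Z : Matrix (Fin 0) (Fin 0) ℂ, Z.PosSemidef := fun Z => by
      rw [Subsingleton.elim Z 0]; exact PosSemidef.zero
    simp [dHmat, h]
  · exact kraus_main hn E hsum himp
end

section
/- Let E_1,…,E_m be n×n complex matrices with Σ_{i=1}^m E_i† E_i = I, let E†(ρ) = Σ_{i=1}^m E_i ρ E_i† be the associated Kraus map with adjoint E(X) = Σ_{i=1}^m E_i† X E_i, and suppose E† is positivity improving. Then there exist n×n Hermitian positive definite matrices φ_0 and φ_T such that E(φ_T) = φ_0 and E†(φ_0^{-1}) = φ_T^{-1}; moreover the pair (φ_0, φ_T) is unique up to multiplication of both matrices by a common positive constant. -/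
open Matrix
open scoped ComplexOrder

namespace QSink

open scoped Matrix.Norms.L2Operator MatrixOrder

variable {n m : ℕ}

/-- The adjoint map. -/
noncomputable def Phi (E : Fin m → Matrix (Fin n) (Fin n) ℂ) (X : Matrix (Fin n) (Fin n) ℂ) :
    Matrix (Fin n) (Fin n) ℂ := ∑ i, (E i)ᴴ * X * E i

/-- The Kraus map. -/
noncomputable def Psi (E : Fin m → Matrix (Fin n) (Fin n) ℂ) (X : Matrix (Fin n) (Fin n) ℂ) :
    Matrix (Fin n) (Fin n) ℂ := ∑ i, E i * X * (E i)ᴴ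

/-- The Sinkhorn iteration. -/
noncomputable def F (E : Fin m → Matrix (Fin n) (Fin n) ℂ) (X : Matrix (Fin n) (Fin n) ℂ) :
    Matrix (Fin n) (Fin n) ℂ := (Psi E (Phi E X)⁻¹)⁻¹

variable (E : Fin m → Matrix (Fin n) (Fin n) ℂ)

lemma Phi_smul (c : ℂ) (X : Matrix (Fin n) (Fin n) ℂ) : Phi E (c • X) = c • Phi E X := by
  simp [Phi, Finset.smul_sum]

lemma Psi_smul (c : ℂ) (X : Matrix (Fin n) (Fin n) ℂ) : Psi E (c • X) = c • Psi E X := by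
  simp [Psi, Finset.smul_sum]

lemma Phi_sub (X Y : Matrix (Fin n) (Fin n) ℂ) : Phi E (X - Y) = Phi E X - Phi E Y := by
  simp [Phi, mul_sub, sub_mul]

lemma Psi_sub (X Y : Matrix (Fin n) (Fin n) ℂ) : Psi E (X - Y) = Psi E X - Psi E Y := by
  simp [Psi, mul_sub, sub_mul]

lemma Phi_cont : Continuous (Phi E) := by
  unfold Phi; fun_prop

lemma Psi_cont : Continuous (Psi E) := by
  unfold Psi; fun_prop

lemma trace_adj (X W : Matrix (Fin n) (Fin n) ℂ) :
    (X * Psi E W).trace = (Phi E X * W).trace := by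
  simp only [Psi, Phi, Finset.mul_sum, Finset.sum_mul, trace_sum]
  refine Finset.sum_congr rfl fun i _ => ?_
  rw [← mul_assoc, trace_mul_comm]
  simp only [mul_assoc]

lemma inv_smul' (c : ℂ) (hc : c ≠ 0) {A : Matrix (Fin n) (Fin n) ℂ} (hA : A.PosDef) :
    (c • A)⁻¹ = c⁻¹ • A⁻¹ := by
  have hd : IsUnit A.det := (isUnit_iff_isUnit_det A).1 hA.isUnit
  apply inv_eq_left_inv
  simp [smul_smul, hc, nonsing_inv_mul A hd]

lemma inv_anti {A B : Matrix (Fin n) (Fin n) ℂ} (hA : A.PosDef) (hB : B.PosDef)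
    (h : (B - A).PosDef) : (A⁻¹ - B⁻¹).PosDef := by
  have hdA : IsUnit A.det := (isUnit_iff_isUnit_det A).1 hA.isUnit
  have hdB : IsUnit B.det := (isUnit_iff_isUnit_det B).1 hB.isUnit
  have h1 : ((B - A) + (B - A)ᴴ * A⁻¹ * (B - A)).PosDef :=
    h.add_posSemidef (hA.inv.posSemidef.conjTranspose_mul_mul_same _)
  have e : A⁻¹ - B⁻¹ = star B⁻¹ * ((B - A) + (B - A)ᴴ * A⁻¹ * (B - A)) * B⁻¹ := by
    rw [h.isHermitian.eq, star_eq_conjTranspose, hB.inv.isHermitian.eq]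
    have : (B - A) + (B - A) * A⁻¹ * (B - A) = B * A⁻¹ * B - B := by
      simp only [sub_mul, mul_sub, mul_nonsing_inv A hdA, one_mul]
      rw [mul_assoc B A⁻¹ A, nonsing_inv_mul A hdA, mul_one]
      abel
    rw [this, mul_sub, sub_mul, nonsing_inv_mul B hdB, mul_assoc B, ← mul_assoc B⁻¹,
      nonsing_inv_mul B hdB, one_mul, one_mul, mul_assoc, mul_nonsing_inv B hdB, mul_one]
  rw [e]
  exact (Matrix.IsUnit.posDef_star_left_conjugate_iff hB.inv.isUnit).2 h1

lemma lower {A : Matrix (Fin n) (Fin n) ℂ} (hA : A.PosDef) :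
    ∃ r : ℝ, 0 < r ∧ (A - (r : ℂ) • 1).PosSemidef := by
  rcases subsingleton_or_nontrivial (Matrix (Fin n) (Fin n) ℂ) with hs | hs
  · refine ⟨1, one_pos, ?_⟩
    rw [Subsingleton.elim (A - _) 0]
    exact PosSemidef.zero
  have h := (CFC.exists_pos_algebraMap_le_iff (A := Matrix (Fin n) (Fin n) ℂ)
    (a := A) hA.isHermitian).2 (by
      intro x hx
      exact (isStrictlyPositive_iff_posDef.2 hA).spectrum_pos hx)
  obtain ⟨r, hr, h⟩ := h
  refine ⟨r, hr, ?_⟩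
  have := le_iff.1 h
  simpa [Algebra.algebraMap_eq_smul_one] using this

lemma upper {A : Matrix (Fin n) (Fin n) ℂ} (hA : A.IsHermitian) :
    ((‖A‖ : ℂ) • 1 - A).PosSemidef := by
  have := le_iff.1 (IsSelfAdjoint.le_algebraMap_norm_self (a := A) hA)
  simpa [Algebra.algebraMap_eq_smul_one] using this

lemma opn {A B : Matrix (Fin n) (Fin n) ℂ} (hA : A.PosDef) (hB : B.IsHermitian) :
    ∃ e : ℝ, 0 < e ∧ (A - (e : ℂ) • B).PosDef := by
  obtain ⟨r, hr, h⟩ := lower hA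
  have hb := norm_nonneg B
  have he : 0 < r / (‖B‖ + 1) := by positivity
  refine ⟨r / (‖B‖ + 1), he, ?_⟩
  have h2 : ((((r / (‖B‖ + 1) : ℝ)) : ℂ) • ((‖B‖ : ℂ) • 1 - B)).PosSemidef :=
    (upper hB).smul (by exact_mod_cast he.le)
  have h3 : ((((r / (‖B‖ + 1) : ℝ)) : ℂ) • (1 : Matrix (Fin n) (Fin n) ℂ)).PosDef :=
    PosDef.one.smul (by exact_mod_cast he)
  have := (h3.add_posSemidef h2).add_posSemidef h
  convert this using 1
  have e : ((r / (‖B‖ + 1) : ℝ) : ℂ) * ‖B‖ = r - (r / (‖B‖ + 1) : ℝ) := by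
    rw [← Complex.ofReal_mul, ← Complex.ofReal_sub]
    congr 1
    field_simp
    ring
  rw [smul_sub, smul_smul, e]
  module

lemma isClosed_psd : IsClosed {A : Matrix (Fin n) (Fin n) ℂ | A.PosSemidef} := by
  have : {A : Matrix (Fin n) (Fin n) ℂ | A.PosSemidef} =
      {A | Aᴴ = A} ∩ ⋂ x : Fin n → ℂ, {A | 0 ≤ star x ⬝ᵥ (A *ᵥ x)} := by
    ext A
    simp [posSemidef_iff_dotProduct_mulVec, IsHermitian]
  rw [this]
  refine (isClosed_eq (by fun_prop) (by fun_prop)).inter (isClosed_iInter fun x => ?_)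
  exact isClosed_le (by fun_prop) (by fun_prop)

lemma trace_mul_pos {X P : Matrix (Fin n) (Fin n) ℂ} (hX : X.PosSemidef) (h0 : X ≠ 0)
    (hP : P.PosDef) : 0 < (X * P).trace := by
  obtain ⟨r, hr, h⟩ := lower hP
  obtain ⟨B, rfl⟩ := CStarAlgebra.nonneg_iff_eq_star_mul_self.1 hX.nonneg
  rw [star_eq_conjTranspose] at *
  have h1 := (h.mul_mul_conjTranspose_same B).trace_nonneg
  have h2 : 0 < (Bᴴ * B).trace :=
    lt_of_le_of_ne hX.trace_nonneg fun h => h0 (hX.trace_eq_zero_iff.1 h.symm)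
  have h3 : (B * (P - (r : ℂ) • 1) * Bᴴ).trace =
      (Bᴴ * B * P).trace - (r : ℂ) * (Bᴴ * B).trace := by
    rw [mul_sub, sub_mul, trace_sub, mul_smul_comm, smul_mul_assoc, trace_smul, mul_one,
      trace_mul_comm B Bᴴ, trace_mul_comm (B * P), mul_assoc, smul_eq_mul]
  rw [h3, sub_nonneg] at h1
  exact lt_of_lt_of_le (mul_pos (by exact_mod_cast hr) h2) h1

lemma Phi_pd
    (himp : ∀ ρ : Matrix (Fin n) (Fin n) ℂ, ρ.PosSemidef → ρ ≠ 0 → (Psi E ρ).PosDef)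
    {X : Matrix (Fin n) (Fin n) ℂ} (hX : X.PosSemidef) (h0 : X ≠ 0) :
    (Phi E X).PosDef := by
  refine PosDef.of_dotProduct_mulVec_pos ?_ fun v hv => ?_
  · exact (posSemidef_sum _ fun i _ => hX.conjTranspose_mul_mul_same (E i)).isHermitian
  · have hne : vecMulVec v (star v) ≠ 0 := by
      intro h
      apply hv
      ext i
      have := congrFun (congrFun h i) i
      simpa [vecMulVec_apply] using this
    have := trace_mul_pos hX h0 (himp _ (posSemidef_vecMulVec_self_star v) hne)
    rw [trace_adj, mul_vecMulVec, trace_vecMulVec] at this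
    rwa [dotProduct_comm]

lemma zero_not_pd [NeZero n] : ¬ (0 : Matrix (Fin n) (Fin n) ℂ).PosDef := by
  intro h
  have := h.diag_pos (i := 0)
  simp at this

lemma pd_ne [NeZero n] {X : Matrix (Fin n) (Fin n) ℂ} (h : X.PosDef) : X ≠ 0 := by
  rintro rfl; exact zero_not_pd h

lemma pos_of_smul [NeZero n] {X : Matrix (Fin n) (Fin n) ℂ} (hX : X.PosSemidef) {s : ℝ}
    (h : ((s : ℂ) • X).PosDef) : 0 < s := by
  by_contra! hs
  have h1 : (((-s : ℝ) : ℂ) • X).PosSemidef := hX.smul (by exact_mod_cast neg_nonneg.2 hs)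
  have := h.add_posSemidef h1
  apply zero_not_pd (n := n)
  convert this using 1
  push_cast; module

lemma Psi_pd
    (himp : ∀ ρ : Matrix (Fin n) (Fin n) ℂ, ρ.PosSemidef → ρ ≠ 0 → (Psi E ρ).PosDef)
    [NeZero n] {X : Matrix (Fin n) (Fin n) ℂ} (hX : X.PosSemidef) (h0 : X ≠ 0) :
    (Psi E (Phi E X)⁻¹).PosDef :=
  himp _ (Phi_pd E himp hX h0).inv.posSemidef (pd_ne (Phi_pd E himp hX h0).inv)

lemma F_pd
    (himp : ∀ ρ : Matrix (Fin n) (Fin n) ℂ, ρ.PosSemidef → ρ ≠ 0 → (Psi E ρ).PosDef)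
    [NeZero n] {X : Matrix (Fin n) (Fin n) ℂ} (hX : X.PosSemidef) (h0 : X ≠ 0) :
    (F E X).PosDef := (Psi_pd E himp hX h0).inv

lemma F_smul
    (himp : ∀ ρ : Matrix (Fin n) (Fin n) ℂ, ρ.PosSemidef → ρ ≠ 0 → (Psi E ρ).PosDef)
    [NeZero n] {X : Matrix (Fin n) (Fin n) ℂ} (hX : X.PosSemidef) (h0 : X ≠ 0)
    {c : ℂ} (hc : c ≠ 0) : F E (c • X) = c • F E X := by
  unfold F
  rw [Phi_smul, inv_smul' c hc (Phi_pd E himp hX h0), Psi_smul,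
    inv_smul' _ (inv_ne_zero hc) (Psi_pd E himp hX h0), inv_inv]

lemma F_strict
    (himp : ∀ ρ : Matrix (Fin n) (Fin n) ℂ, ρ.PosSemidef → ρ ≠ 0 → (Psi E ρ).PosDef)
    [NeZero n] {X Y : Matrix (Fin n) (Fin n) ℂ} (hX : X.PosSemidef) (hX0 : X ≠ 0)
    (hY : Y.PosSemidef) (hY0 : Y ≠ 0) (h : (X - Y).PosSemidef) (hne : X ≠ Y) :
    (F E X - F E Y).PosDef := by
  have h1 := Phi_pd E himp h (sub_ne_zero.2 hne)
  rw [Phi_sub] at h1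
  have h2 := inv_anti (Phi_pd E himp hY hY0) (Phi_pd E himp hX hX0) h1
  have h3 := himp _ h2.posSemidef (pd_ne h2)
  rw [Psi_sub] at h3
  exact inv_anti (Psi_pd E himp hX hX0) (Psi_pd E himp hY hY0) h3

lemma inv_cont {A : Matrix (Fin n) (Fin n) ℂ} (hA : A.PosDef) : ContinuousAt Inv.inv A := by
  apply continuousAt_matrix_inv
  have : A.det ≠ 0 := hA.det_pos.ne'
  simpa [Ring.inverse_eq_inv'] using continuousAt_inv₀ this

lemma F_cont
    (himp : ∀ ρ : Matrix (Fin n) (Fin n) ℂ, ρ.PosSemidef → ρ ≠ 0 → (Psi E ρ).PosDef)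
    [NeZero n] {X : Matrix (Fin n) (Fin n) ℂ} (hX : X.PosSemidef) (h0 : X ≠ 0) :
    ContinuousAt (F E) X := by
  have h1 : ContinuousAt (fun X => (Phi E X)⁻¹) X :=
    ContinuousAt.comp (f := Phi E) (inv_cont (Phi_pd E himp hX h0)) (Phi_cont E).continuousAt
  have h2 : ContinuousAt (fun X => Psi E (Phi E X)⁻¹) X :=
    ContinuousAt.comp (g := Psi E) (Psi_cont E).continuousAt h1
  exact ContinuousAt.comp (f := fun X => Psi E (Phi E X)⁻¹) (inv_cont (Psi_pd E himp hX h0)) h2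

/-- the constraint set -/
def C (t0 : ℝ) : Set (Matrix (Fin n) (Fin n) ℂ × ℝ) :=
  (({A | A.PosSemidef} ∩ Metric.sphere 0 1) ×ˢ Set.Icc 0 t0) ∩
    (fun p => (p.2 : ℂ) • p.1 - F E p.1) ⁻¹' {A | A.PosSemidef}

lemma C_compact
    (himp : ∀ ρ : Matrix (Fin n) (Fin n) ℂ, ρ.PosSemidef → ρ ≠ 0 → (Psi E ρ).PosDef)
    [NeZero n] (t0 : ℝ) : IsCompact (C E t0) := by
  have : ProperSpace (Matrix (Fin n) (Fin n) ℂ) := FiniteDimensional.proper ℂ _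
  have hK : IsCompact (({A : Matrix (Fin n) (Fin n) ℂ | A.PosSemidef} ∩ Metric.sphere 0 1) ×ˢ
      Set.Icc (0 : ℝ) t0) :=
    ((isCompact_sphere _ _).inter_left isClosed_psd).prod isCompact_Icc
  refine hK.of_isClosed_subset ?_ Set.inter_subset_left
  refine ContinuousOn.preimage_isClosed_of_isClosed ?_ hK.isClosed isClosed_psd
  rintro ⟨X, t⟩ ⟨⟨hX, hs⟩, -⟩
  have h0 : X ≠ 0 := by
    rintro rfl
    simp at hs
  apply ContinuousAt.continuousWithinAt
  refine ContinuousAt.sub (by fun_prop) ?_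
  exact ContinuousAt.comp (f := Prod.fst) (g := F E) (F_cont E himp hX h0) continuousAt_fst

lemma mem_C
    (himp : ∀ ρ : Matrix (Fin n) (Fin n) ℂ, ρ.PosSemidef → ρ ≠ 0 → (Psi E ρ).PosDef)
    [NeZero n] {t0 t : ℝ} {X : Matrix (Fin n) (Fin n) ℂ} (hX : X.PosDef)
    (ht : t ≤ t0) (h : ((t : ℂ) • X - F E X).PosSemidef) :
    (((‖X‖⁻¹ : ℝ) : ℂ) • X, t) ∈ C E t0 := by
  have h0 := pd_ne hX
  have hn : 0 < ‖X‖ := norm_pos_iff.2 h0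
  have hpos : 0 < t := by
    apply pos_of_smul hX.posSemidef
    simpa using (F_pd E himp hX.posSemidef h0).add_posSemidef h
  have hc : (0 : ℂ) ≤ ((‖X‖⁻¹ : ℝ) : ℂ) := by exact_mod_cast (inv_pos.2 hn).le
  refine ⟨⟨⟨hX.posSemidef.smul hc, ?_⟩, hpos.le, ht⟩, ?_⟩
  · simp [norm_smul, hn.ne']
  · have := h.smul hc
    simp only [Set.mem_preimage, Set.mem_ofPred_eq]
    rw [F_smul E himp hX.posSemidef h0 (by exact_mod_cast (inv_pos.2 hn).ne')]
    convert this using 1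
    module

lemma exists_fix
    (himp : ∀ ρ : Matrix (Fin n) (Fin n) ℂ, ρ.PosSemidef → ρ ≠ 0 → (Psi E ρ).PosDef)
    [NeZero n] : ∃ X : Matrix (Fin n) (Fin n) ℂ, X.PosDef ∧ F E X = X := by
  have h1 : (1 : Matrix (Fin n) (Fin n) ℂ).PosDef := PosDef.one
  obtain ⟨e, he, h⟩ := opn h1 (F_pd E himp h1.posSemidef (pd_ne h1)).isHermitian
  have hmem := mem_C E himp (t0 := e⁻¹) h1 le_rfl (by
    have := (h.smul (show (0 : ℂ) < ((e⁻¹ : ℝ) : ℂ) by exact_mod_cast inv_pos.2 he)).posSemidef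
    rwa [smul_sub, smul_smul, ← Complex.ofReal_mul, inv_mul_cancel₀ he.ne', Complex.ofReal_one,
      one_smul] at this)
  obtain ⟨⟨X, t⟩, hC, hmin⟩ := (C_compact E himp e⁻¹).exists_isMinOn ⟨_, hmem⟩
    continuous_snd.continuousOn
  obtain ⟨⟨⟨hX, hs⟩, -, ht⟩, hF⟩ := hC
  simp only [Set.mem_preimage, Set.mem_ofPred_eq] at hX hs ht hF
  have h0 : X ≠ 0 := by
    rintro rfl
    simp at hs
  have hFX := F_pd E himp hX h0
  have htX : ((t : ℂ) • X).PosDef := by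
    simpa using hFX.add_posSemidef hF
  have hpos : 0 < t := pos_of_smul hX htX
  have htc : (t : ℂ) ≠ 0 := by exact_mod_cast hpos.ne'
  have heq : (t : ℂ) • X = F E X := by
    by_contra hne
    have h2 := F_strict E himp htX.posSemidef (pd_ne htX) hFX.posSemidef (pd_ne hFX) hF hne
    rw [F_smul E himp hX h0 htc] at h2
    obtain ⟨d, hd, h3⟩ := opn h2 hFX.isHermitian
    have h4 := mem_C E himp (t0 := e⁻¹) (t := t - d) hFX (by linarith) (by
      convert h3.posSemidef using 1
      push_cast
      module)
    have h5 := hmin h4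
    simp at h5
    linarith
  have hXpd : X.PosDef := by
    have := htX.smul (show (0 : ℂ) < ((t⁻¹ : ℝ) : ℂ) by exact_mod_cast inv_pos.2 hpos)
    rwa [smul_smul, ← Complex.ofReal_mul, inv_mul_cancel₀ hpos.ne', Complex.ofReal_one,
      one_smul] at this
  refine ⟨X, hXpd, ?_⟩
  have hdX : IsUnit X.det := (isUnit_iff_isUnit_det X).1 hXpd.isUnit
  have hdP : IsUnit (Phi E X).det := (isUnit_iff_isUnit_det _).1 (Phi_pd E himp hX h0).isUnit
  have hdQ : IsUnit (Psi E (Phi E X)⁻¹).det :=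
    (isUnit_iff_isUnit_det _).1 (Psi_pd E himp hX h0).isUnit
  have htr := trace_adj E X (Phi E X)⁻¹
  have hP : Psi E (Phi E X)⁻¹ = (t : ℂ)⁻¹ • X⁻¹ := by
    rw [← inv_smul' _ htc hXpd, heq, F, nonsing_inv_nonsing_inv _ hdQ]
  rw [hP, mul_nonsing_inv _ hdP, mul_smul_comm, mul_nonsing_inv _ hdX, trace_smul, trace_one] at htr
  have hn : ((Fintype.card (Fin n) : ℕ) : ℂ) ≠ 0 := by
    simpa using NeZero.ne n
  have : (t : ℂ)⁻¹ = 1 := by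
    apply mul_right_cancel₀ hn
    simpa using htr
  rw [← heq, inv_eq_one.1 this, one_smul]

lemma unique_fix
    (himp : ∀ ρ : Matrix (Fin n) (Fin n) ℂ, ρ.PosSemidef → ρ ≠ 0 → (Psi E ρ).PosDef)
    [NeZero n] {X Y : Matrix (Fin n) (Fin n) ℂ} (hX : X.PosDef) (hY : Y.PosDef)
    (hFX : F E X = X) (hFY : F E Y = Y) : ∃ c : ℝ, 0 < c ∧ Y = (c : ℂ) • X := by
  let S : Set ℝ := {t | ((t : ℂ) • X - Y).PosSemidef}
  have hpos : ∀ t ∈ S, 0 < t := fun t ht => by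
    apply pos_of_smul hX.posSemidef
    simpa using hY.add_posSemidef ht
  have hcl : IsClosed S := isClosed_psd.preimage
    (f := fun t : ℝ => (t : ℂ) • X - Y) (by fun_prop)
  have hbd : BddBelow S := ⟨0, fun t ht => (hpos t ht).le⟩
  have hne : S.Nonempty := by
    obtain ⟨e, he, h⟩ := opn hX hY.isHermitian
    refine ⟨e⁻¹, ?_⟩
    have := (h.smul (show (0 : ℂ) < ((e⁻¹ : ℝ) : ℂ) by exact_mod_cast inv_pos.2 he)).posSemidef
    rwa [smul_sub, smul_smul, ← Complex.ofReal_mul, inv_mul_cancel₀ he.ne', Complex.ofReal_one,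
      one_smul] at this
  have hc := hcl.csInf_mem hne hbd
  set c := sInf S with hcdef
  have hcp := hpos c hc
  have hcX : ((c : ℂ) • X).PosDef := hX.smul (by exact_mod_cast hcp)
  refine ⟨c, hcp, ?_⟩
  by_contra hne'
  have h2 := F_strict E himp hcX.posSemidef (pd_ne hcX) hY.posSemidef (pd_ne hY) hc
    (fun h => hne' h.symm)
  rw [F_smul E himp hX.posSemidef (pd_ne hX) (by exact_mod_cast hcp.ne'), hFX, hFY] at h2
  obtain ⟨d, hd, h3⟩ := opn h2 hX.isHermitian
  have : c - d ∈ S := by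
    change (((c - d : ℝ) : ℂ) • X - Y).PosSemidef
    convert h3.posSemidef using 1
    push_cast
    module
  have := csInf_le hbd this
  linarith

end QSink

theorem quantum_sinkhorn_exists_unique {n m : ℕ}
    (E : Fin m → Matrix (Fin n) (Fin n) ℂ)
    (hsum : ∑ i, (E i)ᴴ * E i = 1)
    (himp : ∀ ρ : Matrix (Fin n) (Fin n) ℂ, ρ.PosSemidef → ρ ≠ 0 →
      (∑ i, E i * ρ * (E i)ᴴ).PosDef) :
    ∃ f0 fT : Matrix (Fin n) (Fin n) ℂ, f0.PosDef ∧ fT.PosDef ∧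
      (∑ i, (E i)ᴴ * fT * E i) = f0 ∧
      (∑ i, E i * f0⁻¹ * (E i)ᴴ) = fT⁻¹ ∧
      ∀ g0 gT : Matrix (Fin n) (Fin n) ℂ, g0.PosDef → gT.PosDef →
        (∑ i, (E i)ᴴ * gT * E i) = g0 →
        (∑ i, E i * g0⁻¹ * (E i)ᴴ) = gT⁻¹ →
        ∃ c : ℝ, 0 < c ∧ g0 = (c : ℂ) • f0 ∧ gT = (c : ℂ) • fT := by
  rcases Nat.eq_zero_or_pos n with rfl | hn
  · exact ⟨1, 1, PosDef.one, PosDef.one, Subsingleton.elim _ _, Subsingleton.elim _ _,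
      fun _ _ _ _ _ _ => ⟨1, one_pos, Subsingleton.elim _ _, Subsingleton.elim _ _⟩⟩
  have : NeZero n := ⟨hn.ne'⟩
  change ∀ ρ : Matrix (Fin n) (Fin n) ℂ, ρ.PosSemidef → ρ ≠ 0 → (QSink.Psi E ρ).PosDef at himp
  obtain ⟨X, hX, hFX⟩ := QSink.exists_fix E himp
  refine ⟨QSink.Phi E X, X, QSink.Phi_pd E himp hX.posSemidef (QSink.pd_ne hX), hX, rfl, ?_, ?_⟩
  · change QSink.Psi E (QSink.Phi E X)⁻¹ = X⁻¹
    have hdQ : IsUnit (QSink.Psi E (QSink.Phi E X)⁻¹).det :=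
      (isUnit_iff_isUnit_det _).1 (QSink.Psi_pd E himp hX.posSemidef (QSink.pd_ne hX)).isUnit
    conv_rhs => rw [← hFX, QSink.F, nonsing_inv_nonsing_inv _ hdQ]
  · intro g0 gT _ hgT h1 h2
    change QSink.Phi E gT = g0 at h1
    change QSink.Psi E g0⁻¹ = gT⁻¹ at h2
    have hF : QSink.F E gT = gT := by
      rw [QSink.F, h1, h2, nonsing_inv_nonsing_inv _ ((isUnit_iff_isUnit_det _).1 hgT.isUnit)]
    obtain ⟨c, hc, hcX⟩ := QSink.unique_fix E himp hX hgT hFX hF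
    refine ⟨c, hc, ?_, hcX⟩
    rw [← h1, hcX, QSink.Phi_smul]
end

section
/- Let E_1,…,E_m be n×n complex matrices with Σ_{i=1}^m E_i† E_i = I, let E†(ρ) = Σ_{i=1}^m E_i ρ E_i† be the associated Kraus map with adjoint E(X) = Σ_{i=1}^m E_i† X E_i. Let φ_0 and φ_T be Hermitian positive definite n×n matrices satisfying E(φ_T) = φ_0 and E†(φ_0^{-1}) = φ_T^{-1}, and let χ_0, χ_T be any invertible n×n matrices with φ_0 = χ_0† χ_0 and φ_T = χ_T† χ_T. Then the map F†(ρ) := χ_T E†(χ_0^{-1} ρ χ_0^{-†}) χ_T† is a doubly stochastic Kraus map: F†(I) = I and its adjoint F(X) := χ_0^{-†} E(χ_T† X χ_T) χ_0^{-1} satisfies F(I) = I. -/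
open Matrix
open scoped ComplexOrder

/-- If `φ_0`, `φ_T` are Hermitian positive definite with `E(φ_T) = φ_0` and
`E†(φ_0⁻¹) = φ_T⁻¹`, and `χ_0`, `χ_T` are invertible with `φ_0 = χ_0† χ_0`, `φ_T = χ_T† χ_T`,
then `F†(ρ) = χ_T E†(χ_0⁻¹ ρ χ_0^{-†}) χ_T†` is a doubly stochastic Kraus map:
`F†(I) = I` and its adjoint `F(X) = χ_0^{-†} E(χ_T† X χ_T) χ_0⁻¹` satisfies `F(I) = I`. -/
theorem doubly_stochastic_kraus_map {n m : ℕ}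
    (E : Fin m → Matrix (Fin n) (Fin n) ℂ)
    (hsum : ∑ i, (E i)ᴴ * E i = 1)
    (f0 fT : Matrix (Fin n) (Fin n) ℂ) (hf0 : f0.PosDef) (hfT : fT.PosDef)
    (hE1 : ∑ i, (E i)ᴴ * fT * E i = f0)
    (hE2 : ∑ i, E i * f0⁻¹ * (E i)ᴴ = fT⁻¹)
    (χ0 χT : Matrix (Fin n) (Fin n) ℂ)
    (hχ0 : IsUnit χ0.det) (hχT : IsUnit χT.det)
    (hfac0 : f0 = χ0ᴴ * χ0) (hfacT : fT = χTᴴ * χT) :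
    χT * (∑ i, E i * (χ0⁻¹ * (1 : Matrix (Fin n) (Fin n) ℂ) * (χ0ᴴ)⁻¹) * (E i)ᴴ) * χTᴴ = 1 ∧
    (χ0ᴴ)⁻¹ * (∑ i, (E i)ᴴ * (χTᴴ * (1 : Matrix (Fin n) (Fin n) ℂ) * χT) * E i) * χ0⁻¹ = 1 := by
  have hχ0' : IsUnit (χ0ᴴ).det := by
    rw [Matrix.det_conjTranspose]; exact hχ0.star
  have hχT' : IsUnit (χTᴴ).det := by
    rw [Matrix.det_conjTranspose]; exact hχT.star
  have h0 : χ0⁻¹ * (χ0ᴴ)⁻¹ = f0⁻¹ := by rw [hfac0, Matrix.mul_inv_rev]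
  constructor
  · rw [Matrix.mul_one, h0, hE2, hfacT, Matrix.mul_inv_rev, ← Matrix.mul_assoc,
      Matrix.mul_nonsing_inv _ hχT, Matrix.one_mul, Matrix.nonsing_inv_mul _ hχT']
  · rw [Matrix.mul_one, ← hfacT, hE1, hfac0, ← Matrix.mul_assoc,
      Matrix.nonsing_inv_mul _ hχ0', Matrix.one_mul, Matrix.mul_nonsing_inv _ hχ0]
end
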